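/- arXiv:2408.08445 — 3 statements merged into one kernel-verified Lean document; each statement's English description precedes it below -/
import Mathlib

section
/- For any choice of parameters as in the context, and for all t₁, t₂, x₁, x₂ ∈ ℝ and all α, β ∈ ℝ with α + t₁ < ā and β + t₂ > b̄: (i) the double contour integral defining K³ converges absolutely (the integrand is absolutely integrable over Γ_α^+ × Γ_β^- with respect to the piecewise-linear parametrization); (ii) the value K_{a,b,c}(t₁,x₁;t₂,x₂) = K¹ + K² + K³ does not depend on the choice of α and β subject to α + t₁ < ā and β + t₂ > b̄; (iii) for every fixed t₁, t₂ ∈ ℝ, the map (x₁,x₂) ↦ K_{a,b,c}(t₁,x₁;t₂,x₂) is continuous on ℝ². -/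
open MeasureTheory Filter Topology Complex intervalIntegral
open scoped ENNReal

noncomputable section

/-- The parameters of the Airy wanderer kernel: four summable nonincreasing
sequences of nonnegative reals and two nonnegative constants. -/
structure AWParams where
  ap : ℕ → ℝ
  am : ℕ → ℝ
  bp : ℕ → ℝ
  bm : ℕ → ℝ
  cp : ℝ
  cm : ℝ
  ap_nonneg : ∀ i, 0 ≤ ap i
  am_nonneg : ∀ i, 0 ≤ am i
  bp_nonneg : ∀ i, 0 ≤ bp i
  bm_nonneg : ∀ i, 0 ≤ bm i
  ap_anti : Antitone ap
  am_anti : Antitone am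
  bp_anti : Antitone bp
  bm_anti : Antitone bm
  sum_fin : Summable fun i => ap i + am i + bp i + bm i
  cp_nonneg : 0 ≤ cp
  cm_nonneg : 0 ≤ cm

namespace AWParams

/-- The threshold `ā ∈ [0, ∞]`. -/
def abar (P : AWParams) : EReal :=
  if 0 < P.am 0 + P.bm 0 + P.cm then (0 : EReal)
  else if P.ap 0 = 0 then (⊤ : EReal)
  else (((P.ap 0)⁻¹ : ℝ) : EReal)

/-- The threshold `b̄ ∈ [-∞, 0]`. -/
def bbar (P : AWParams) : EReal :=
  if 0 < P.am 0 + P.bm 0 + P.cm then (0 : EReal)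
  else if P.bp 0 = 0 then (⊥ : EReal)
  else ((-(P.bp 0)⁻¹ : ℝ) : EReal)

/-- The function `Φ_{a,b,c}`. -/
def Phi (P : AWParams) (z : ℂ) : ℂ :=
  Complex.exp ((P.cp : ℂ) * z + (P.cm : ℂ) / z) *
    ∏' i : ℕ,
      ((1 + (P.bp i : ℂ) * z) * (1 + (P.bm i : ℂ) / z)) /
        ((1 - (P.ap i : ℂ) * z) * (1 - (P.am i : ℂ) / z))

end AWParams

/-- Arc-length parametrization of `Γ_a^+` (increasing imaginary part). -/
def gammaP (a y : ℝ) : ℂ :=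
  (a : ℂ) + ((|y| : ℝ) : ℂ) / ((Real.sqrt 2 : ℝ) : ℂ) +
    ((y : ℝ) : ℂ) * Complex.I / ((Real.sqrt 2 : ℝ) : ℂ)

/-- The (a.e.) derivative of the parametrization of `Γ_a^+`. -/
def gammaPD (y : ℝ) : ℂ :=
  (((Real.sign y : ℝ)) : ℂ) / ((Real.sqrt 2 : ℝ) : ℂ) +
    Complex.I / ((Real.sqrt 2 : ℝ) : ℂ)

/-- Arc-length parametrization of `Γ_a^-` (increasing imaginary part). -/
def gammaM (a y : ℝ) : ℂ :=
  (a : ℂ) - ((|y| : ℝ) : ℂ) / ((Real.sqrt 2 : ℝ) : ℂ) +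
    ((y : ℝ) : ℂ) * Complex.I / ((Real.sqrt 2 : ℝ) : ℂ)

/-- The (a.e.) derivative of the parametrization of `Γ_a^-`. -/
def gammaMD (y : ℝ) : ℂ :=
  -(((Real.sign y : ℝ)) : ℂ) / ((Real.sqrt 2 : ℝ) : ℂ) +
    Complex.I / ((Real.sqrt 2 : ℝ) : ℂ)

/-- The integrand of `K³_{a,b,c}`. -/
def K3Integrand (P : AWParams) (t₁ x₁ t₂ x₂ : ℝ) (z w : ℂ) : ℂ :=
  Complex.exp (z ^ 3 / 3 - (x₁ : ℂ) * z - w ^ 3 / 3 + (x₂ : ℂ) * w) /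
      (z + (t₁ : ℂ) - w - (t₂ : ℂ)) *
    (P.Phi (z + (t₁ : ℂ)) / P.Phi (w + (t₂ : ℂ)))

/-- The integrand of `K³_{a,b,c}` in the parametrization of `Γ_α^+ × Γ_β^-`,
including the derivative factors. -/
def K3param (P : AWParams) (α β t₁ x₁ t₂ x₂ : ℝ) (y₁ y₂ : ℝ) : ℂ :=
  K3Integrand P t₁ x₁ t₂ x₂ (gammaP α y₁) (gammaM β y₂) * gammaPD y₁ * gammaMD y₂

/-- `K³_{a,b,c}` with contours `Γ_α^+`, `Γ_β^-`. -/
def K3 (P : AWParams) (α β t₁ x₁ t₂ x₂ : ℝ) : ℂ :=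
  (1 / (2 * (Real.pi : ℂ) * Complex.I)) ^ 2 *
    ∫ p : ℝ × ℝ, K3param P α β t₁ x₁ t₂ x₂ p.1 p.2

/-- `K²_{a,b,c}`. -/
def K2 (t₁ x₁ t₂ x₂ : ℝ) : ℂ :=
  if t₁ < t₂ then
    -((((Real.sqrt (4 * Real.pi * (t₂ - t₁)))⁻¹ : ℝ) : ℂ) *
      Complex.exp
        (((-(x₂ - x₁) ^ 2 / (4 * (t₂ - t₁)) - (t₂ - t₁) * (x₂ + x₁) / 2 +
            (t₂ - t₁) ^ 3 / 12 : ℝ)) : ℂ))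
  else 0

/-- The point `w = (α+t₁+β+t₂)/2 + i s` of the vertical segment in `K¹`. -/
def K1seg (α β t₁ t₂ s : ℝ) : ℂ :=
  (((α + t₁ + β + t₂) / 2 : ℝ) : ℂ) + (s : ℂ) * Complex.I

/-- `K¹_{a,b,c}`: zero unless the contours cross, in which case it is the integral
over the vertical segment from `u₋` to `u₊` (parametrized by the imaginary part,
with `dw = i ds`). -/
def K1 (α β t₁ x₁ t₂ x₂ : ℝ) : ℂ :=
  if α + t₁ < β + t₂ then
    (1 / (2 * (Real.pi : ℂ) * Complex.I)) *
      ∫ s in (-((β + t₂ - (α + t₁)) / 2))..((β + t₂ - (α + t₁)) / 2),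
        Complex.exp
          (((t₂ - t₁ : ℝ) : ℂ) * (K1seg α β t₁ t₂ s) ^ 2 +
            ((t₁ ^ 2 - t₂ ^ 2 : ℝ) : ℂ) * K1seg α β t₁ t₂ s +
            K1seg α β t₁ t₂ s * ((x₂ - x₁ : ℝ) : ℂ) +
            ((x₁ * t₁ - x₂ * t₂ - t₁ ^ 3 / 3 + t₂ ^ 3 / 3 : ℝ) : ℂ)) * Complex.I
  else 0

/-- The Airy wanderer kernel `K_{a,b,c}`, computed with contours `Γ_α^+`, `Γ_β^-`. -/
def KabcAt (P : AWParams) (α β t₁ x₁ t₂ x₂ : ℝ) : ℂ :=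
  K1 α β t₁ x₁ t₂ x₂ + K2 t₁ x₁ t₂ x₂ + K3 P α β t₁ x₁ t₂ x₂

/-- The Airy wanderer kernel `K_{a,b,c}` (with the canonical admissible choice
`α = -t₁ - 1`, `β = -t₂ + 1`; the value is independent of the admissible choice). -/
def Kabc (P : AWParams) (t₁ x₁ t₂ x₂ : ℝ) : ℂ :=
  KabcAt P (-t₁ - 1) (-t₂ + 1) t₁ x₁ t₂ x₂

/-!
Both factors of the integrand are treated alike. In the variables `u = z + t₁`, `v = -(w + t₂)`,
the contours are `Γ_a^+` and `Γ_b^+` with `a = α + t₁`, `b = -(β + t₂)`. As `1 / Φ(-v)` is the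
function `Φ` with the roles of `a^±` and `b^±` exchanged, the double integral `K³` becomes
`∬ f(u) g(v) / (u + v)`, symmetric in its two variables. On a strip between two translates of the
contour, `Φ` grows at most like `exp (K |u|)` while `exp (u³ / 3)` decays cubically, so the only
obstruction to integrability is the zero of `u + v` where `Γ_a^+` meets `-Γ_b^+`. There
`|u + v|` dominates the geometric mean of the distances of the two parameters to their crossing
values, which leaves integrable inverse square roots and a bound that is locally uniform in
`x₁, x₂`. This gives (i) and, by dominated convergence, (iii).

For (ii), moving `Γ_a^+` to `Γ_{a'}^+` for almost every fixed `v` picks up the residue at `u = -v`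
when `-v` lies between the two contours. In this residue `Φ` cancels, leaving an entire function
of `-v` integrated over a piece of `-Γ_b^+`. Deforming that piece to a vertical segment identifies
the contribution with the change of `K¹`. The dependence on `β` follows by exchanging the variables.
-/

/-! ### The apex of a point -/

/-- The apex of the contour `Γ_a^+` through `u`, i.e. the real number `a` with `u ∈ Γ_a^+`. -/
def apex (u : ℂ) : ℝ := u.re - |u.im|

lemma continuous_apex : Continuous apex := by unfold apex; fun_prop

lemma isOpen_apex_lt (a : ℝ) : IsOpen {u | apex u < a} :=
  isOpen_lt continuous_apex continuous_const

@[simp] lemma apex_ofReal (r : ℝ) : apex r = r := by simp [apex]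

lemma apex_ofReal_mul {r : ℝ} (hr : 0 ≤ r) (u : ℂ) : apex (r * u) = r * apex u := by
  simp only [apex, re_ofReal_mul, im_ofReal_mul, abs_mul, abs_of_nonneg hr]
  ring

lemma apex_inv (u : ℂ) : apex u⁻¹ = apex u / normSq u := by
  simp only [apex, inv_re, inv_im, abs_div, abs_neg, abs_of_nonneg (normSq_nonneg u)]
  ring

lemma apex_sub_apex_le (u v : ℂ) : apex u - apex v ≤ 2 * ‖u - v‖ := by
  have hre := abs_le.1 (abs_re_le_norm (u - v))
  have him := (abs_sub_abs_le_abs_sub v.im u.im).trans_eq (abs_sub_comm v.im u.im)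
  have him' := him.trans (abs_im_le_norm (u - v))
  rw [sub_re] at hre
  unfold apex
  linarith

lemma one_sub_mul_apex_le {r : ℝ} (hr : 0 ≤ r) (u : ℂ) :
    1 - r * apex u ≤ 2 * ‖1 - (r : ℂ) * u‖ := by
  have h := apex_sub_apex_le (1 : ℝ) (r * u)
  rwa [apex_ofReal, apex_ofReal_mul hr, ofReal_one] at h

lemma neg_apex_le (u : ℂ) : -apex u ≤ 2 * ‖u‖ := by
  simpa [apex] using apex_sub_apex_le 0 u

/-! ### Infinite products of factors close to `1` -/

section InfiniteProducts

variable {ι : Type*} {f : ι → ℂ}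

lemma multipliable_of_summable_norm_sub_one (hf : Summable fun i => ‖f i - 1‖) :
    Multipliable f := by
  simpa using multipliable_one_add_of_summable hf

lemma norm_tprod_le_exp_tsum_norm_sub_one (hf : Summable fun i => ‖f i - 1‖) :
    ‖∏' i, f i‖ ≤ Real.exp (∑' i, ‖f i - 1‖) := by
  refine le_of_tendsto (multipliable_of_summable_norm_sub_one hf).hasProd.norm
    (.of_forall fun s => ?_)
  have hs : ‖∏ i ∈ s, f i - 1‖ ≤ Real.exp (∑ i ∈ s, ‖f i - 1‖) - 1 := by
    simpa using s.norm_prod_one_add_sub_one_le fun i => f i - 1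
  have htri : ‖∏ i ∈ s, f i‖ ≤ ‖∏ i ∈ s, f i - 1‖ + 1 := by
    simpa using norm_add_le (∏ i ∈ s, f i - 1) 1
  have hmono := Real.exp_le_exp.2 (hf.sum_le_tsum s fun i _ => norm_nonneg _)
  simp only [← norm_prod]
  linarith

lemma tprod_inv_of_summable_norm_sub_one (hf : Summable fun i => ‖f i - 1‖) :
    ∏' i, (f i)⁻¹ = (∏' i, f i)⁻¹ := by
  by_cases h0 : ∃ i, f i = 0
  · rw [tprod_of_exists_eq_zero h0, inv_zero,
      tprod_of_exists_eq_zero (h0.imp fun i hi => by rw [hi, inv_zero])]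
  · push Not at h0
    refine (multipliable_of_summable_norm_sub_one hf).tprod_inv₀ ?_
    simpa using tprod_one_add_ne_zero_of_summable (by simpa using h0) hf

end InfiniteProducts

lemma norm_div_sub_one_le {p q r s : ℂ} {δ ε : ℝ} (hδ : 0 < δ) (hε : 0 < ε)
    (hr : δ ≤ ‖1 - r‖) (hs : ε ≤ ‖1 - s‖) :
    ‖(1 + p) * (1 + q) / ((1 - r) * (1 - s)) - 1‖ ≤
      (‖p‖ + ‖q‖ + ‖p‖ * ‖q‖ + (‖r‖ + ‖s‖ + ‖r‖ * ‖s‖)) / (δ * ε) := by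
  have hr0 : 1 - r ≠ 0 := norm_pos_iff.1 (hδ.trans_le hr)
  have hs0 : 1 - s ≠ 0 := norm_pos_iff.1 (hε.trans_le hs)
  have hnum : ‖p + q + p * q + (r + s - r * s)‖ ≤
      ‖p‖ + ‖q‖ + ‖p‖ * ‖q‖ + (‖r‖ + ‖s‖ + ‖r‖ * ‖s‖) := by
    rw [← norm_mul, ← norm_mul]
    exact norm_add_le_of_le norm_add₃_le (norm_sub_le_of_le (norm_add_le _ _) le_rfl)
  calc ‖(1 + p) * (1 + q) / ((1 - r) * (1 - s)) - 1‖
      = ‖p + q + p * q + (r + s - r * s)‖ / (‖1 - r‖ * ‖1 - s‖) := by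
        rw [div_sub_one (mul_ne_zero hr0 hs0), norm_div, norm_mul (1 - r)]
        ring_nf
    _ ≤ _ := by gcongr

/-! ### The parameters and the function `Φ` -/

namespace AWParams

variable {P : AWParams} {a b : ℝ} {u : ℂ}

/-- The parameters with the roles of `a^±` and `b^±` interchanged. They describe `z ↦ 1 / Φ(-z)`,
which turns statements about the `w`-contour into statements about the `z`-contour. -/
def swap (P : AWParams) : AWParams where
  ap := P.bp
  am := P.bm
  bp := P.ap
  bm := P.am
  cp := P.cp
  cm := P.cm
  ap_nonneg := P.bp_nonneg
  am_nonneg := P.bm_nonneg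
  bp_nonneg := P.ap_nonneg
  bm_nonneg := P.am_nonneg
  ap_anti := P.bp_anti
  am_anti := P.bm_anti
  bp_anti := P.ap_anti
  bm_anti := P.am_anti
  sum_fin := P.sum_fin.congr fun i => by ring
  cp_nonneg := P.cp_nonneg
  cm_nonneg := P.cm_nonneg

lemma swap_swap (P : AWParams) : P.swap.swap = P := rfl

lemma abar_swap (P : AWParams) : P.swap.abar = -P.bbar := by
  simp only [abar, bbar, swap, add_comm (P.bm 0)]
  split_ifs <;> simp [*]

lemma neg_lt_abar_swap_iff : ((-b : ℝ) : EReal) < P.swap.abar ↔ P.bbar < b := by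
  rw [abar_swap, EReal.coe_neg, EReal.neg_lt_neg_iff]

lemma exists_between_abar (h : (a : EReal) < P.abar) :
    ∃ a' : ℝ, a < a' ∧ (a' : EReal) < P.abar := by
  obtain ⟨a', h₁, h₂⟩ := EReal.lt_iff_exists_real_btwn.1 h
  exact ⟨a', EReal.coe_lt_coe_iff.1 h₁, h₂⟩

lemma neg_or_eq_zero_of_lt_abar (h : (a : EReal) < P.abar) :
    a < 0 ∨ P.cm = 0 ∧ ∀ i, P.am i = 0 ∧ P.bm i = 0 := by
  rcases lt_or_ge 0 (P.am 0 + P.bm 0 + P.cm) with hpos | hle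
  · rw [abar, if_pos hpos] at h
    exact .inl (EReal.coe_lt_coe_iff.1 h)
  · have ham := P.am_nonneg 0
    have hbm := P.bm_nonneg 0
    have hcm := P.cm_nonneg
    refine .inr ⟨by linarith, fun i => ⟨?_, ?_⟩⟩
    · exact le_antisymm ((P.am_anti i.zero_le).trans (by linarith)) (P.am_nonneg i)
    · exact le_antisymm ((P.bm_anti i.zero_le).trans (by linarith)) (P.bm_nonneg i)

lemma ap_zero_mul_lt_one (h : (a : EReal) < P.abar) : P.ap 0 * a < 1 := by
  have hap := P.ap_nonneg 0
  unfold abar at h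
  split_ifs at h with hpos hap0
  · have ha : a < 0 := EReal.coe_lt_coe_iff.1 h
    nlinarith
  · simp [hap0]
  · have ha : a < (P.ap 0)⁻¹ := EReal.coe_lt_coe_iff.1 h
    calc P.ap 0 * a < P.ap 0 * (P.ap 0)⁻¹ :=
          mul_lt_mul_of_pos_left ha (hap.lt_of_ne' hap0)
      _ = 1 := mul_inv_cancel₀ hap0

lemma exists_le_norm_one_sub_ap_mul (h : (a : EReal) < P.abar) :
    ∃ δ > 0, ∀ i u, apex u ≤ a → δ ≤ ‖1 - (P.ap i : ℂ) * u‖ := by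
  have hpos : 0 < min 1 (1 - P.ap 0 * a) :=
    lt_min one_pos (sub_pos.2 (ap_zero_mul_lt_one h))
  refine ⟨min 1 (1 - P.ap 0 * a) / 2, half_pos hpos, fun i u hu => ?_⟩
  have hi := P.ap_nonneg i
  have hi0 : P.ap i ≤ P.ap 0 := P.ap_anti i.zero_le
  have hmin : min 1 (1 - P.ap 0 * a) ≤ 1 - P.ap i * a := by
    rcases le_total a 0 with ha | ha
    · exact (min_le_left _ _).trans (by nlinarith)
    · exact (min_le_right _ _).trans (by nlinarith)
  have hua : P.ap i * apex u ≤ P.ap i * a := mul_le_mul_of_nonneg_left hu hi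
  linarith [one_sub_mul_apex_le hi u]

lemma half_le_norm_one_sub_am_div (h : (a : EReal) < P.abar) (hu : apex u ≤ a) (i : ℕ) :
    1 / 2 ≤ ‖1 - (P.am i : ℂ) / u‖ := by
  rcases neg_or_eq_zero_of_lt_abar h with ha | ⟨-, hzero⟩
  · have hinv : apex u⁻¹ ≤ 0 := by
      rw [apex_inv]
      exact div_nonpos_of_nonpos_of_nonneg (by linarith) (normSq_nonneg u)
    have hle := one_sub_mul_apex_le (P.am_nonneg i) u⁻¹
    rw [← div_eq_mul_inv] at hle
    linarith [mul_nonpos_of_nonneg_of_nonpos (P.am_nonneg i) hinv]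
  · norm_num [(hzero i).1]

lemma exists_norm_div_le (h : (a : EReal) < P.abar) :
    ∃ C ≥ 0, ∀ u, apex u ≤ a → ‖(P.cm : ℂ) / u‖ ≤ C * P.cm ∧
      ∀ i, ‖(P.am i : ℂ) / u‖ ≤ C * P.am i ∧ ‖(P.bm i : ℂ) / u‖ ≤ C * P.bm i := by
  rcases neg_or_eq_zero_of_lt_abar h with ha | ⟨hcm, hzero⟩
  · refine ⟨(-a / 2)⁻¹, inv_nonneg.2 (by linarith), fun u hu => ?_⟩
    have hle : ‖u‖⁻¹ ≤ (-a / 2)⁻¹ :=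
      inv_anti₀ (by linarith) (by linarith [neg_apex_le u])
    have key : ∀ r : ℝ, 0 ≤ r → ‖(r : ℂ) / u‖ ≤ (-a / 2)⁻¹ * r := fun r hr => by
      rw [norm_div, norm_real, Real.norm_of_nonneg hr, div_eq_mul_inv, mul_comm]
      exact mul_le_mul_of_nonneg_right hle hr
    exact ⟨key _ P.cm_nonneg, fun i => ⟨key _ (P.am_nonneg i), key _ (P.bm_nonneg i)⟩⟩
  · exact ⟨0, le_rfl, fun u _ => by simp [hcm, hzero]⟩

/-- The `i`-th factor of the infinite product defining `Φ`. -/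
def factor (P : AWParams) (i : ℕ) (z : ℂ) : ℂ :=
  ((1 + (P.bp i : ℂ) * z) * (1 + (P.bm i : ℂ) / z)) /
    ((1 - (P.ap i : ℂ) * z) * (1 - (P.am i : ℂ) / z))

/-- The `i`-th term of the convergent series of all the parameters. -/
def weight (P : AWParams) (i : ℕ) : ℝ := P.ap i + P.am i + P.bp i + P.bm i

lemma Phi_eq (P : AWParams) (z : ℂ) :
    P.Phi z = exp ((P.cp : ℂ) * z + (P.cm : ℂ) / z) * ∏' i, P.factor i z := rfl

lemma factor_swap_neg (P : AWParams) (i : ℕ) (z : ℂ) :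
    P.swap.factor i (-z) = (P.factor i z)⁻¹ := by
  simp only [factor, swap, inv_div, mul_neg, div_neg, sub_neg_eq_add, ← sub_eq_add_neg]

lemma exists_norm_factor_sub_one_le (h : (a : EReal) < P.abar) :
    ∃ K ≥ 0, ∀ i u, apex u ≤ a → ‖P.factor i u - 1‖ ≤ K * (1 + ‖u‖) * P.weight i := by
  obtain ⟨δ, hδ, hap⟩ := exists_le_norm_one_sub_ap_mul h
  obtain ⟨C, hC, hdiv⟩ := exists_norm_div_le h
  have hap0 := P.ap_nonneg 0
  have hbp0 := P.bp_nonneg 0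
  refine ⟨(1 + C + C * P.ap 0 + C * P.bp 0) / (δ * (1 / 2)), by positivity, fun i u hu => ?_⟩
  obtain ⟨ham, hbm⟩ := (hdiv u hu).2 i
  have hai := P.ap_nonneg i
  have hbi := P.bp_nonneg i
  have hai' := P.am_nonneg i
  have hbi' := P.bm_nonneg i
  have hai0 : P.ap i ≤ P.ap 0 := P.ap_anti i.zero_le
  have hbi0 : P.bp i ≤ P.bp 0 := P.bp_anti i.zero_le
  refine (norm_div_sub_one_le hδ one_half_pos (hap i u hu)
    (half_le_norm_one_sub_am_div h hu i)).trans ?_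
  rw [div_mul_eq_mul_div, div_mul_eq_mul_div, norm_mul, norm_mul, norm_real, norm_real,
    Real.norm_of_nonneg hai, Real.norm_of_nonneg hbi]
  refine div_le_div_of_nonneg_right ?_ (by positivity)
  calc _ ≤ P.bp i * ‖u‖ + C * P.bm i + P.bp 0 * ‖u‖ * (C * P.bm i) +
        (P.ap i * ‖u‖ + C * P.am i + P.ap 0 * ‖u‖ * (C * P.am i)) := by gcongr
    _ ≤ _ := by
      rw [weight, ← sub_nonneg]
      ring_nf
      positivity

lemma summable_norm_factor_sub_one (h : (a : EReal) < P.abar) (hu : apex u ≤ a) :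
    Summable fun i => ‖P.factor i u - 1‖ := by
  obtain ⟨K, -, hK⟩ := exists_norm_factor_sub_one_le h
  exact .of_nonneg_of_le (fun i => norm_nonneg _) (fun i => hK i u hu) (P.sum_fin.mul_left _)

lemma exists_norm_Phi_le (h : (a : EReal) < P.abar) :
    ∃ K ≥ 0, ∀ u, apex u ≤ a → ‖P.Phi u‖ ≤ Real.exp (K * (1 + ‖u‖)) := by
  obtain ⟨K, hK0, hK⟩ := exists_norm_factor_sub_one_le h
  obtain ⟨C, hC, hdiv⟩ := exists_norm_div_le h
  have hcp := P.cp_nonneg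
  have hcm := P.cm_nonneg
  have hw : 0 ≤ ∑' i, P.weight i := tsum_nonneg fun i => add_nonneg (add_nonneg (add_nonneg
    (P.ap_nonneg i) (P.am_nonneg i)) (P.bp_nonneg i)) (P.bm_nonneg i)
  refine ⟨P.cp + C * P.cm + K * ∑' i, P.weight i, by positivity, fun u hu => ?_⟩
  have hexp : ‖exp ((P.cp : ℂ) * u + (P.cm : ℂ) / u)‖ ≤ Real.exp (P.cp * ‖u‖ + C * P.cm) := by
    refine (norm_exp_le_exp_norm _).trans (Real.exp_le_exp.2 ?_)
    refine norm_add_le_of_le (norm_mul_le_of_le ?_ le_rfl) (hdiv u hu).1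
    rw [norm_real, Real.norm_of_nonneg hcp]
  have hsum : ∑' i, ‖P.factor i u - 1‖ ≤ K * (1 + ‖u‖) * ∑' i, P.weight i := by
    rw [← tsum_mul_left]
    exact (summable_norm_factor_sub_one h hu).tsum_le_tsum (fun i => hK i u hu)
      (P.sum_fin.mul_left _)
  have hprod := (norm_tprod_le_exp_tsum_norm_sub_one (summable_norm_factor_sub_one h hu)).trans
    (Real.exp_le_exp.2 hsum)
  rw [Phi_eq]
  refine (norm_mul_le_of_le hexp hprod).trans ?_
  rw [← Real.exp_add, Real.exp_le_exp]
  nlinarith [norm_nonneg u, mul_nonneg (mul_nonneg hC hcm) (norm_nonneg u)]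

lemma one_sub_ap_mul_ne_zero (h : (a : EReal) < P.abar) (hu : apex u ≤ a) (i : ℕ) :
    1 - (P.ap i : ℂ) * u ≠ 0 :=
  let ⟨_, hδ, hap⟩ := exists_le_norm_one_sub_ap_mul h
  norm_pos_iff.1 (hδ.trans_le (hap i u hu))

lemma one_sub_am_div_ne_zero (h : (a : EReal) < P.abar) (hu : apex u ≤ a) (i : ℕ) :
    1 - (P.am i : ℂ) / u ≠ 0 :=
  norm_pos_iff.1 (one_half_pos.trans_le (half_le_norm_one_sub_am_div h hu i))

lemma differentiableAt_div_of_lt_abar (h : (a : EReal) < P.abar) (hu : apex u ≤ a) :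
    DifferentiableAt ℂ (fun z => (P.cm : ℂ) / z) u ∧ ∀ i,
      DifferentiableAt ℂ (fun z => (P.am i : ℂ) / z) u ∧
      DifferentiableAt ℂ (fun z => (P.bm i : ℂ) / z) u := by
  rcases neg_or_eq_zero_of_lt_abar h with ha | ⟨hcm, hzero⟩
  · have hu0 : u ≠ 0 := by
      rintro rfl
      exact absurd (hu.trans_lt ha) (by simp [apex])
    exact ⟨by fun_prop (disch := assumption), fun i =>
      ⟨by fun_prop (disch := assumption), by fun_prop (disch := assumption)⟩⟩
  · simp [hcm, hzero]

lemma differentiableAt_factor (h : (a : EReal) < P.abar) (hu : apex u ≤ a) (i : ℕ) :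
    DifferentiableAt ℂ (P.factor i) u := by
  obtain ⟨ham, hbm⟩ := (differentiableAt_div_of_lt_abar h hu).2 i
  have hne := mul_ne_zero (one_sub_ap_mul_ne_zero h hu i) (one_sub_am_div_ne_zero h hu i)
  unfold factor
  fun_prop (disch := assumption)

lemma differentiableOn_Phi (h : (a : EReal) < P.abar) :
    DifferentiableOn ℂ P.Phi {u | apex u < a} := by
  obtain ⟨K, hK0, hK⟩ := exists_norm_factor_sub_one_le h
  intro u hu
  set S := {u | apex u < a} ∩ Metric.ball 0 (‖u‖ + 1)
  have hS : IsOpen S := (isOpen_apex_lt a).inter Metric.isOpen_ball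
  have hd : ∀ i, DifferentiableOn ℂ (P.factor i) S := fun i z hz =>
    (differentiableAt_factor h hz.1.le i).differentiableWithinAt
  have hbound : ∀ i, ∀ z ∈ S, ‖P.factor i z - 1‖ ≤ K * (1 + (‖u‖ + 1)) * P.weight i := by
    intro i z hz
    have hz2 : ‖z‖ ≤ ‖u‖ + 1 := (mem_ball_zero_iff.1 hz.2).le
    have hw : 0 ≤ P.weight i := add_nonneg (add_nonneg (add_nonneg
      (P.ap_nonneg i) (P.am_nonneg i)) (P.bp_nonneg i)) (P.bm_nonneg i)
    exact (hK i z hz.1.le).trans (by gcongr)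
  have hprod := Summable.hasProdLocallyUniformlyOn_one_add hS (P.sum_fin.mul_left _)
    (.of_forall hbound) fun i => ((hd i).sub_const _).continuousOn
  simp only [add_sub_cancel] at hprod
  have hdprod : DifferentiableOn ℂ (fun z => ∏' i, P.factor i z) S :=
    (hasProdLocallyUniformlyOn_iff_tendstoLocallyUniformlyOn.1 hprod).differentiableOn
      (.of_forall fun s => .fun_finsetProd fun i _ => hd i) hS
  have hdexp : DifferentiableAt ℂ (fun z => exp ((P.cp : ℂ) * z + (P.cm : ℂ) / z)) u := by
    have := (differentiableAt_div_of_lt_abar h (le_of_lt hu)).1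
    fun_prop
  exact (hdexp.mul (hdprod.differentiableAt (hS.mem_nhds ⟨hu, by simp⟩))).differentiableWithinAt

lemma Phi_swap_neg (h : (a : EReal) < P.abar) (hu : apex u ≤ a) :
    P.swap.Phi (-u) = (P.Phi u)⁻¹ := by
  simp only [Phi_eq, factor_swap_neg, mul_inv, ← Complex.exp_neg,
    tprod_inv_of_summable_norm_sub_one (summable_norm_factor_sub_one h hu)]
  congr 2
  simp only [swap, mul_neg, div_neg, neg_add]

lemma Phi_ne_zero (ha : (a : EReal) < P.abar) (hb : (b : EReal) < P.swap.abar)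
    (hu : apex u ≤ a) (hu' : apex (-u) ≤ b) : P.Phi u ≠ 0 := by
  refine mul_ne_zero (exp_ne_zero _) ?_
  have hfac : ∀ i, P.factor i u ≠ 0 := fun i => by
    refine div_ne_zero (mul_ne_zero ?_ ?_)
      (mul_ne_zero (one_sub_ap_mul_ne_zero ha hu i) (one_sub_am_div_ne_zero ha hu i))
    · simpa [swap] using one_sub_ap_mul_ne_zero hb hu' i
    · simpa [swap, div_neg] using one_sub_am_div_ne_zero hb hu' i
  have := tprod_one_add_ne_zero_of_summable (f := fun i => P.factor i u - 1)
    (by simpa using hfac) (summable_norm_factor_sub_one ha hu)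
  simp only [add_sub_cancel] at this
  exact this

end AWParams

/-! ### The contours `Γ_a^+` and `Γ_a^-` -/

lemma gammaP_re (a y : ℝ) : (gammaP a y).re = a + |y| / √2 := by
  simp [gammaP, ← ofReal_div, mul_div_right_comm]

lemma gammaP_im (a y : ℝ) : (gammaP a y).im = y / √2 := by
  simp [gammaP, ← ofReal_div, mul_div_right_comm]

@[simp] lemma apex_gammaP (a y : ℝ) : apex (gammaP a y) = a := by
  rw [apex, gammaP_re, gammaP_im, abs_div, abs_of_pos (Real.sqrt_pos.2 two_pos)]
  ring

lemma apex_neg_gammaP (a y : ℝ) : apex (-gammaP a y) = -a - √2 * |y| := by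
  rw [apex, neg_re, neg_im, abs_neg, gammaP_re, gammaP_im, abs_div,
    abs_of_pos (Real.sqrt_pos.2 two_pos)]
  linear_combination (-|y|) * Real.div_sqrt (x := 2)

lemma continuous_gammaP (a : ℝ) : Continuous (gammaP a) := by
  unfold gammaP
  fun_prop

lemma gammaP_add_ofReal (a t y : ℝ) : gammaP a y + t = gammaP (a + t) y := by
  unfold gammaP
  push_cast
  ring

lemma gammaM_eq_neg_gammaP (b y : ℝ) : gammaM b y = -gammaP (-b) (-y) := by
  unfold gammaM gammaP
  rw [abs_neg]
  push_cast
  ring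

lemma gammaMD_eq_gammaPD_neg (y : ℝ) : gammaMD y = gammaPD (-y) := by
  unfold gammaMD gammaPD
  rw [Real.sign_neg, ofReal_neg]

lemma hasDerivAt_gammaP (a : ℝ) {y : ℝ} (hy : y ≠ 0) : HasDerivAt (gammaP a) (gammaPD y) y := by
  have habs : HasDerivAt (fun y : ℝ => |y|) (Real.sign y) y := by
    rcases hy.lt_or_gt with h | h
    · exact Real.sign_of_neg h ▸ hasDerivAt_abs_neg h
    · exact Real.sign_of_pos h ▸ hasDerivAt_abs_pos h
  have h := ((habs.ofReal_comp.div_const ((√2 : ℝ) : ℂ)).const_add (a : ℂ)).add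
    (((hasDerivAt_id y).ofReal_comp.mul_const I).div_const ((√2 : ℝ) : ℂ))
  rwa [ofReal_one, one_mul] at h

lemma measurable_gammaPD : Measurable gammaPD := by
  have hsign : Measurable Real.sign := .ite measurableSet_Iio measurable_const
    (.ite measurableSet_Ioi measurable_const measurable_const)
  unfold gammaPD
  fun_prop

lemma norm_gammaPD_le (y : ℝ) : ‖gammaPD y‖ ≤ 2 := by
  have hsqrt : 1 ≤ √2 := Real.one_le_sqrt.2 one_le_two
  have hsign : ‖Real.sign y‖ ≤ 1 := by
    rcases Real.sign_apply_eq y with h | h | h <;> simp [h]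
  refine (norm_add_le _ _).trans ?_
  rw [norm_div, norm_div, norm_real, norm_real, norm_I, Real.norm_of_nonneg (Real.sqrt_nonneg 2)]
  linarith [div_le_one_of_le₀ (hsign.trans hsqrt) (by positivity),
    div_le_one_of_le₀ hsqrt (by positivity)]

lemma continuous_comp_gammaP {G : ℂ → ℂ} {a₀ a : ℝ} (hG : ContinuousOn G {u | apex u < a₀})
    (ha : a < a₀) : Continuous fun y => G (gammaP a y) :=
  hG.comp_continuous (continuous_gammaP a) fun y => by simpa using ha

/-- The integral of `G` over `Γ_a^+`. -/
def contourIntegral (G : ℂ → ℂ) (a : ℝ) : ℂ := ∫ y, G (gammaP a y) * gammaPD y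

/-- The integral of `G` over the part of `Γ_a^+` at arc length at most `Y` from its apex. -/
def truncatedIntegral (G : ℂ → ℂ) (a Y : ℝ) : ℂ := ∫ y in (-Y)..Y, G (gammaP a y) * gammaPD y

lemma tendsto_truncatedIntegral {G : ℂ → ℂ} {a : ℝ}
    (hG : Integrable fun y => G (gammaP a y) * gammaPD y) :
    Tendsto (truncatedIntegral G a) atTop (𝓝 (contourIntegral G a)) :=
  intervalIntegral_tendsto_integral hG tendsto_neg_atTop_atBot tendsto_id

lemma intervalIntegrable_mul_gammaPD {φ : ℝ → ℂ} (hφ : Continuous φ) (b c : ℝ) :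
    IntervalIntegrable (fun y => φ y * gammaPD y) volume b c := by
  have h : IntervalIntegrable gammaPD volume b c :=
    (intervalIntegrable_const (c := (2 : ℝ))).mono_fun measurable_gammaPD.aestronglyMeasurable
      (.of_forall fun y => by simpa using norm_gammaPD_le y)
  exact h.continuousOn_mul hφ.continuousOn

lemma integral_comp_gammaP_eq_sub {G H : ℂ → ℂ} {a : ℝ}
    (hG : Continuous fun y => G (gammaP a y))
    (hH : ∀ y, HasDerivAt H (G (gammaP a y)) (gammaP a y)) (b c : ℝ) :
    ∫ y in b..c, G (gammaP a y) * gammaPD y = H (gammaP a c) - H (gammaP a b) := by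
  refine integral_eq_of_hasDerivAt_off_countable (fun y => H (gammaP a y)) _
    (Set.countable_singleton 0) ?_ ?_ (intervalIntegrable_mul_gammaPD hG b c)
  · exact (continuous_iff_continuousAt.2 fun y =>
      (hH y).continuousAt.comp (continuous_gammaP a).continuousAt).continuousOn
  · exact fun y hy => ((hH y).scomp y (hasDerivAt_gammaP a hy.2)).congr_deriv (mul_comm _ _)

/-! ### Shifting the contour -/

lemma exists_primitive_union_of_convex {U V : Set ℂ} {G : ℂ → ℂ} (hU : IsOpen U) (hV : IsOpen V)
    (hUc : Convex ℝ U) (hVc : Convex ℝ V) (hG : DifferentiableOn ℂ G (U ∪ V)) :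
    ∃ H : ℂ → ℂ, ∀ u ∈ U ∪ V, HasDerivAt H (G u) u := by
  classical
  obtain ⟨H₁, h₁⟩ := hUc.exists_forall_hasDerivWithinAt (hG.mono Set.subset_union_left)
  obtain ⟨H₂, h₂⟩ := hVc.exists_forall_hasDerivWithinAt (hG.mono Set.subset_union_right)
  replace h₁ : ∀ u ∈ U, HasDerivAt H₁ (G u) u := fun u hu =>
    (h₁ u hu).hasDerivAt (hU.mem_nhds hu)
  replace h₂ : ∀ u ∈ V, HasDerivAt H₂ (G u) u := fun u hu =>
    (h₂ u hu).hasDerivAt (hV.mem_nhds hu)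
  have hdiff : ∀ u ∈ U ∩ V, HasDerivAt (H₁ - H₂) 0 u := fun u hu =>
    ((h₁ u hu.1).sub (h₂ u hu.2)).congr_deriv (sub_self _)
  obtain ⟨c, hc⟩ := (hU.inter hV).exists_is_const_of_deriv_eq_zero
    (hUc.inter hVc).isPreconnected
    (fun u hu => (hdiff u hu).differentiableAt.differentiableWithinAt)
    (fun u hu => (hdiff u hu).deriv)
  refine ⟨fun u => if u ∈ U then H₁ u else H₂ u + c, fun u hu => ?_⟩
  by_cases huU : u ∈ U
  · refine (h₁ u huU).congr_of_eventuallyEq ?_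
    filter_upwards [hU.mem_nhds huU] with z hz using if_pos hz
  · have huV : u ∈ V := hu.resolve_left huU
    refine ((h₂ u huV).add_const c).congr_of_eventuallyEq ?_
    filter_upwards [hV.mem_nhds huV] with z hz
    split_ifs with hzU
    · rw [← hc z ⟨hzU, hz⟩, Pi.sub_apply, add_sub_cancel]
    · rfl

lemma exists_primitive_of_apex_lt {a₀ : ℝ} {G : ℂ → ℂ}
    (hG : DifferentiableOn ℂ G {u | apex u < a₀}) :
    ∃ H : ℂ → ℂ, ∀ u, apex u < a₀ → HasDerivAt H (G u) u := by
  have hunion : {u | apex u < a₀} = {u | u.re - u.im < a₀} ∪ {u | u.re + u.im < a₀} := by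
    ext u
    simp only [apex, Set.mem_ofPred_eq, Set.mem_union]
    rcases abs_cases u.im with ⟨h, h'⟩ | ⟨h, h'⟩ <;> rw [h] <;>
      constructor <;> (try rintro (h'' | h'')) <;> (try intro h'') <;>
      first | linarith | (left; linarith) | (right; linarith)
  obtain ⟨H, hH⟩ := exists_primitive_union_of_convex (isOpen_lt (by fun_prop) continuous_const)
    (isOpen_lt (by fun_prop) continuous_const)
    (convex_halfSpace_lt (reLm - imLm).isLinear a₀)
    (convex_halfSpace_lt (reLm + imLm).isLinear a₀) (hunion ▸ hG)
  exact ⟨H, fun u hu => hH u (hunion ▸ hu)⟩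

lemma apex_mem_Icc_of_mem_segment {a' a y : ℝ} (ha : a' ≤ a) {u : ℂ}
    (hu : u ∈ segment ℝ (gammaP a' y) (gammaP a y)) :
    apex u ∈ Set.Icc a' a ∧ u.im = y / √2 := by
  obtain ⟨p, q, hp, hq, hpq, rfl⟩ := hu
  have heq : p • gammaP a' y + q • gammaP a y = gammaP (p * a' + q * a) y := by
    unfold gammaP
    rw [real_smul, real_smul]
    push_cast
    have : (p : ℂ) + q = 1 := by exact_mod_cast hpq
    linear_combination ((|y| : ℝ) / (√2 : ℝ) + y * I / (√2 : ℝ) : ℂ) * this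
  rw [heq, apex_gammaP, gammaP_im]
  obtain rfl : p = 1 - q := by linarith
  exact ⟨⟨by nlinarith, by nlinarith⟩, rfl⟩

section Shift

variable {G H : ℂ → ℂ} {a₀ a' a : ℝ}

lemma tendsto_primitive_gammaP_sub (ha : a' ≤ a)
    (hH : ∀ u, apex u ≤ a → HasDerivAt H (G u) u)
    (hG : Tendsto G (Bornology.cobounded ℂ ⊓ 𝓟 {u | apex u ∈ Set.Icc a' a}) (𝓝 0)) :
    Tendsto (fun y => H (gammaP a y) - H (gammaP a' y)) (Bornology.cobounded ℝ) (𝓝 0) := by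
  rw [NormedAddGroup.tendsto_nhds_zero] at hG ⊢
  intro ε hε
  have hε' : 0 < ε / (a - a' + 1) := div_pos hε (by linarith)
  have hsmall := eventually_inf_principal.1 (hG _ hε')
  obtain ⟨R, -, hR⟩ := (hasBasis_cobounded_norm (E := ℂ)).eventually_iff.1 hsmall
  filter_upwards [eventually_cobounded_le_norm (R * √2)] with y hy
  have hle : R ≤ |y / √2| := by
    rwa [abs_div, abs_of_pos (Real.sqrt_pos.2 two_pos), le_div_iff₀ (Real.sqrt_pos.2 two_pos)]
  have hmvt := (convex_segment (gammaP a' y)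
    (gammaP a y)).norm_image_sub_le_of_norm_hasDerivWithin_le
    (𝕜 := ℂ) (f := H) (f' := G) (C := ε / (a - a' + 1))
    (fun u hu => (hH u (apex_mem_Icc_of_mem_segment ha hu).1.2).hasDerivWithinAt)
    (fun u hu => by
      obtain ⟨hapex, him⟩ := apex_mem_Icc_of_mem_segment ha hu
      exact (hR (hle.trans (him ▸ abs_im_le_norm u)) hapex).le)
    (left_mem_segment ℝ _ _) (right_mem_segment ℝ _ _)
  have hlength : gammaP a y - gammaP a' y = ((a - a' : ℝ) : ℂ) := by
    unfold gammaP
    push_cast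
    ring
  rw [hlength, norm_real, Real.norm_of_nonneg (sub_nonneg.2 ha), div_mul_eq_mul_div] at hmvt
  refine hmvt.trans_lt ?_
  rw [div_lt_iff₀ (by linarith)]
  nlinarith

lemma tendsto_truncatedIntegral_sub_of_tendsto_zero (ha : a' ≤ a) (ha₀ : a < a₀)
    (hGd : DifferentiableOn ℂ G {u | apex u < a₀})
    (hG : Tendsto G (Bornology.cobounded ℂ ⊓ 𝓟 {u | apex u ∈ Set.Icc a' a}) (𝓝 0)) :
    Tendsto (fun Y => truncatedIntegral G a Y - truncatedIntegral G a' Y) atTop (𝓝 0) := by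
  obtain ⟨H, hH⟩ := exists_primitive_of_apex_lt hGd
  have hlim := tendsto_primitive_gammaP_sub ha (fun u hu => hH u (hu.trans_lt ha₀)) hG
  have hftc : ∀ b < a₀, ∀ Y, truncatedIntegral G b Y = H (gammaP b Y) - H (gammaP b (-Y)) :=
    fun b hb Y => integral_comp_gammaP_eq_sub (continuous_comp_gammaP hGd.continuousOn hb)
      (fun y => hH _ (by rwa [apex_gammaP])) _ _
  have hsub := (hlim.mono_left IsOrderBornology.atTop_le_cobounded).sub
    ((hlim.mono_left IsOrderBornology.atBot_le_cobounded).comp tendsto_neg_atTop_atBot)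
  rw [sub_zero] at hsub
  refine hsub.congr fun Y => ?_
  rw [hftc a ha₀, hftc a' (ha.trans_lt ha₀)]
  simp only [Function.comp_apply]
  ring

end Shift

/-! ### The residue at a simple pole -/

lemma exp_ofReal_mul_I_mem_slitPlane {θ : ℝ} (hθ : θ ∈ Set.Ioo (-Real.pi) Real.pi) :
    log (exp (θ * I)) = θ * I ∧ exp (θ * I) ∈ slitPlane := by
  have hlog : log (exp (θ * I)) = θ * I := log_exp (by simpa using hθ.1) (by simpa using hθ.2.le)
  refine ⟨hlog, mem_slitPlane_iff_arg.2 ⟨?_, exp_ne_zero _⟩⟩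
  rw [← log_im, hlog]
  simpa using hθ.2.ne

lemma tendsto_log_sub_log {p q : ℝ → ℂ} {θ φ : ℝ} (hθ : θ ∈ Set.Ioo (-Real.pi) Real.pi)
    (hφ : φ ∈ Set.Ioo (-Real.pi) Real.pi)
    (hp : Tendsto (fun Y : ℝ => ((Y⁻¹ : ℝ) : ℂ) * p Y) atTop (𝓝 (exp (θ * I))))
    (hq : Tendsto (fun Y : ℝ => ((Y⁻¹ : ℝ) : ℂ) * q Y) atTop (𝓝 (exp (φ * I)))) :
    Tendsto (fun Y => log (p Y) - log (q Y)) atTop (𝓝 ((θ - φ : ℝ) * I)) := by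
  obtain ⟨hθlog, hθmem⟩ := exp_ofReal_mul_I_mem_slitPlane hθ
  obtain ⟨hφlog, hφmem⟩ := exp_ofReal_mul_I_mem_slitPlane hφ
  have hlim := (hp.clog hθmem).sub (hq.clog hφmem)
  rw [hθlog, hφlog, ← sub_mul, ← ofReal_sub] at hlim
  refine hlim.congr' ?_
  filter_upwards [eventually_gt_atTop 0, hp.eventually_ne (exp_ne_zero _),
    hq.eventually_ne (exp_ne_zero _)] with Y hY hpY hqY
  rw [log_ofReal_mul (inv_pos.2 hY) (right_ne_zero_of_mul hpY),
    log_ofReal_mul (inv_pos.2 hY) (right_ne_zero_of_mul hqY), add_sub_add_left_eq_sub]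

lemma gammaP_eq_add_mul_exp (a : ℝ) {y : ℝ} (hy : 0 ≤ y) :
    gammaP a y = a + y * exp ((Real.pi / 4 : ℝ) * I) ∧
      gammaP a (-y) = a + y * exp ((-(Real.pi / 4) : ℝ) * I) := by
  have hsqrt : ((√2 / 2 : ℝ) : ℂ) = 1 / (√2 : ℝ) := by
    rw [Real.sqrt_div_self', ofReal_div, ofReal_one]
  simp only [exp_mul_I, ← ofReal_cos, ← ofReal_sin, Real.cos_neg, Real.sin_neg,
    Real.cos_pi_div_four, Real.sin_pi_div_four]
  simp only [gammaP, abs_neg, abs_of_nonneg hy, ofReal_neg, hsqrt]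
  constructor <;> ring

lemma tendsto_inv_mul_gammaP_sub (a : ℝ) (v : ℂ) :
    Tendsto (fun Y : ℝ => ((Y⁻¹ : ℝ) : ℂ) * (gammaP a Y - v)) atTop
        (𝓝 (exp ((Real.pi / 4 : ℝ) * I))) ∧
      Tendsto (fun Y : ℝ => ((Y⁻¹ : ℝ) : ℂ) * (gammaP a (-Y) - v)) atTop
        (𝓝 (exp ((-(Real.pi / 4) : ℝ) * I))) := by
  have hlim : ∀ ζ : ℂ, Tendsto (fun Y : ℝ => ((Y⁻¹ : ℝ) : ℂ) * (a - v) + ζ) atTop (𝓝 ζ) := by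
    intro ζ
    have hinv := (continuous_ofReal.tendsto 0).comp (tendsto_inv_atTop_zero (𝕜 := ℝ))
    simpa using (hinv.mul_const ((a : ℂ) - v)).add_const ζ
  constructor <;> refine (hlim _).congr' ?_ <;>
    filter_upwards [eventually_gt_atTop 0] with Y hY <;>
    simp only [gammaP_eq_add_mul_exp a hY.le, ofReal_inv] <;>
    field_simp [ofReal_ne_zero.2 hY.ne'] <;> ring

lemma sub_mem_slitPlane_of_apex_lt {u v : ℂ} (h : apex v < apex u) : u - v ∈ slitPlane := by
  rw [mem_slitPlane_iff, sub_re, sub_im, sub_pos, sub_ne_zero]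
  refine or_iff_not_imp_right.2 fun him => ?_
  rw [not_not] at him
  rw [apex, apex, him] at h
  linarith

lemma sub_ne_zero_of_apex_ne {u v : ℂ} (h : apex u ≠ apex v) : u - v ≠ 0 :=
  sub_ne_zero.2 fun huv => h (congrArg apex huv)

section Residue

variable {f : ℂ → ℂ} {a₀ a' a : ℝ} {v : ℂ}

lemma continuous_inv_gammaP_sub (hv : apex v ≠ a) : Continuous fun y => (gammaP a y - v)⁻¹ :=
  ((continuous_gammaP a).sub continuous_const).inv₀ fun y =>
    sub_ne_zero_of_apex_ne (by rw [apex_gammaP]; exact hv.symm)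

lemma tendsto_truncatedIntegral_inv_sub_of_apex_lt (hv : apex v < a) :
    Tendsto (truncatedIntegral (fun u => (u - v)⁻¹) a) atTop (𝓝 ((Real.pi / 2 : ℝ) * I)) := by
  have hpi := Real.pi_pos
  obtain ⟨hp, hq⟩ := tendsto_inv_mul_gammaP_sub a v
  have hlog := tendsto_log_sub_log ⟨by linarith, by linarith⟩ ⟨by linarith, by linarith⟩ hp hq
  rw [show Real.pi / 4 - -(Real.pi / 4) = Real.pi / 2 by ring] at hlog
  refine hlog.congr fun Y => ?_
  refine (integral_comp_gammaP_eq_sub (H := fun u => log (u - v)) (G := fun u => (u - v)⁻¹)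
    (continuous_inv_gammaP_sub hv.ne) (fun y => ?_) _ _).symm
  have hslit : gammaP a y - v ∈ slitPlane := sub_mem_slitPlane_of_apex_lt (by rwa [apex_gammaP])
  simpa using ((hasDerivAt_id (gammaP a y)).sub_const v).clog hslit

lemma tendsto_truncatedIntegral_inv_sub_of_lt_apex (hv : a < apex v) :
    Tendsto (truncatedIntegral (fun u => (u - v)⁻¹) a) atTop
      (𝓝 ((-(3 * Real.pi / 2) : ℝ) * I)) := by
  have hpi := Real.pi_pos
  have hneg : ∀ θ : ℝ, exp ((θ - Real.pi : ℝ) * I) = -exp (θ * I) := fun θ => by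
    rw [ofReal_sub, sub_mul, exp_sub, exp_pi_mul_I, div_neg, div_one]
  have hneg' : ∀ θ : ℝ, exp ((θ + Real.pi : ℝ) * I) = -exp (θ * I) := fun θ => by
    rw [ofReal_add, add_mul, exp_add, exp_pi_mul_I, mul_neg_one]
  obtain ⟨hp, hq⟩ := tendsto_inv_mul_gammaP_sub a v
  replace hp := hp.neg
  replace hq := hq.neg
  simp only [← hneg, ← mul_neg, neg_sub] at hp hq
  rw [hneg, ← hneg'] at hq
  have hlog := tendsto_log_sub_log ⟨by linarith, by linarith⟩ ⟨by linarith, by linarith⟩ hp hq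
  rw [show Real.pi / 4 - Real.pi - (-(Real.pi / 4) + Real.pi) = -(3 * Real.pi / 2) by ring] at hlog
  refine hlog.congr fun Y => ?_
  refine (integral_comp_gammaP_eq_sub (H := fun u => log (v - u)) (G := fun u => (u - v)⁻¹)
    (continuous_inv_gammaP_sub hv.ne') (fun y => ?_) _ _).symm
  have hslit : v - gammaP a y ∈ slitPlane := sub_mem_slitPlane_of_apex_lt (by rwa [apex_gammaP])
  refine (((hasDerivAt_id (gammaP a y)).const_sub v).clog hslit).congr_deriv ?_
  rw [neg_div, one_div, ← inv_neg, neg_sub]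
  rfl

end Residue

/-! ### The jump of a Cauchy integral across its pole -/

/-- Quadratic decay of `f` in the imaginary direction, on the closed strip swept by the contours
`Γ_b^+` with `b ∈ [a', a]`. -/
def StripDecay (f : ℂ → ℂ) (a' a C : ℝ) : Prop :=
  ∀ u, apex u ∈ Set.Icc a' a → ‖f u‖ * (1 + u.im ^ 2) ≤ C

namespace StripDecay

variable {f : ℂ → ℂ} {a₀ a' a b C : ℝ} {v : ℂ}

lemma mono {c' c : ℝ} (h : StripDecay f a' a C) (hc' : a' ≤ c') (hc : c ≤ a) :
    StripDecay f c' c C :=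
  fun u hu => h u ⟨hc'.trans hu.1, hu.2.trans hc⟩

lemma norm_le (h : StripDecay f a' a C) {u : ℂ} (hu : apex u ∈ Set.Icc a' a) : ‖f u‖ ≤ C :=
  (le_mul_of_one_le_right (norm_nonneg _) (le_add_of_nonneg_right (sq_nonneg _))).trans (h u hu)

lemma norm_gammaP_le (h : StripDecay f a' a C) (hb : b ∈ Set.Icc a' a) (y : ℝ) :
    ‖f (gammaP b y)‖ ≤ 2 * C * (1 + y ^ 2)⁻¹ := by
  have hdecay := h (gammaP b y) (by rwa [apex_gammaP])
  rw [gammaP_im, div_pow, Real.sq_sqrt zero_le_two] at hdecay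
  rw [← div_eq_mul_inv, le_div_iff₀ (by positivity)]
  linarith [norm_nonneg (f (gammaP b y))]

lemma integrable_div_sub (h : StripDecay f a' a C) (hf : ContinuousOn f {u | apex u < a₀})
    (hb₀ : b < a₀) (hb : b ∈ Set.Icc a' a) (hv : apex v ≠ b) :
    Integrable fun y => f (gammaP b y) / (gammaP b y - v) * gammaPD y := by
  have hdist : 0 < |b - apex v| / 2 := half_pos (abs_pos.2 (sub_ne_zero.2 hv.symm))
  have hlower : ∀ y, |b - apex v| / 2 ≤ ‖gammaP b y - v‖ := fun y => by
    have h₁ := apex_sub_apex_le (gammaP b y) v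
    have h₂ := apex_sub_apex_le v (gammaP b y)
    rw [apex_gammaP] at h₁ h₂
    rw [norm_sub_rev] at h₂
    linarith [abs_le.2 ⟨by linarith, h₁⟩]
  refine (integrable_inv_one_add_sq.const_mul (2 * C / (|b - apex v| / 2) * 2)).mono' ?_
    (.of_forall fun y => ?_)
  · simp only [div_eq_mul_inv]
    exact ((continuous_comp_gammaP hf hb₀).mul
      (continuous_inv_gammaP_sub hv)).aestronglyMeasurable.mul
        measurable_gammaPD.aestronglyMeasurable
  · rw [norm_mul, norm_div]
    calc ‖f (gammaP b y)‖ / ‖gammaP b y - v‖ * ‖gammaPD y‖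
        ≤ 2 * C * (1 + y ^ 2)⁻¹ / (|b - apex v| / 2) * 2 := by
          have hnum := h.norm_gammaP_le hb y
          gcongr
          exacts [div_nonneg ((norm_nonneg _).trans hnum) hdist.le, (norm_nonneg _).trans hnum,
            hlower y, norm_gammaPD_le y]
      _ = _ := by ring

lemma tendsto_inv_sub_mul (h : StripDecay f a' a C) (c v : ℂ) :
    Tendsto (fun u => (u - v)⁻¹ * (f u - c))
      (Bornology.cobounded ℂ ⊓ 𝓟 {u | apex u ∈ Set.Icc a' a}) (𝓝 0) := by
  have hinv : Tendsto (fun u : ℂ => (u - v)⁻¹) (Bornology.cobounded ℂ) (𝓝 0) :=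
    tendsto_inv₀_cobounded.comp (tendsto_sub_const_cobounded v)
  refine (hinv.mono_left inf_le_left).zero_mul_isBoundedUnder_le
    (isBoundedUnder_of_eventually_le (a := C + ‖c‖) ?_)
  refine eventually_inf_principal.2 (.of_forall fun u hu => ?_)
  exact (norm_sub_le _ _).trans (by gcongr; exact h.norm_le hu)

end StripDecay

section Jump

variable {f : ℂ → ℂ} {a₀ a' a C : ℝ} {v : ℂ}

lemma dslope_eq_div_sub_sub_mul_inv {u : ℂ} (h : u ≠ v) :
    dslope f v u = f u / (u - v) - f v * (u - v)⁻¹ := by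
  rw [dslope_of_ne _ h, slope_def_field]
  ring

lemma truncatedIntegral_div_sub {b : ℝ} (hf : DifferentiableOn ℂ f {u | apex u < a₀})
    (hb : b < a₀) (hv : apex v < a₀) (hvb : apex v ≠ b) (Y : ℝ) :
    truncatedIntegral (fun u => f u / (u - v)) b Y =
      truncatedIntegral (dslope f v) b Y +
        f v * truncatedIntegral (fun u => (u - v)⁻¹) b Y := by
  have hdslope := (differentiableOn_dslope ((isOpen_apex_lt a₀).mem_nhds hv)).2 hf
  have hne : ∀ y, gammaP b y ≠ v := fun y hy => hvb (by rw [← hy, apex_gammaP])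
  unfold truncatedIntegral
  rw [← intervalIntegral.integral_const_mul, ← intervalIntegral.integral_add
    (intervalIntegrable_mul_gammaPD (continuous_comp_gammaP hdslope.continuousOn hb) _ _)
    ((intervalIntegrable_mul_gammaPD (continuous_inv_gammaP_sub hvb) _ _).const_mul _)]
  refine integral_congr fun y _ => ?_
  simp only [dslope_eq_div_sub_sub_mul_inv (hne y)]
  ring

lemma tendsto_truncatedIntegral_div_sub_sub_of_lt_apex (hf : DifferentiableOn ℂ f {u | apex u < a₀})
    (ha : a' ≤ a) (ha₀ : a < a₀) (hdecay : StripDecay f a' a C) (hv : a < apex v) :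
    Tendsto (fun Y => truncatedIntegral (fun u => f u / (u - v)) a Y -
      truncatedIntegral (fun u => f u / (u - v)) a' Y) atTop (𝓝 0) := by
  refine tendsto_truncatedIntegral_sub_of_tendsto_zero ha (lt_min ha₀ hv) ?_ ?_
  · refine (hf.mono fun u (hu : apex u < _) => hu.trans_le (min_le_left _ _)).div (by fun_prop) ?_
    exact fun u hu => sub_ne_zero_of_apex_ne (lt_min_iff.1 hu).2.ne
  · simpa only [sub_zero, inv_mul_eq_div] using hdecay.tendsto_inv_sub_mul 0 v

lemma tendsto_truncatedIntegral_div_sub_sub_of_apex_lt (hf : DifferentiableOn ℂ f {u | apex u < a₀})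
    (ha : a' ≤ a) (ha₀ : a < a₀) (hdecay : StripDecay f a' a C) (hv : apex v < a)
    (hv' : apex v ≠ a') :
    Tendsto (fun Y => truncatedIntegral (fun u => f u / (u - v)) a Y -
      truncatedIntegral (fun u => f u / (u - v)) a' Y) atTop
        (𝓝 (if a' < apex v then 2 * Real.pi * I * f v else 0)) := by
  have hdslope : Tendsto (fun Y => truncatedIntegral (dslope f v) a Y -
      truncatedIntegral (dslope f v) a' Y) atTop (𝓝 0) := by
    refine tendsto_truncatedIntegral_sub_of_tendsto_zero ha ha₀
      ((differentiableOn_dslope ((isOpen_apex_lt a₀).mem_nhds (hv.trans ha₀))).2 hf) ?_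
    refine (hdecay.tendsto_inv_sub_mul (f v) v).congr' ?_
    have hne : ∀ᶠ u in Bornology.cobounded ℂ, u ≠ v :=
      Bornology.eventually_ne_cobounded v
    filter_upwards [hne.filter_mono inf_le_left] with u hu
    rw [dslope_eq_div_sub_sub_mul_inv hu]
    ring
  have hpole : Tendsto (fun Y => truncatedIntegral (fun u => (u - v)⁻¹) a Y -
      truncatedIntegral (fun u => (u - v)⁻¹) a' Y) atTop
        (𝓝 (if a' < apex v then 2 * Real.pi * I else 0)) := by
    have hlim := tendsto_truncatedIntegral_inv_sub_of_apex_lt hv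
    rcases hv'.lt_or_gt with h | h
    · simpa only [if_neg h.not_gt, sub_self] using
        hlim.sub (tendsto_truncatedIntegral_inv_sub_of_apex_lt h)
    · convert hlim.sub (tendsto_truncatedIntegral_inv_sub_of_lt_apex h) using 2
      rw [if_pos h]
      push_cast
      ring
  have hsum := hdslope.add (hpole.const_mul (f v))
  rw [zero_add, mul_ite, mul_zero, mul_comm (f v)] at hsum
  refine hsum.congr fun Y => ?_
  rw [truncatedIntegral_div_sub hf ha₀ (hv.trans ha₀) hv.ne,
    truncatedIntegral_div_sub hf (ha.trans_lt ha₀) (hv.trans ha₀) hv']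
  ring

theorem contourIntegral_div_sub_sub (hf : DifferentiableOn ℂ f {u | apex u < a₀}) (ha : a' ≤ a)
    (ha₀ : a < a₀) (hdecay : StripDecay f a' a C) (hv : apex v ≠ a) (hv' : apex v ≠ a') :
    contourIntegral (fun u => f u / (u - v)) a - contourIntegral (fun u => f u / (u - v)) a' =
      if apex v ∈ Set.Ioc a' a then 2 * Real.pi * I * f v else 0 := by
  have hlim :=
    (tendsto_truncatedIntegral (G := fun u => f u / (u - v)) (hdecay.integrable_div_sub
      hf.continuousOn ha₀ ⟨ha, le_rfl⟩ hv)).sub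
    (tendsto_truncatedIntegral (G := fun u => f u / (u - v)) (hdecay.integrable_div_sub
      hf.continuousOn (ha.trans_lt ha₀) ⟨le_rfl, ha⟩ hv'))
  refine tendsto_nhds_unique hlim ?_
  rcases hv.lt_or_gt with h | h
  · simpa only [Set.mem_Ioc, h.le, and_true] using
      tendsto_truncatedIntegral_div_sub_sub_of_apex_lt hf ha ha₀ hdecay h hv'
  · simpa only [Set.mem_Ioc, h.not_ge, and_false, if_false] using
      tendsto_truncatedIntegral_div_sub_sub_of_lt_apex hf ha ha₀ hdecay h

end Jump

/-! ### Double integrals with an integrable singularity at the crossing points -/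

/-- The integrand of `∫∫ f(u) g(v) / (u + v) du dv` over `Γ_a^+ × Γ_b^+`, parametrized by arc
length. With the second variable negated this is the shape of the integral defining `K³`, and it
is symmetric in the two variables. -/
def pairKernel (f g : ℂ → ℂ) (a b y₁ y₂ : ℝ) : ℂ :=
  f (gammaP a y₁) * g (gammaP b y₂) / (gammaP a y₁ + gammaP b y₂) * gammaPD y₁ * gammaPD y₂

/-- The integral of `f(u) g(v) / (u + v)` over `Γ_a^+ × Γ_b^+`. -/
def pairIntegral (f g : ℂ → ℂ) (a b : ℝ) : ℂ := ∫ p : ℝ × ℝ, pairKernel f g a b p.1 p.2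

/-- The weight dominating each variable of `pairKernel`; it is singular at the crossing points of
`Γ_a^+` and `-Γ_b^+` for `e = (a + b) / √2`. -/
def crossingWeight (e y : ℝ) : ℝ := (1 + y ^ 2)⁻¹ * (√|(|y| + e)|)⁻¹

lemma ae_abs_ne (c : ℝ) : ∀ᵐ y : ℝ, |y| ≠ c := by
  filter_upwards [Measure.ae_ne volume c, Measure.ae_ne volume (-c)] with y hy hy' h
  rcases eq_or_eq_neg_of_abs_eq h with h | h <;> contradiction

lemma ae_apex_neg_gammaP_ne (b c : ℝ) : ∀ᵐ y : ℝ, apex (-gammaP b y) ≠ c := by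
  filter_upwards [ae_abs_ne ((-b - c) / √2)] with y hy h
  rw [apex_neg_gammaP] at h
  exact hy ((eq_div_iff (by positivity)).2 (by linarith))

lemma intervalIntegrable_inv_sqrt_abs : IntervalIntegrable (fun x => (√|x|)⁻¹) volume (-1) 1 := by
  have h : IntervalIntegrable (fun x : ℝ => (x : ℂ) ^ ((-1 / 2 : ℝ) : ℂ)) volume (-1) 1 :=
    intervalIntegrable_cpow' (by rw [ofReal_re]; norm_num)
  refine h.norm.congr fun x _ => ?_
  simp only [norm_cpow_real, norm_real, Real.norm_eq_abs, Real.sqrt_eq_rpow,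
    ← Real.rpow_neg (abs_nonneg x)]
  norm_num

lemma integrable_inv_one_add_sq_mul_inv_sqrt_abs_add (c : ℝ) :
    Integrable fun y : ℝ => (1 + y ^ 2)⁻¹ * (√|y + c|)⁻¹ := by
  have hloc : Integrable (fun y => (Set.Icc (-1 : ℝ) 1).indicator (fun y => (√|y|)⁻¹) (y + c)) :=
    ((integrable_indicator_iff measurableSet_Icc).2
      ((intervalIntegrable_iff_integrableOn_Icc_of_le (by norm_num)).1
        intervalIntegrable_inv_sqrt_abs)).comp_add_right c
  refine (hloc.add integrable_inv_one_add_sq).mono'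
    (Measurable.aestronglyMeasurable (by fun_prop)) (.of_forall fun y => ?_)
  rw [Real.norm_of_nonneg (by positivity), Pi.add_apply]
  have hle : (1 + y ^ 2)⁻¹ ≤ 1 := inv_le_one_of_one_le₀ (by nlinarith [sq_nonneg y])
  by_cases hc : y + c ∈ Set.Icc (-1 : ℝ) 1
  · rw [Set.indicator_of_mem hc]
    exact (mul_le_of_le_one_left (by positivity) hle).trans
      (le_add_of_nonneg_right (by positivity))
  · rw [Set.indicator_of_notMem hc, zero_add]
    rw [Set.mem_Icc, ← abs_le, not_le] at hc
    exact mul_le_of_le_one_right (by positivity)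
      (inv_le_one_of_one_le₀ (Real.one_le_sqrt.2 hc.le))

lemma integrable_crossingWeight (e : ℝ) : Integrable (crossingWeight e) := by
  refine ((integrable_inv_one_add_sq_mul_inv_sqrt_abs_add e).add
    (integrable_inv_one_add_sq_mul_inv_sqrt_abs_add (-e))).mono'
      (Measurable.aestronglyMeasurable (by unfold crossingWeight; fun_prop))
      (.of_forall fun y => ?_)
  rw [crossingWeight, Real.norm_of_nonneg (by positivity), Pi.add_apply]
  rcases abs_choice y with h | h <;> rw [h]
  · exact le_add_of_nonneg_right (by positivity)
  · rw [← abs_neg, neg_add, neg_neg]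
    exact le_add_of_nonneg_left (by positivity)

lemma sqrt_abs_mul_sqrt_abs_le_norm_add_gammaP (a b y₁ y₂ : ℝ) :
    √|(|y₁| + (a + b) / √2)| * √|(|y₂| + (a + b) / √2)| ≤ ‖gammaP a y₁ + gammaP b y₂‖ := by
  set p := |y₁| + (a + b) / √2 with hp
  set q := |y₂| + (a + b) / √2 with hq
  have hsqrt : √2 * √2 = 2 := Real.mul_self_sqrt zero_le_two
  have hre : (gammaP a y₁ + gammaP b y₂).re = (p + q) / √2 := by
    rw [add_re, gammaP_re, gammaP_re, hp, hq]
    field_simp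
    linear_combination (a + b) * hsqrt
  have him : (gammaP a y₁ + gammaP b y₂).im = (y₁ + y₂) / √2 := by
    rw [add_im, gammaP_im, gammaP_im, add_div]
  have hsub : (p - q) ^ 2 ≤ (y₁ + y₂) ^ 2 := by
    refine sq_le_sq.2 ?_
    rw [hp, hq, add_sub_add_right_eq_sub, ← abs_neg y₂, ← sub_neg_eq_add]
    exact abs_abs_sub_abs_le y₁ (-y₂)
  rw [← Real.sqrt_mul (abs_nonneg _), ← abs_mul, norm_def, normSq_apply, hre, him,
    div_mul_div_comm, div_mul_div_comm, hsqrt]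
  refine Real.sqrt_le_sqrt (abs_le.2 ⟨?_, ?_⟩) <;> nlinarith [sq_nonneg (p + q), sq_nonneg (p - q)]

lemma StripDecay.norm_pairKernel_le {f g : ℂ → ℂ} {a b C D y₁ y₂ : ℝ} (hf : StripDecay f a a C)
    (hg : StripDecay g b b D) (h₁ : |y₁| ≠ -((a + b) / √2)) (h₂ : |y₂| ≠ -((a + b) / √2)) :
    ‖pairKernel f g a b y₁ y₂‖ ≤ 16 * C * D *
      (crossingWeight ((a + b) / √2) y₁ * crossingWeight ((a + b) / √2) y₂) := by
  have hf₁ := hf.norm_gammaP_le (Set.left_mem_Icc.2 le_rfl) y₁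
  have hg₂ := hg.norm_gammaP_le (Set.left_mem_Icc.2 le_rfl) y₂
  have hdist := sqrt_abs_mul_sqrt_abs_le_norm_add_gammaP a b y₁ y₂
  unfold pairKernel crossingWeight
  set e := (a + b) / √2
  have hpos : ∀ y : ℝ, |y| ≠ -e → 0 < √|(|y| + e)| := fun y hy =>
    Real.sqrt_pos.2 (abs_pos.2 fun h => hy (eq_neg_of_add_eq_zero_left h))
  have hpos₁ := hpos y₁ h₁
  have hpos₂ := hpos y₂ h₂
  have hnum : ‖f (gammaP a y₁) * g (gammaP b y₂)‖ ≤
      2 * C * (1 + y₁ ^ 2)⁻¹ * (2 * D * (1 + y₂ ^ 2)⁻¹) := by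
    rw [norm_mul]
    exact mul_le_mul hf₁ hg₂ (norm_nonneg _) ((norm_nonneg _).trans hf₁)
  have hnum₀ := (norm_nonneg _).trans hnum
  rw [norm_mul, norm_mul, norm_div]
  calc _ ≤ 2 * C * (1 + y₁ ^ 2)⁻¹ * (2 * D * (1 + y₂ ^ 2)⁻¹) /
        (√|(|y₁| + e)| * √|(|y₂| + e)|) * 2 * 2 := by
        gcongr
        exacts [norm_gammaPD_le y₁, norm_gammaPD_le y₂]
    _ = _ := by
        rw [div_eq_mul_inv, mul_inv]
        ring

lemma StripDecay.ae_norm_pairKernel_le {f g : ℂ → ℂ} {a b C D : ℝ} (hf : StripDecay f a a C)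
    (hg : StripDecay g b b D) :
    ∀ᵐ p : ℝ × ℝ, ‖pairKernel f g a b p.1 p.2‖ ≤ 16 * C * D *
      (crossingWeight ((a + b) / √2) p.1 * crossingWeight ((a + b) / √2) p.2) := by
  have hae := ae_abs_ne (-((a + b) / √2))
  filter_upwards [Measure.quasiMeasurePreserving_fst.ae hae,
    Measure.quasiMeasurePreserving_snd.ae hae] with p h₁ h₂
  exact hf.norm_pairKernel_le hg h₁ h₂

lemma integrable_crossingWeight_mul (C e : ℝ) :
    Integrable fun p : ℝ × ℝ => C * (crossingWeight e p.1 * crossingWeight e p.2) :=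
  ((integrable_crossingWeight e).mul_prod (integrable_crossingWeight e)).const_mul C

lemma pairIntegral_comm (f g : ℂ → ℂ) (a b : ℝ) : pairIntegral f g a b = pairIntegral g f b a := by
  unfold pairIntegral
  rw [Measure.volume_eq_prod, ← integral_prod_swap]
  refine integral_congr_ae (.of_forall fun p => ?_)
  simp only [pairKernel, Prod.fst_swap, Prod.snd_swap, mul_comm (f _), add_comm (gammaP a _),
    mul_right_comm]

section PairIntegral

variable {f g : ℂ → ℂ} {a₀ b₀ a' a b C D : ℝ}

lemma measurable_pairKernel (hf : ContinuousOn f {u | apex u < a₀})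
    (hg : ContinuousOn g {u | apex u < b₀}) (ha : a < a₀) (hb : b < b₀) :
    Measurable fun p : ℝ × ℝ => pairKernel f g a b p.1 p.2 := by
  have hf' := (continuous_comp_gammaP hf ha).measurable
  have hg' := (continuous_comp_gammaP hg hb).measurable
  have ha' := (continuous_gammaP a).measurable
  have hb' := (continuous_gammaP b).measurable
  exact ((((hf'.comp measurable_fst).mul (hg'.comp measurable_snd)).div
    ((ha'.comp measurable_fst).add (hb'.comp measurable_snd))).mul
      (measurable_gammaPD.comp measurable_fst)).mul (measurable_gammaPD.comp measurable_snd)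

lemma integrable_pairKernel (hf : ContinuousOn f {u | apex u < a₀})
    (hg : ContinuousOn g {u | apex u < b₀}) (ha : a < a₀) (hb : b < b₀)
    (hfC : StripDecay f a a C) (hgD : StripDecay g b b D) :
    Integrable fun p : ℝ × ℝ => pairKernel f g a b p.1 p.2 :=
  (integrable_crossingWeight_mul _ _).mono'
    (measurable_pairKernel hf hg ha hb).aestronglyMeasurable (hfC.ae_norm_pairKernel_le hgD)

lemma integral_pairKernel_left (f g : ℂ → ℂ) (a b y : ℝ) :
    ∫ y₁, pairKernel f g a b y₁ y =
      contourIntegral (fun u => f u / (u - -gammaP b y)) a * (g (gammaP b y) * gammaPD y) := by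
  rw [contourIntegral, ← MeasureTheory.integral_mul_const]
  refine integral_congr_ae (.of_forall fun y₁ => ?_)
  simp only [pairKernel, sub_neg_eq_add]
  ring

theorem pairIntegral_sub_pairIntegral (hf : DifferentiableOn ℂ f {u | apex u < a₀})
    (hg : ContinuousOn g {u | apex u < b₀}) (ha : a' ≤ a) (ha₀ : a < a₀) (hb : b < b₀)
    (hfC : StripDecay f a' a C) (hgD : StripDecay g b b D) :
    pairIntegral f g a b - pairIntegral f g a' b = 2 * Real.pi * I *
      ∫ y in {y | apex (-gammaP b y) ∈ Set.Ioc a' a},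
        f (-gammaP b y) * g (gammaP b y) * gammaPD y := by
  have hint := integrable_pairKernel hf.continuousOn hg ha₀ hb (hfC.mono ha le_rfl) hgD
  have hint' := integrable_pairKernel hf.continuousOn hg (ha.trans_lt ha₀) hb
    (hfC.mono le_rfl ha) hgD
  have hmeas : MeasurableSet {y | apex (-gammaP b y) ∈ Set.Ioc a' a} :=
    (continuous_apex.comp (continuous_gammaP b).neg).measurable measurableSet_Ioc
  unfold pairIntegral
  rw [Measure.volume_eq_prod] at hint hint' ⊢
  rw [integral_prod_symm _ hint, integral_prod_symm _ hint',
    ← integral_sub hint.integral_prod_right hint'.integral_prod_right,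
    ← MeasureTheory.integral_const_mul, ← MeasureTheory.integral_indicator hmeas]
  refine integral_congr_ae ?_
  filter_upwards [ae_apex_neg_gammaP_ne b a, ae_apex_neg_gammaP_ne b a'] with y hy hy'
  rw [integral_pairKernel_left, integral_pairKernel_left, ← sub_mul,
    contourIntegral_div_sub_sub hf ha ha₀ hfC hy hy', Set.indicator_apply]
  simp only [Set.mem_ofPred_eq]
  split_ifs <;> ring

end PairIntegral

/-! ### The crossing part of the contours -/

/-- The integral of `h` over the part of `-Γ_b^+` to the right of `Γ_a^+`, in the direction of
increasing imaginary part (hence opposite to `y ↦ -gammaP b y`). It collects the residues met when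
`Γ_a^+` is shifted. -/
def crossingIntegral (h : ℂ → ℂ) (a b : ℝ) : ℂ :=
  ∫ y in {y | a < apex (-gammaP b y)}, h (-gammaP b y) * gammaPD y

section CrossingIntegral

variable {h : ℂ → ℂ} {a' a b : ℝ}

lemma setOf_lt_apex_neg_gammaP (a b : ℝ) :
    {y | a < apex (-gammaP b y)} = Set.Ioo (-((-b - a) / √2)) ((-b - a) / √2) := by
  ext y
  rw [Set.mem_ofPred_eq, apex_neg_gammaP, Set.mem_Ioo, ← abs_lt, lt_div_iff₀ (by positivity)]
  constructor <;> intro hy <;> linarith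

lemma measurableSet_lt_apex_neg_gammaP (a b : ℝ) :
    MeasurableSet {y | a < apex (-gammaP b y)} := by
  rw [setOf_lt_apex_neg_gammaP]
  exact measurableSet_Ioo

lemma integrableOn_lt_apex_neg_gammaP (hh : Continuous h) (a b : ℝ) :
    IntegrableOn (fun y => h (-gammaP b y) * gammaPD y) {y | a < apex (-gammaP b y)} := by
  rw [setOf_lt_apex_neg_gammaP]
  exact (intervalIntegrable_mul_gammaPD (hh.comp (continuous_gammaP b).neg) _ _).1.mono_set
    Set.Ioo_subset_Ioc_self

lemma crossingIntegral_sub_crossingIntegral (hh : Continuous h) (ha : a' ≤ a) :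
    crossingIntegral h a' b - crossingIntegral h a b =
      ∫ y in {y | apex (-gammaP b y) ∈ Set.Ioc a' a}, h (-gammaP b y) * gammaPD y := by
  have hset : {y | apex (-gammaP b y) ∈ Set.Ioc a' a} =
      {y | a' < apex (-gammaP b y)} \ {y | a < apex (-gammaP b y)} := by
    ext y
    simp only [Set.mem_ofPred_eq, Set.mem_Ioc, Set.mem_sdiff, not_lt]
  rw [hset, setIntegral_sdiff (measurableSet_lt_apex_neg_gammaP a b)
    (integrableOn_lt_apex_neg_gammaP hh a' b) fun y hy => ha.trans_lt hy]
  rfl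

lemma crossingIntegral_eq_zero (h : ℂ → ℂ) (hab : -b ≤ a) : crossingIntegral h a b = 0 := by
  have hle : (-b - a) / √2 ≤ 0 := div_nonpos_of_nonpos_of_nonneg (by linarith) (by positivity)
  rw [crossingIntegral, setOf_lt_apex_neg_gammaP, Set.Ioo_eq_empty (by linarith),
    setIntegral_empty]

lemma neg_gammaP_crossing (hab : a ≤ -b) :
    -gammaP b ((-b - a) / √2) = ((a - b) / 2 : ℝ) + (-((-b - a) / 2) : ℝ) * I ∧
      -gammaP b (-((-b - a) / √2)) = ((a - b) / 2 : ℝ) + ((-b - a) / 2 : ℝ) * I := by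
  have hsqrt : (-b - a) / √2 / √2 = (-b - a) / 2 := by
    rw [div_div, Real.mul_self_sqrt zero_le_two]
  have hnonneg : 0 ≤ (-b - a) / √2 := div_nonneg (by linarith) (by positivity)
  constructor <;> refine Complex.ext ?_ ?_ <;>
    simp only [neg_re, neg_im, gammaP_re, gammaP_im, abs_neg, abs_of_nonneg hnonneg, neg_div, hsqrt,
      add_re, add_im, re_ofReal_mul, im_ofReal_mul, ofReal_re, ofReal_im, I_re, I_im] <;> ring

lemma integral_vertical_eq_sub {H : ℂ → ℂ} (hh : Continuous h) (hH : ∀ u, HasDerivAt H (h u) u)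
    (m r : ℝ) :
    ∫ s in (-r)..r, h (m + s * I) * I = H (m + r * I) - H (m + (-r : ℝ) * I) := by
  refine integral_eq_sub_of_hasDerivAt (f := fun s : ℝ => H (m + s * I)) (fun s _ => ?_)
    (Continuous.intervalIntegrable (by fun_prop) _ _)
  have hline : HasDerivAt (fun s : ℝ => (m : ℂ) + s * I) I s := by
    simpa using ((hasDerivAt_id s).ofReal_comp.mul_const I).const_add (m : ℂ)
  exact ((hH _).scomp s hline).congr_deriv (mul_comm _ _)

lemma crossingIntegral_eq_integral_vertical (hh : Differentiable ℂ h) (hab : a < -b) :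
    crossingIntegral h a b =
      ∫ s in (-((-b - a) / 2))..((-b - a) / 2), h (((a - b) / 2 : ℝ) + s * I) * I := by
  obtain ⟨H, hH⟩ := hh.isExactOn_univ
  replace hH : ∀ u, HasDerivAt H (h u) u := fun u => hH u (Set.mem_univ u)
  have hcont : Continuous fun y => h (-gammaP b y) := hh.continuous.comp (continuous_gammaP b).neg
  have hneg : ∀ u, HasDerivAt (fun u => -H (-u)) (h (-u)) u := fun u =>
    ((hH (-u)).comp u (hasDerivAt_neg u)).neg.congr_deriv (by ring)
  have hnonneg : 0 ≤ (-b - a) / √2 := div_nonneg (by linarith) (by positivity)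
  obtain ⟨hright, hleft⟩ := neg_gammaP_crossing hab.le
  rw [integral_vertical_eq_sub hh.continuous hH, crossingIntegral, setOf_lt_apex_neg_gammaP,
    ← integral_Ioc_eq_integral_Ioo, ← integral_of_le (by linarith),
    integral_comp_gammaP_eq_sub (G := fun u => h (-u)) hcont (fun y => hneg _), hright, hleft]
  ring

end CrossingIntegral

/-! ### The Airy factors -/

/-- The exponential factor of the integrand of `K³` in the shifted variable `u = z + t`. -/
def airyExp (t x : ℝ) (u : ℂ) : ℂ := exp ((u - t) ^ 3 / 3 - x * (u - t))

/-- The part of the integrand of `K³` depending on `z`, in the shifted variable `u = z + t`. -/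
def airyFactor (P : AWParams) (t x : ℝ) (u : ℂ) : ℂ := airyExp t x u * P.Phi u

lemma differentiable_airyExp (t x : ℝ) : Differentiable ℂ (airyExp t x) := by
  unfold airyExp
  fun_prop

lemma norm_airyExp (t x : ℝ) (u : ℂ) :
    ‖airyExp t x u‖ = Real.exp (((apex u - t) ^ 3 + 3 * (apex u - t) ^ 2 * |u.im| - 2 * |u.im| ^ 3)
      / 3 - x * (apex u - t + |u.im|)) := by
  have hcube : ∀ z : ℂ, (z ^ 3 / 3).re = (z.re ^ 3 - 3 * z.re * z.im ^ 2) / 3 := fun z => by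
    rw [show z ^ 3 / 3 = ((1 / 3 : ℝ) : ℂ) * z ^ 3 by push_cast; ring, re_ofReal_mul]
    simp only [pow_succ, pow_zero, one_mul, mul_re, mul_im]
    ring
  rw [airyExp, norm_exp, sub_re, re_ofReal_mul, hcube, sub_re, sub_im, ofReal_re, ofReal_im,
    sub_zero, ← sq_abs u.im, apex]
  congr 1
  ring

lemma norm_airyExp_le {t x B M : ℝ} {u : ℂ} (hu : |apex u - t| ≤ B) (hx : |x| ≤ M) :
    ‖airyExp t x u‖ ≤
      Real.exp (B ^ 3 / 3 + M * B + (B ^ 2 + M) * |u.im| - 2 / 3 * |u.im| ^ 3) := by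
  rw [norm_airyExp]
  set m := apex u - t
  have hcube : m ^ 3 ≤ B ^ 3 := (le_abs_self _).trans (abs_pow m 3 ▸ by gcongr)
  have hsq : m ^ 2 * |u.im| ≤ B ^ 2 * |u.im| := by
    rw [← sq_abs m]
    gcongr
  have hlin : -(x * (m + |u.im|)) ≤ M * (B + |u.im|) := by
    refine (neg_le_abs _).trans ?_
    rw [abs_mul]
    have habs : |(m + |u.im|)| ≤ B + |u.im| :=
      (abs_add_le _ _).trans (add_le_add hu (abs_abs _).le)
    exact mul_le_mul hx habs (abs_nonneg _) ((abs_nonneg _).trans hx)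
  refine Real.exp_le_exp.2 ?_
  linarith

lemma mul_sub_cube_le {L η : ℝ} (hL : 1 ≤ L) (hη : 0 ≤ η) :
    L * η - 2 / 3 * η ^ 3 ≤ L * (L + 2) := by
  rcases le_total η (L + 2) with h | h
  · have hcube : 0 ≤ η ^ 3 := by positivity
    nlinarith
  · have hsq : L ≤ 2 / 3 * η ^ 2 := by nlinarith
    nlinarith [mul_le_mul_of_nonneg_right hsq hη]

lemma exp_neg_mul_one_add_sq_le {η : ℝ} (hη : 0 ≤ η) : Real.exp (-η) * (1 + η ^ 2) ≤ 2 := by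
  rw [Real.exp_neg, inv_mul_le_iff₀ (Real.exp_pos η)]
  linarith [Real.quadratic_le_exp_of_nonneg hη]

lemma exists_stripDecay_airyFactor {P : AWParams} {a : ℝ} (ha : (a : EReal) < P.abar)
    (t a' M : ℝ) : ∃ C, ∀ x, |x| ≤ M → StripDecay (airyFactor P t x) a' a C := by
  obtain ⟨K, hK, hPhi⟩ := P.exists_norm_Phi_le ha
  set B := max |a' - t| |a - t|
  set L := B ^ 2 + M + 2 * K + 1 with hL
  set N := B ^ 3 / 3 + M * B + K * (1 + (B + |t|)) + L * (L + 2) with hN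
  refine ⟨Real.exp N * 2, fun x hx u hu => ?_⟩
  set η := |u.im| with hη
  have hM : 0 ≤ M := (abs_nonneg x).trans hx
  have hm : |apex u - t| ≤ B :=
    abs_le_max_abs_abs (sub_le_sub_right hu.1 t) (sub_le_sub_right hu.2 t)
  have hnorm : ‖u‖ ≤ B + |t| + 2 * η := by
    have hre : u.re = (apex u - t) + t + η := by rw [apex]; ring
    have habs := abs_add_three (apex u - t) t η
    rw [← hre, abs_abs] at habs
    linarith [norm_le_abs_re_add_abs_im u]
  have hexponent :
      B ^ 3 / 3 + M * B + (B ^ 2 + M) * η - 2 / 3 * η ^ 3 + K * (1 + ‖u‖) ≤ N + -η := by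
    have hcubic := mul_sub_cube_le (L := L) (by rw [hL]; nlinarith [sq_nonneg B]) (abs_nonneg u.im)
    have hKu : K * (1 + ‖u‖) ≤ K * (1 + (B + |t| + 2 * η)) := by gcongr
    rw [← hη, hL] at hcubic
    rw [hN, hL]
    linarith
  calc ‖airyFactor P t x u‖ * (1 + u.im ^ 2)
      ≤ Real.exp (B ^ 3 / 3 + M * B + (B ^ 2 + M) * η - 2 / 3 * η ^ 3) *
          Real.exp (K * (1 + ‖u‖)) * (1 + u.im ^ 2) := by
        rw [airyFactor, norm_mul]
        gcongr
        exacts [norm_airyExp_le hm hx, hPhi u hu.2]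
    _ ≤ Real.exp (N + -η) * (1 + u.im ^ 2) := by
        rw [← Real.exp_add]
        gcongr
    _ ≤ Real.exp N * 2 := by
        rw [Real.exp_add, mul_assoc, ← sq_abs u.im]
        gcongr
        exact exp_neg_mul_one_add_sq_le (abs_nonneg u.im)

lemma differentiableOn_airyFactor {P : AWParams} {a : ℝ} (ha : (a : EReal) < P.abar) (t x : ℝ) :
    DifferentiableOn ℂ (airyFactor P t x) {u | apex u < a} :=
  (differentiable_airyExp t x).differentiableOn.mul (P.differentiableOn_Phi ha)

lemma airyFactor_mul_airyFactor_swap {P : AWParams} {a b : ℝ} (ha : (a : EReal) < P.abar)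
    (hb : (b : EReal) < P.swap.abar) {u : ℂ} (hu : apex u ≤ a) (hu' : apex (-u) ≤ b)
    (t x s x' : ℝ) :
    airyFactor P t x u * airyFactor P.swap s x' (-u) = airyExp t x u * airyExp s x' (-u) := by
  rw [airyFactor, airyFactor, P.Phi_swap_neg ha hu, mul_mul_mul_comm,
    mul_inv_cancel₀ (P.Phi_ne_zero ha hb hu hu'), mul_one]

section PairIntegralAiryFactor

variable {P Q : AWParams} {a' a b : ℝ}

lemma integrable_pairKernel_airyFactor (ha : (a : EReal) < P.abar) (hb : (b : EReal) < Q.abar)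
    (t x s x' : ℝ) :
    Integrable fun p : ℝ × ℝ => pairKernel (airyFactor P t x) (airyFactor Q s x') a b p.1 p.2 := by
  obtain ⟨a₀, haa₀, ha₀⟩ := P.exists_between_abar ha
  obtain ⟨b₀, hbb₀, hb₀⟩ := Q.exists_between_abar hb
  obtain ⟨C, hC⟩ := exists_stripDecay_airyFactor ha t a |x|
  obtain ⟨D, hD⟩ := exists_stripDecay_airyFactor hb s b |x'|
  exact integrable_pairKernel (differentiableOn_airyFactor ha₀ t x).continuousOn
    (differentiableOn_airyFactor hb₀ s x').continuousOn haa₀ hbb₀ (hC x le_rfl) (hD x' le_rfl)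

lemma continuous_pairIntegral_airyFactor (ha : (a : EReal) < P.abar) (hb : (b : EReal) < Q.abar)
    (t s : ℝ) :
    Continuous fun x : ℝ × ℝ => pairIntegral (airyFactor P t x.1) (airyFactor Q s x.2) a b := by
  refine continuous_iff_continuousAt.2 fun x₀ => ?_
  obtain ⟨C, hC⟩ := exists_stripDecay_airyFactor ha t a (‖x₀‖ + 1)
  obtain ⟨D, hD⟩ := exists_stripDecay_airyFactor hb s b (‖x₀‖ + 1)
  refine continuousAt_of_dominated (.of_forall fun x =>
    (integrable_pairKernel_airyFactor ha hb t x.1 s x.2).aestronglyMeasurable) ?_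
    (integrable_crossingWeight_mul (16 * C * D) ((a + b) / √2)) (.of_forall fun p => ?_)
  · filter_upwards [continuous_norm.continuousAt.eventually_le_const (lt_add_one ‖x₀‖)] with x hx
    exact (hC x.1 ((norm_fst_le x).trans hx)).ae_norm_pairKernel_le
      (hD x.2 ((norm_snd_le x).trans hx))
  · unfold pairKernel airyFactor airyExp
    fun_prop

theorem pairIntegral_airyFactor_sub (ha' : a' ≤ a) (ha : (a : EReal) < P.abar)
    (hb : (b : EReal) < P.swap.abar) (t x s x' : ℝ) :
    pairIntegral (airyFactor P t x) (airyFactor P.swap s x') a b -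
        pairIntegral (airyFactor P t x) (airyFactor P.swap s x') a' b =
      2 * Real.pi * I *
        (crossingIntegral (fun u => airyExp t x u * airyExp s x' (-u)) a' b -
          crossingIntegral (fun u => airyExp t x u * airyExp s x' (-u)) a b) := by
  obtain ⟨a₀, haa₀, ha₀⟩ := P.exists_between_abar ha
  obtain ⟨b₀, hbb₀, hb₀⟩ := P.swap.exists_between_abar hb
  obtain ⟨C, hC⟩ := exists_stripDecay_airyFactor ha t a' |x|
  obtain ⟨D, hD⟩ := exists_stripDecay_airyFactor hb s b |x'|
  have hcont : Continuous fun u => airyExp t x u * airyExp s x' (-u) :=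
    (differentiable_airyExp t x).continuous.mul
      ((differentiable_airyExp s x').continuous.comp continuous_neg)
  have hmeas : MeasurableSet {y | apex (-gammaP b y) ∈ Set.Ioc a' a} :=
    (continuous_apex.comp (continuous_gammaP b).neg).measurable measurableSet_Ioc
  rw [pairIntegral_sub_pairIntegral (differentiableOn_airyFactor ha₀ t x)
      (differentiableOn_airyFactor hb₀ s x').continuousOn ha' haa₀ hbb₀ (hC x le_rfl)
      (hD x' le_rfl),
    crossingIntegral_sub_crossingIntegral hcont ha']
  congr 1
  refine setIntegral_congr_fun hmeas fun y hy => ?_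
  have hmul := airyFactor_mul_airyFactor_swap ha hb hy.2 (by rw [neg_neg, apex_gammaP]) t x s x'
  rw [neg_neg] at hmul
  simp only [hmul, neg_neg]

end PairIntegralAiryFactor

/-! ### The Airy wanderer kernel -/

section Kernel

variable {P : AWParams} {α α' β β' t₁ t₂ : ℝ}

lemma airyExp_mul_airyExp_neg (t₁ x₁ t₂ x₂ : ℝ) (u v : ℂ) :
    airyExp t₁ x₁ u * airyExp (-t₂) x₂ (-v) =
      exp ((u - t₁) ^ 3 / 3 - x₁ * (u - t₁) - (v - t₂) ^ 3 / 3 + x₂ * (v - t₂)) := by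
  rw [airyExp, airyExp, ← exp_add]
  congr 1
  push_cast
  ring

lemma K3param_eq_pairKernel (hβ : P.bbar < ((β + t₂ : ℝ) : EReal)) (α t₁ x₁ x₂ y₁ y₂ : ℝ) :
    K3param P α β t₁ x₁ t₂ x₂ y₁ y₂ = pairKernel (airyFactor P t₁ x₁)
      (airyFactor P.swap (-t₂) x₂) (α + t₁) (-(β + t₂)) y₁ (-y₂) := by
  have hPhi : P.Phi (-gammaP (-(β + t₂)) (-y₂)) = (P.swap.Phi (gammaP (-(β + t₂)) (-y₂)))⁻¹ :=
    AWParams.Phi_swap_neg (P := P.swap) (AWParams.neg_lt_abar_swap_iff.2 hβ) (apex_gammaP _ _).le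
  have hz : gammaP α y₁ = gammaP (α + t₁) y₁ - t₁ := by
    rw [← gammaP_add_ofReal, add_sub_cancel_right]
  have hw : gammaM β y₂ = -gammaP (-(β + t₂)) (-y₂) - t₂ := by
    rw [gammaM_eq_neg_gammaP, neg_add, ← gammaP_add_ofReal]
    push_cast
    ring
  have hexp := airyExp_mul_airyExp_neg t₁ x₁ t₂ x₂ (gammaP (α + t₁) y₁) (-gammaP (-(β + t₂)) (-y₂))
  rw [neg_neg] at hexp
  rw [K3param, K3Integrand, pairKernel, airyFactor, airyFactor, mul_mul_mul_comm, hexp,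
    gammaMD_eq_gammaPD_neg, hw, hz, sub_add_cancel, sub_add_cancel, hPhi, div_inv_eq_mul]
  ring_nf

lemma measurePreserving_prodMk_neg :
    MeasurePreserving ((MeasurableEquiv.refl ℝ).prodCongr (MeasurableEquiv.neg ℝ)) volume volume :=
  (MeasurePreserving.id volume).prod (Measure.measurePreserving_neg volume)

lemma integrable_K3param (hα : ((α + t₁ : ℝ) : EReal) < P.abar)
    (hβ : P.bbar < ((β + t₂ : ℝ) : EReal)) (x₁ x₂ : ℝ) :
    Integrable fun p : ℝ × ℝ => K3param P α β t₁ x₁ t₂ x₂ p.1 p.2 := by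
  simp only [K3param_eq_pairKernel hβ]
  exact (measurePreserving_prodMk_neg.integrable_comp_emb (MeasurableEquiv.measurableEmbedding _)).2
    (integrable_pairKernel_airyFactor hα (AWParams.neg_lt_abar_swap_iff.2 hβ) t₁ x₁ (-t₂) x₂)

lemma K3_eq_pairIntegral (hβ : P.bbar < ((β + t₂ : ℝ) : EReal)) (α t₁ x₁ x₂ : ℝ) :
    K3 P α β t₁ x₁ t₂ x₂ = (1 / (2 * Real.pi * I)) ^ 2 * pairIntegral (airyFactor P t₁ x₁)
      (airyFactor P.swap (-t₂) x₂) (α + t₁) (-(β + t₂)) := by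
  simp only [K3, K3param_eq_pairKernel hβ]
  exact congrArg _ (measurePreserving_prodMk_neg.integral_comp'
    fun p => pairKernel (airyFactor P t₁ x₁) (airyFactor P.swap (-t₂) x₂) (α + t₁) (-(β + t₂))
      p.1 p.2)

lemma K1_eq_crossingIntegral (α β t₁ x₁ t₂ x₂ : ℝ) :
    K1 α β t₁ x₁ t₂ x₂ = 1 / (2 * Real.pi * I) *
      crossingIntegral (fun u => airyExp t₁ x₁ u * airyExp (-t₂) x₂ (-u))
        (α + t₁) (-(β + t₂)) := by
  have hdiff : Differentiable ℂ fun u => airyExp t₁ x₁ u * airyExp (-t₂) x₂ (-u) :=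
    (differentiable_airyExp t₁ x₁).mul ((differentiable_airyExp (-t₂) x₂).comp differentiable_neg)
  rw [K1]
  split_ifs with h
  · rw [crossingIntegral_eq_integral_vertical hdiff (by rwa [neg_neg]), neg_neg]
    simp only [airyExp_mul_airyExp_neg, K1seg]
    congr! 5 with s
    push_cast
    ring
  · rw [crossingIntegral_eq_zero _ (by linarith), mul_zero]

lemma continuous_K1 (α β t₁ t₂ : ℝ) : Continuous fun x : ℝ × ℝ => K1 α β t₁ x.1 t₂ x.2 := by
  unfold K1
  split_ifs
  · refine continuous_const.mul (continuous_parametric_intervalIntegral_of_continuous' ?_ _ _)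
    unfold K1seg Function.uncurry
    fun_prop
  · exact continuous_const

lemma continuous_K2 (t₁ t₂ : ℝ) : Continuous fun x : ℝ × ℝ => K2 t₁ x.1 t₂ x.2 := by
  unfold K2
  split_ifs <;> fun_prop

theorem continuous_KabcAt (hα : ((α + t₁ : ℝ) : EReal) < P.abar)
    (hβ : P.bbar < ((β + t₂ : ℝ) : EReal)) :
    Continuous fun x : ℝ × ℝ => KabcAt P α β t₁ x.1 t₂ x.2 := by
  simp only [KabcAt, K3_eq_pairIntegral hβ]
  exact ((continuous_K1 α β t₁ t₂).add (continuous_K2 t₁ t₂)).add (continuous_const.mul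
    (continuous_pairIntegral_airyFactor hα (AWParams.neg_lt_abar_swap_iff.2 hβ) t₁ (-t₂)))

lemma KabcAt_eq_of_le (h : α' ≤ α) (hα : ((α + t₁ : ℝ) : EReal) < P.abar)
    (hβ : P.bbar < ((β + t₂ : ℝ) : EReal)) (x₁ x₂ : ℝ) :
    KabcAt P α β t₁ x₁ t₂ x₂ = KabcAt P α' β t₁ x₁ t₂ x₂ := by
  have hsub := pairIntegral_airyFactor_sub (add_le_add_left h t₁) hα
    (AWParams.neg_lt_abar_swap_iff.2 hβ) t₁ x₁ (-t₂) x₂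
  have hpi : (2 * Real.pi * I : ℂ) ≠ 0 := two_pi_I_ne_zero
  rw [sub_eq_iff_eq_add] at hsub
  rw [KabcAt, KabcAt, K3_eq_pairIntegral hβ, K3_eq_pairIntegral hβ, K1_eq_crossingIntegral,
    K1_eq_crossingIntegral, hsub]
  field_simp
  ring

lemma KabcAt_eq_left (hα : ((α + t₁ : ℝ) : EReal) < P.abar)
    (hα' : ((α' + t₁ : ℝ) : EReal) < P.abar) (hβ : P.bbar < ((β + t₂ : ℝ) : EReal))
    (x₁ x₂ : ℝ) : KabcAt P α β t₁ x₁ t₂ x₂ = KabcAt P α' β t₁ x₁ t₂ x₂ := by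
  rcases le_total α' α with h | h
  · exact KabcAt_eq_of_le h hα hβ x₁ x₂
  · exact (KabcAt_eq_of_le h hα' hβ x₁ x₂).symm

lemma K1_neg (α β t₁ x₁ t₂ x₂ : ℝ) :
    K1 (-β) (-α) (-t₂) x₂ (-t₁) x₁ = K1 α β t₁ x₁ t₂ x₂ := by
  have hiff : -β + -t₂ < -α + -t₁ ↔ α + t₁ < β + t₂ := by constructor <;> intro h <;> linarith
  rw [K1, K1, show -α + -t₁ - (-β + -t₂) = β + t₂ - (α + t₁) by ring]
  simp only [hiff]
  refine if_congr Iff.rfl (congrArg _ ?_) rfl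
  obtain ⟨r, hr⟩ : ∃ r, -r = (β + t₂ - (α + t₁)) / 2 := ⟨_, neg_neg _⟩
  rw [← hr, ← intervalIntegral.integral_comp_neg, neg_neg]
  congr! 4 with s
  unfold K1seg
  push_cast
  ring

lemma K2_neg (t₁ x₁ t₂ x₂ : ℝ) : K2 (-t₂) x₂ (-t₁) x₁ = K2 t₁ x₁ t₂ x₂ := by
  simp only [K2, neg_lt_neg_iff, neg_sub_neg, ← neg_sub x₂ x₁, neg_sq, add_comm x₁]

lemma lt_abar_iff_bbar_swap_lt :
    ((α + t₁ : ℝ) : EReal) < P.abar ↔ P.swap.bbar < ((-α + -t₁ : ℝ) : EReal) := by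
  rw [← AWParams.neg_lt_abar_swap_iff, P.swap_swap, ← neg_add, neg_neg]

lemma KabcAt_swap_neg (hα : ((α + t₁ : ℝ) : EReal) < P.abar)
    (hβ : P.bbar < ((β + t₂ : ℝ) : EReal)) (x₁ x₂ : ℝ) :
    KabcAt P.swap (-β) (-α) (-t₂) x₂ (-t₁) x₁ = KabcAt P α β t₁ x₁ t₂ x₂ := by
  rw [KabcAt, KabcAt, K3_eq_pairIntegral hβ, K3_eq_pairIntegral (lt_abar_iff_bbar_swap_lt.1 hα),
    K1_neg, K2_neg, P.swap_swap, pairIntegral_comm, neg_neg, ← neg_add, ← neg_add, neg_neg]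

theorem KabcAt_eq (hα : ((α + t₁ : ℝ) : EReal) < P.abar) (hβ : P.bbar < ((β + t₂ : ℝ) : EReal))
    (hα' : ((α' + t₁ : ℝ) : EReal) < P.abar) (hβ' : P.bbar < ((β' + t₂ : ℝ) : EReal))
    (x₁ x₂ : ℝ) : KabcAt P α β t₁ x₁ t₂ x₂ = KabcAt P α' β' t₁ x₁ t₂ x₂ := by
  have hswap : ∀ {b : ℝ}, P.bbar < ((b + t₂ : ℝ) : EReal) →
      ((-b + -t₂ : ℝ) : EReal) < P.swap.abar := fun hb => by
    rwa [← neg_add, AWParams.neg_lt_abar_swap_iff]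
  rw [KabcAt_eq_left hα hα' hβ, ← KabcAt_swap_neg hα' hβ, ← KabcAt_swap_neg hα' hβ']
  exact KabcAt_eq_left (hswap hβ) (hswap hβ') (lt_abar_iff_bbar_swap_lt.1 hα') x₂ x₁

end Kernel

/-- Lemma 1.4 (`WellDefKer`): (i) the double contour integral in `K³` converges
absolutely; (ii) the value of `K_{a,b,c}` does not depend on the admissible choice
of `α, β`; (iii) `(x₁, x₂) ↦ K_{a,b,c}(t₁,x₁;t₂,x₂)` is continuous. -/
theorem stmt0 (P : AWParams) (t₁ t₂ x₁ x₂ : ℝ) :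
    (∀ α β : ℝ,
      ((α + t₁ : ℝ) : EReal) < P.abar → P.bbar < ((β + t₂ : ℝ) : EReal) →
      Integrable (fun p : ℝ × ℝ => K3param P α β t₁ x₁ t₂ x₂ p.1 p.2)
        (volume : Measure (ℝ × ℝ))) ∧
    (∀ α β α' β' : ℝ,
      ((α + t₁ : ℝ) : EReal) < P.abar → P.bbar < ((β + t₂ : ℝ) : EReal) →
      ((α' + t₁ : ℝ) : EReal) < P.abar → P.bbar < ((β' + t₂ : ℝ) : EReal) →
      KabcAt P α β t₁ x₁ t₂ x₂ = KabcAt P α' β' t₁ x₁ t₂ x₂) ∧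
    (∀ α β : ℝ,
      ((α + t₁ : ℝ) : EReal) < P.abar → P.bbar < ((β + t₂ : ℝ) : EReal) →
      Continuous (fun xy : ℝ × ℝ => KabcAt P α β t₁ xy.1 t₂ xy.2)) :=
  ⟨fun _ _ hα hβ => integrable_K3param hα hβ x₁ x₂,
    fun _ _ _ _ hα hβ hα' hβ' => KabcAt_eq hα hβ hα' hβ' x₁ x₂,
    fun _ _ hα hβ => continuous_KabcAt hα hβ⟩

end
end

section
/- Let T ⊂ ℝ be countable and let 𝓘_T be as in the context. Let (M^N)_{N≥1} be point processes on ℝ^k (each on its own probability space) such that for every m ≥ 1, all n₁,…,n_m ∈ ℕ, and all pairwise disjoint A₁,…,A_m ∈ 𝓘_T, the limit C(n₁,…,n_m; A₁,…,A_m) := lim_{N→∞} E[∏_{i=1}^m M^N(A_i)!/(M^N(A_i)−n_i)!] exists and is finite. Then there exist a point process M^∞ on some probability space and a countable set T^∞ with T ⊆ T^∞ ⊂ ℝ such that for every m ≥ 1, all n₁,…,n_m ∈ ℕ, and all pairwise disjoint A₁,…,A_m ∈ 𝓘_{T^∞}, E[∏_{i=1}^m M^∞(A_i)!/(M^∞(A_i)−n_i)!]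 = C(n₁,…,n_m; A₁,…,A_m). -/
open MeasureTheory Filter Topology
open scoped ENNReal

noncomputable section

/-- A point process on `ℝ^k`. -/
def IsPointProcess (k : ℕ) {Ω : Type*} [MeasurableSpace Ω]
    (M : Ω → Measure (Fin k → ℝ)) : Prop :=
  (∀ A : Set (Fin k → ℝ), MeasurableSet A → Measurable fun ω => M ω A) ∧
  (∀ ω, ∀ B : Set (Fin k → ℝ), MeasurableSet B → Bornology.IsBounded B →
    ∃ n : ℕ, M ω B = n)

/-- Descending factorial `x (x-1) ⋯ (x-n+1)` in `ℝ≥0∞` (with truncated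
subtraction); it agrees with the usual one for natural `x`. -/
def descFactE (x : ℝ≥0∞) (n : ℕ) : ℝ≥0∞ := ∏ i ∈ Finset.range n, (x - (i : ℝ≥0∞))

/-- The family `𝓘_T`: half-open rectangles in `ℝ^k` whose corner coordinates
avoid the countable set `T`. -/
def IsRectAvoiding (k : ℕ) (T : Set ℝ) (A : Set (Fin k → ℝ)) : Prop :=
  ∃ a b : Fin k → ℝ, (∀ i, a i ∉ T) ∧ (∀ i, b i ∉ T) ∧
    A = {x | ∀ i, x i ∈ Set.Ioc (a i) (b i)}


/-!
A point process is encoded as a random element of a compact metrizable space of configurations,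
which records in every unit cell the number of points, in the compactification `ℕ∞` of `ℕ`, and
their positions. By compactness the laws of `M^N` have a weakly convergent subsequence, and the
limit law defines `M^∞`.

Since `x ^ p ≤ (2p) ^ p + 2 ^ p * (x (x - 1) ⋯ (x - p + 1))`, convergence of the factorial moments
bounds all moments of the number of points in a bounded set. Hence the limit gives no mass to
infinite numbers of points, and products of descending factorials are uniformly integrable. These
products are locally constant at every configuration without points on the boundary of the
rectangles, so their expectations converge as soon as the corner coordinates avoid the countably
many values that a coordinate of a point of `M^∞` takes with positive probability; these are added
to `T` to form `T^∞`.
-/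
lemma descFactE_le_pow (x : ℝ≥0∞) (n : ℕ) : descFactE x n ≤ x ^ n := by
  simpa [descFactE] using
    Finset.prod_le_pow_card (Finset.range n) (fun i => x - (i : ℝ≥0∞)) x fun _ _ => tsub_le_self

lemma measurable_descFactE (n : ℕ) : Measurable fun x => descFactE x n :=
  Finset.measurable_fun_prod _ fun _ _ => measurable_id.sub_const _

lemma pow_le_add_descFactE (x : ℝ≥0∞) (p : ℕ) :
    x ^ p ≤ (2 * p) ^ p + 2 ^ p * descFactE x p := by
  rcases le_total x (2 * p) with hx | hx
  · exact (pow_le_pow_left' hx p).trans le_self_add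
  · have factor_le : ∀ i ∈ Finset.range p, x ≤ 2 * (x - (i : ℝ≥0∞)) := fun i hi => by
      have hi_le : (i : ℝ≥0∞) + i ≤ x := by
        rw [← two_mul]
        exact (mul_le_mul_right (by exact_mod_cast (Finset.mem_range.1 hi).le) 2).trans hx
      have hi_half : (i : ℝ≥0∞) ≤ x - i :=
        ENNReal.le_sub_of_add_le_left (ENNReal.natCast_ne_top i) hi_le
      calc x ≤ i + (x - i) := le_add_tsub
        _ ≤ (x - i) + (x - i) := by gcongr
        _ = 2 * (x - i) := (two_mul _).symm
    calc x ^ p = ∏ _i ∈ Finset.range p, x := by simp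
      _ ≤ ∏ i ∈ Finset.range p, 2 * (x - (i : ℝ≥0∞)) := Finset.prod_le_prod' factor_le
      _ = 2 ^ p * descFactE x p := by simp [descFactE, Finset.prod_mul_distrib]
      _ ≤ (2 * p) ^ p + 2 ^ p * descFactE x p := le_add_self

lemma prod_descFactE_le_pow {α ι : Type*} [MeasurableSpace α] [Fintype ι] (μ : Measure α)
    (A : ι → Set α) (n : ι → ℕ) :
    ∏ j, descFactE (μ (A j)) (n j) ≤ μ (⋃ j, A j) ^ ∑ j, n j := by
  rw [← Finset.prod_pow_eq_pow_sum]
  exact Finset.prod_le_prod' fun j _ => (descFactE_le_pow _ _).trans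
    (pow_le_pow_left' (measure_mono (Set.subset_iUnion A j)) _)

lemma measurable_prod_descFactE {α ι : Type*} [MeasurableSpace α] [Fintype ι]
    {A : ι → Set α} (hA : ∀ j, MeasurableSet (A j)) (n : ι → ℕ) :
    Measurable fun μ : Measure α => ∏ j, descFactE (μ (A j)) (n j) :=
  Finset.measurable_fun_prod _ fun j _ =>
    (measurable_descFactE (n j)).comp (Measure.measurable_coe (hA j))

lemma exists_eventually_lintegral_pow_le {ι : Type*} {L : Filter ι} {Ω : ι → Type*}
    [∀ i, MeasurableSpace (Ω i)] (P : ∀ i, Measure (Ω i)) [∀ i, IsProbabilityMeasure (P i)]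
    (f : ∀ i, Ω i → ℝ≥0∞) (p : ℕ) {c : ℝ≥0∞} (hc : c ≠ ⊤)
    (h : Tendsto (fun i => ∫⁻ ω, descFactE (f i ω) p ∂P i) L (𝓝 c)) :
    ∃ S ≠ ⊤, ∀ᶠ i in L, ∫⁻ ω, f i ω ^ p ∂P i ≤ S := by
  have two_pow_ne_top : (2 : ℝ≥0∞) ^ p ≠ ⊤ := by finiteness
  refine ⟨(2 * p) ^ p + 2 ^ p * (c + 1), by finiteness, ?_⟩
  filter_upwards [h.eventually_lt_const (ENNReal.lt_add_right hc one_ne_zero)] with i hi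
  calc ∫⁻ ω, f i ω ^ p ∂P i
      ≤ ∫⁻ ω, (2 * p) ^ p + 2 ^ p * descFactE (f i ω) p ∂P i :=
        lintegral_mono fun ω => pow_le_add_descFactE _ _
    _ = (2 * p) ^ p + 2 ^ p * ∫⁻ ω, descFactE (f i ω) p ∂P i := by
        rw [lintegral_add_left measurable_const, lintegral_const_mul' _ _ two_pow_ne_top,
          lintegral_const, measure_univ, mul_one]
    _ ≤ (2 * p) ^ p + 2 ^ p * (c + 1) := by gcongr

lemma volume_setOf_pos_ofReal_lt (a : ℝ≥0∞) :
    volume {t : ℝ | 0 < t ∧ ENNReal.ofReal t < a} = a := by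
  induction a with
  | top =>
    simp only [ENNReal.ofReal_lt_top, and_true]
    exact Real.volume_Ioi
  | coe a =>
    have : {t : ℝ | 0 < t ∧ ENNReal.ofReal t < a} = Set.Ioo 0 (a : ℝ) := by
      ext t
      refine and_congr_right fun ht => ?_
      rw [← ENNReal.ofReal_coe_nnreal, ENNReal.ofReal_lt_ofReal_iff_of_nonneg ht.le]
    rw [this, Real.volume_Ioo, sub_zero, ENNReal.ofReal_coe_nnreal]

section LayerCake

variable {X : Type*} [MeasurableSpace X] {f : X → ℝ≥0∞}

lemma lintegral_eq_lintegral_measure_ofReal_lt (μ : Measure X) [SFinite μ] (hf : Measurable f) :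
    ∫⁻ x, f x ∂μ = ∫⁻ t in Set.Ioi (0 : ℝ), μ {x | ENNReal.ofReal t < f x} := by
  let E : Set (X × ℝ) := {q | 0 < q.2 ∧ ENNReal.ofReal q.2 < f q.1}
  have hE : MeasurableSet E := (measurableSet_lt measurable_const measurable_snd).inter
    (measurableSet_lt (ENNReal.measurable_ofReal.comp measurable_snd) (hf.comp measurable_fst))
  calc ∫⁻ x, f x ∂μ = ∫⁻ x, volume (Prod.mk x ⁻¹' E) ∂μ :=
        lintegral_congr fun x => (volume_setOf_pos_ofReal_lt (f x)).symm
    _ = ∫⁻ t, μ ((fun x => (x, t)) ⁻¹' E) := by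
        rw [← Measure.prod_apply hE, Measure.prod_apply_symm hE]
    _ = ∫⁻ t in Set.Ioi (0 : ℝ), μ {x | ENNReal.ofReal t < f x} := by
        rw [← lintegral_indicator measurableSet_Ioi]
        refine lintegral_congr fun t => ?_
        by_cases ht : 0 < t <;> simp [E, ht]

lemma lintegral_min_one_div_rpow_ne_top {p : ℝ} (hp : 1 < p) {S : ℝ≥0∞} (hS : S ≠ ⊤) :
    ∫⁻ t in Set.Ioi (0 : ℝ), min 1 (S / ENNReal.ofReal t ^ p) ≠ ⊤ := by
  have tail_finite : ∫⁻ t in Set.Ioi (1 : ℝ), S / ENNReal.ofReal t ^ p ≠ ⊤ := by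
    have rpow_finite : ∫⁻ t in Set.Ioi (1 : ℝ), ENNReal.ofReal (t ^ (-p)) ≠ ⊤ :=
      (integrableOn_Ioi_rpow_of_lt (by linarith) one_pos).lintegral_lt_top.ne
    rw [setLIntegral_congr_fun (g := fun t => S * ENNReal.ofReal (t ^ (-p))) measurableSet_Ioi
      fun t ht => ?_, lintegral_const_mul' _ _ hS]
    · exact ENNReal.mul_ne_top hS rpow_finite
    · have ht0 : (0 : ℝ) < t := one_pos.trans ht
      simp only [div_eq_mul_inv, ENNReal.ofReal_rpow_of_pos ht0]
      rw [Real.rpow_neg ht0.le, ENNReal.ofReal_inv_of_pos (by positivity)]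
  rw [← Set.Ioc_union_Ioi_eq_Ioi zero_le_one]
  refine ne_top_of_le_ne_top (ENNReal.add_ne_top.2 ⟨?_, tail_finite⟩)
    ((lintegral_union_le _ _ _).trans (add_le_add
      (lintegral_mono fun _ => min_le_left _ _) (lintegral_mono fun _ => min_le_right _ _)))
  simp

lemma ae_measure_eq_ofReal_eq_zero (μ : Measure X) [SFinite μ] (hf : Measurable f) :
    ∀ᵐ t ∂volume.restrict (Set.Ioi (0 : ℝ)), μ {x | f x = ENNReal.ofReal t} = 0 := by
  have countable_levels : {t : ℝ | 0 < μ {x | (f x).toReal = t}}.Countable :=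
    Measure.countable_meas_level_set_pos hf.ennreal_toReal
  filter_upwards [ae_restrict_mem measurableSet_Ioi,
    ae_restrict_of_ae (countable_levels.ae_notMem volume)] with t ht hlevel
  refine measure_mono_null (fun x hx => ?_) (nonpos_iff_eq_zero.1 (not_lt.1 hlevel))
  simp only [Set.mem_ofPred_eq] at hx ⊢
  rw [hx, ENNReal.toReal_ofReal ht.le]

end LayerCake

lemma frontier_setOf_lt_subset {X Y : Type*} [TopologicalSpace X] [LinearOrder Y]
    [TopologicalSpace Y] [OrderClosedTopology Y] (f : X → Y) (c : Y) :
    frontier {x | c < f x} ⊆ {x | f x = c} ∪ {x | ¬ ContinuousAt f x} := by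
  intro x hx
  by_contra hnot
  obtain ⟨hne, hcont⟩ : f x ≠ c ∧ ContinuousAt f x := by simpa [not_or] using hnot
  rw [frontier_eq_closure_inter_closure, Set.mem_inter_iff, mem_closure_iff_frequently,
    mem_closure_iff_frequently] at hx
  rcases hne.lt_or_gt with hlt | hgt
  · exact hx.1 ((hcont.eventually_lt_const hlt).mono fun y hy => not_lt.2 hy.le)
  · exact hx.2 ((hcont.eventually_const_lt hgt).mono fun y hy => not_not.2 hy)

section WeakConvergence

variable {X ι : Type*} [TopologicalSpace X] [MeasurableSpace X] [OpensMeasurableSpace X]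
  [HasOuterApproxClosed X] {L : Filter ι} {μs : ι → ProbabilityMeasure X}
  {μ : ProbabilityMeasure X} {f : X → ℝ≥0∞}

lemma tendsto_measure_setOf_lt (hlim : Tendsto μs L (𝓝 μ))
    (hcont : ∀ᵐ x ∂(μ : Measure X), ContinuousAt f x) {c : ℝ≥0∞}
    (hc : (μ : Measure X) {x | f x = c} = 0) :
    Tendsto (fun i => (μs i : Measure X) {x | c < f x}) L (𝓝 ((μ : Measure X) {x | c < f x})) :=
  ProbabilityMeasure.tendsto_measure_of_null_frontier_of_tendsto' hlim
    (measure_mono_null (frontier_setOf_lt_subset f c) (measure_union_null hc hcont))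

theorem tendsto_lintegral_of_lintegral_rpow_le [L.IsCountablyGenerated]
    (hlim : Tendsto μs L (𝓝 μ)) (hf : Measurable f)
    (hcont : ∀ᵐ x ∂(μ : Measure X), ContinuousAt f x) {p : ℝ} (hp : 1 < p) {S : ℝ≥0∞}
    (hS : S ≠ ⊤) (hbound : ∀ᶠ i in L, ∫⁻ x, f x ^ p ∂(μs i : Measure X) ≤ S) :
    Tendsto (fun i => ∫⁻ x, f x ∂(μs i : Measure X)) L (𝓝 (∫⁻ x, f x ∂(μ : Measure X))) := by
  have hp0 : 0 < p := one_pos.trans hp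
  simp only [lintegral_eq_lintegral_measure_ofReal_lt _ hf]
  refine tendsto_lintegral_filter_of_dominated_convergence
    (fun t => min 1 (S / ENNReal.ofReal t ^ p)) ?_ ?_ (lintegral_min_one_div_rpow_ne_top hp hS) ?_
  · refine .of_forall fun i => Antitone.measurable fun s t hst => measure_mono fun x hx => ?_
    exact (ENNReal.ofReal_le_ofReal hst).trans_lt hx
  · filter_upwards [hbound] with i hi
    filter_upwards [ae_restrict_mem measurableSet_Ioi] with t ht
    have ht0 : 0 < ENNReal.ofReal t := ENNReal.ofReal_pos.2 ht
    refine le_min prob_le_one ?_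
    calc (μs i : Measure X) {x | ENNReal.ofReal t < f x}
        ≤ (μs i : Measure X) {x | ENNReal.ofReal t ^ p ≤ f x ^ p} :=
          measure_mono fun x hx => ENNReal.rpow_le_rpow (le_of_lt hx) hp0.le
      _ ≤ (∫⁻ x, f x ^ p ∂(μs i : Measure X)) / ENNReal.ofReal t ^ p :=
          meas_ge_le_lintegral_div (hf.pow_const p).aemeasurable (by positivity) (by finiteness)
      _ ≤ S / ENNReal.ofReal t ^ p := by gcongr
  · filter_upwards [ae_measure_eq_ofReal_eq_zero (μ : Measure X) hf] with t ht
    exact tendsto_measure_setOf_lt hlim hcont ht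

end WeakConvergence

lemma csInf_le_iff_le_measure_Iic (μ : Measure ℝ) [IsFiniteMeasure μ] {c : ℝ≥0∞} (hc : 0 < c)
    (hcμ : c < μ Set.univ) (t : ℝ) :
    sInf {s | c ≤ μ (Set.Iic s)} ≤ t ↔ c ≤ μ (Set.Iic t) := by
  let S : Set ℝ := {s | c ≤ μ (Set.Iic s)}
  have mono : Monotone fun s => μ (Set.Iic s) := fun _ _ hst =>
    measure_mono (Set.Iic_subset_Iic.2 hst)
  have S_nonempty : S.Nonempty :=
    ((tendsto_measure_Iic_atTop μ).eventually_const_lt hcμ).exists.imp fun _ => le_of_lt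
  have S_bddBelow : BddBelow S := by
    have tendsto_zero : Tendsto (fun s : ℝ => μ (Set.Iic s)) atBot (𝓝 0) := by
      have := tendsto_measure_iInter_atBot (μ := μ) (s := fun s : ℝ => Set.Iic s)
        (fun _ => nullMeasurableSet_Iic) (fun _ _ hst => Set.Iic_subset_Iic.2 hst)
        ⟨0, measure_ne_top _ _⟩
      rwa [iInter_Iic_eq_empty_iff.2 (by simp), measure_empty] at this
    obtain ⟨b, hb⟩ := (tendsto_zero.eventually_lt_const hc).exists
    exact ⟨b, fun s hs => (lt_of_not_ge fun hsb => (hs.trans (mono hsb)).not_gt hb).le⟩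
  have csInf_mem : sInf S ∈ S := by
    have right_continuous : Tendsto (fun s => μ (Set.Iic s)) (𝓝[>] sInf S)
        (𝓝 (μ (Set.Iic (sInf S)))) := by
      have iInter_eq : ⋂ r > sInf S, Set.Iic r = Set.Iic (sInf S) := by
        ext x
        simp [forall_gt_imp_ge_iff_le_of_dense]
      rw [← iInter_eq]
      exact tendsto_measure_biInter_gt (fun _ _ => nullMeasurableSet_Iic)
        (fun _ _ _ hij => Set.Iic_subset_Iic.2 hij) ⟨_, lt_add_one _, measure_ne_top _ _⟩
    refine ge_of_tendsto right_continuous (eventually_mem_nhdsWithin.mono fun s hs => ?_)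
    obtain ⟨r, hrS, hrs⟩ := exists_lt_of_csInf_lt S_nonempty hs
    exact hrS.trans (mono hrs.le)
  exact ⟨fun h => csInf_mem.trans (mono h), fun h => csInf_le S_bddBelow h⟩

lemma natCast_add_half_le_natCast_iff (i m : ℕ) : (i + 2⁻¹ : ℝ≥0∞) ≤ m ↔ i < m := by
  refine ⟨fun h => ?_, fun h => ?_⟩
  · exact_mod_cast (ENNReal.lt_add_right (ENNReal.natCast_ne_top i) (by simp)).trans_le h
  · calc (i + 2⁻¹ : ℝ≥0∞) ≤ i + 1 := by gcongr; simp
      _ ≤ m := by exact_mod_cast h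

lemma natCast_add_half_lt_natCast {i m : ℕ} (h : i < m) : (i + 2⁻¹ : ℝ≥0∞) < m := by
  calc (i + 2⁻¹ : ℝ≥0∞) < i + 1 :=
        ENNReal.add_lt_add_left (ENNReal.natCast_ne_top i) (by simp)
    _ ≤ m := by exact_mod_cast h

lemma sum_dirac_apply_eq_card {E ι : Type*} [MeasurableSpace E] {A : Set E}
    [DecidablePred (· ∈ A)] (hA : MeasurableSet A) (s : Finset ι) (g : ι → E) :
    (∑ i ∈ s, Measure.dirac (g i)) A = (s.filter fun i => g i ∈ A).card := by
  simp [Measure.dirac_apply' _ hA, Set.indicator_apply, Finset.sum_boole]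

lemma measurable_sum_range_dirac {X E : Type*} [MeasurableSpace X] [MeasurableSpace E] {n : X → ℕ}
    (hn : Measurable n) {g : ℕ → X → E} (hg : ∀ i, Measurable (g i)) :
    Measurable fun x => ∑ i ∈ Finset.range (n x), Measure.dirac (g i x) := by
  have measurable_uncurried : Measurable fun q : ℕ × X =>
      ∑ i ∈ Finset.range q.1, Measure.dirac (g i q.2) := by
    refine measurable_from_prod_countable_right fun m => ?_
    dsimp only
    exact Finset.measurable_fun_sum _ fun i _ => Measure.measurable_dirac.comp (hg i)
  exact (measurable_uncurried.comp (hn.prodMk measurable_id) :)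

lemma exists_measurable_natCast_eq {Ω : Type*} [MeasurableSpace Ω] {f : Ω → ℝ≥0∞}
    (hf : Measurable f) (hint : ∀ ω, ∃ m : ℕ, f ω = m) :
    ∃ n : Ω → ℕ, Measurable n ∧ ∀ ω, f ω = n ω := by
  choose n hn using hint
  refine ⟨n, measurable_to_countable' fun m => ?_, hn⟩
  have : n ⁻¹' {m} = f ⁻¹' {(m : ℝ≥0∞)} := by ext ω; simp [hn]
  rw [this]
  exact hf (measurableSet_singleton _)

lemma eq_sum_dirac_of_le_iff_add_half_le {μ : Measure ℝ}
    (hint : ∀ t, ∃ m : ℕ, μ (Set.Iic t) = m) {n : ℕ} (hn : μ Set.univ = n) {q : ℕ → ℝ}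
    (hq : ∀ i < n, ∀ t, q i ≤ t ↔ (i + 2⁻¹ : ℝ≥0∞) ≤ μ (Set.Iic t)) :
    μ = ∑ i ∈ Finset.range n, Measure.dirac (q i) := by
  classical
  have : IsFiniteMeasure μ := ⟨by simp [hn]⟩
  refine Measure.ext_of_Iic _ _ fun t => ?_
  obtain ⟨m, hm⟩ := hint t
  have hmn : m ≤ n := by
    have := measure_mono (μ := μ) (Set.subset_univ (Set.Iic t))
    rw [hm, hn] at this
    exact_mod_cast this
  have filter_eq : (Finset.range n).filter (q · ∈ Set.Iic t) = Finset.range m := by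
    ext i
    rw [Finset.mem_filter, Finset.mem_range, Finset.mem_range]
    constructor
    · rintro ⟨hi, hqi⟩
      rwa [Set.mem_Iic, hq i hi, hm, natCast_add_half_le_natCast_iff] at hqi
    · intro hi
      refine ⟨hi.trans_le hmn, ?_⟩
      rwa [Set.mem_Iic, hq i (hi.trans_le hmn), hm, natCast_add_half_le_natCast_iff]
  rw [sum_dirac_apply_eq_card measurableSet_Iic, filter_eq, Finset.card_range, hm]

/- The points are the quantiles of `μ ω` at the half-integer levels `i + 1/2`: since all values of
`μ ω` are integers, each level lies strictly between `0` and the total mass, and it is reached at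
`t` exactly when `i < μ ω (Iic t)`. -/
lemma exists_measurable_enumeration_real {Ω : Type*} [MeasurableSpace Ω] {μ : Ω → Measure ℝ}
    (hμ : Measurable μ) (hint : ∀ ω s, MeasurableSet s → ∃ m : ℕ, μ ω s = m) :
    ∃ (n : Ω → ℕ) (g : ℕ → Ω → ℝ), Measurable n ∧ (∀ i, Measurable (g i)) ∧
      ∀ ω, μ ω = ∑ i ∈ Finset.range (n ω), Measure.dirac (g i ω) := by
  obtain ⟨n, hn_meas, hn⟩ := exists_measurable_natCast_eq
    ((Measure.measurable_coe MeasurableSet.univ).comp hμ) fun ω => hint ω _ MeasurableSet.univ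
  let q (i : ℕ) (ω : Ω) : ℝ :=
    if i < n ω then sInf {t | (i + 2⁻¹ : ℝ≥0∞) ≤ μ ω (Set.Iic t)} else 0
  have q_le_iff (ω) (i) (hi : i < n ω) (t : ℝ) :
      q i ω ≤ t ↔ (i + 2⁻¹ : ℝ≥0∞) ≤ μ ω (Set.Iic t) := by
    have : IsFiniteMeasure (μ ω) := ⟨(hn ω).trans_lt (ENNReal.natCast_lt_top _)⟩
    simp only [q, if_pos hi]
    exact csInf_le_iff_le_measure_Iic (μ ω) (by simp)
      ((natCast_add_half_lt_natCast hi).trans_eq (hn ω).symm) t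
  refine ⟨n, q, hn_meas, fun i => measurable_of_Iic fun t => ?_, fun ω =>
    eq_sum_dirac_of_le_iff_add_half_le (fun t => hint ω _ measurableSet_Iic) (hn ω) (q_le_iff ω)⟩
  have preimage_eq : q i ⁻¹' Set.Iic t = Set.ite {ω | i < n ω}
      {ω | (i + 2⁻¹ : ℝ≥0∞) ≤ μ ω (Set.Iic t)} {_ω | 0 ≤ t} := by
    ext ω
    by_cases hi : i < n ω
    · simp [Set.ite, hi, q_le_iff ω i hi]
    · simp [Set.ite, hi, q]
  rw [preimage_eq]
  exact (measurableSet_lt measurable_const hn_meas).ite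
    (measurableSet_le measurable_const ((Measure.measurable_coe measurableSet_Iic).comp hμ))
    (MeasurableSet.const _)

lemma exists_measurable_enumeration {Ω E : Type*} [MeasurableSpace Ω] [MeasurableSpace E]
    [StandardBorelSpace E] [Nonempty E] {μ : Ω → Measure E} (hμ : Measurable μ)
    (hint : ∀ ω s, MeasurableSet s → ∃ m : ℕ, μ ω s = m) :
    ∃ (n : Ω → ℕ) (g : ℕ → Ω → E), Measurable n ∧ (∀ i, Measurable (g i)) ∧
      ∀ ω, μ ω = ∑ i ∈ Finset.range (n ω), Measure.dirac (g i ω) := by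
  have he := measurableEmbedding_embeddingReal E
  obtain ⟨r, hr, hre⟩ := he.exists_measurable_extend measurable_id fun _ => ‹Nonempty E›
  obtain ⟨n, g, hn, hg, hμg⟩ := exists_measurable_enumeration_real
    (μ := fun ω => (μ ω).map (embeddingReal E)) ((Measure.measurable_map _ he.measurable).comp hμ)
    fun ω s hs => by
      rw [Measure.map_apply he.measurable hs]
      exact hint ω _ (he.measurable hs)
  refine ⟨n, fun i => r ∘ g i, hn, fun i => hr.comp (hg i), fun ω => ?_⟩
  calc μ ω = ((μ ω).map (embeddingReal E)).map r := by
        rw [Measure.map_map hr he.measurable, hre, Measure.map_id]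
    _ = ∑ i ∈ Finset.range (n ω), Measure.dirac (r (g i ω)) := by
        rw [hμg, Measure.map_finset_sum hr.aemeasurable]
        simp only [Measure.map_dirac' hr]

lemma eventually_mem_iff_of_notMem_frontier {X : Type*} [TopologicalSpace X] {A : Set X} {a : X}
    (ha : a ∉ frontier A) : ∀ᶠ b in 𝓝 a, (b ∈ A ↔ a ∈ A) := by
  rw [← Set.mem_compl_iff, compl_frontier_eq_union_interior] at ha
  rcases ha with ha | ha
  · filter_upwards [mem_interior_iff_mem_nhds.1 ha] with b hb
    exact iff_of_true hb (interior_subset ha)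
  · filter_upwards [mem_interior_iff_mem_nhds.1 ha] with b hb
    exact iff_of_false hb (interior_subset ha)

instance : BorelSpace ℕ∞ := ⟨borel_eq_top_of_countable.symm⟩

/-- Configurations of points in `ℝ^k`, recorded separately in each unit cell `z + [0, 1]^k` of the
integer lattice: a number of points and a sequence of positions in the unit cube, of which only
that many are occupied. The value `⊤` for the number of points is allowed so that the space is
compact. -/
abbrev CellConfig (k : ℕ) : Type := (Fin k → ℤ) → ℕ∞ × (ℕ → Fin k → unitInterval)

namespace CellConfig

variable {k : ℕ}

instance : BorelSpace (CellConfig k) := Pi.borelSpace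

instance : TopologicalSpace.MetrizableSpace (ProbabilityMeasure (CellConfig k)) :=
  MeasureTheory.instMetrizableSpaceProbabilityMeasure _

/-- The translation of the unit cube onto the closed unit cell with lowest corner `z`. -/
def cellMap (z : Fin k → ℤ) (u : Fin k → unitInterval) : Fin k → ℝ := fun l => z l + u l

/-- The position of a point of `ℝ^k` inside its half-open unit cell, in unit cube coordinates. -/
def cellCoord (x : Fin k → ℝ) : Fin k → unitInterval := fun l =>
  ⟨Int.fract (x l), Int.fract_nonneg _, (Int.fract_lt_one _).le⟩

/-- The half-open unit cell `z + [0, 1)^k`. -/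
def cell (z : Fin k → ℤ) : Set (Fin k → ℝ) := {x | (fun l => ⌊x l⌋) = z}

/-- The number of points that a configuration has in the cell `z`, with the junk value `0` when
the recorded number is `⊤`. -/
def count (x : CellConfig k) (z : Fin k → ℤ) : ℕ := (x z).1.toNat

/-- The `i`-th recorded position in the cell `z`, which is occupied if `i < count x z`. -/
def point (x : CellConfig k) (z : Fin k → ℤ) (i : ℕ) : Fin k → ℝ := cellMap z ((x z).2 i)

/-- The counting measure of the occupied points of a configuration. -/
def toMeasure (x : CellConfig k) : Measure (Fin k → ℝ) :=
  Measure.sum fun z => ∑ i ∈ Finset.range (count x z), Measure.dirac (point x z i)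

@[fun_prop]
lemma continuous_cellMap (z : Fin k → ℤ) : Continuous (cellMap z) := by
  unfold cellMap
  fun_prop

lemma measurable_cellCoord : Measurable (cellCoord (k := k)) :=
  measurable_pi_lambda _ fun l => (measurable_pi_apply l).fract.subtype_mk

lemma cellMap_cellCoord {z : Fin k → ℤ} {x : Fin k → ℝ} (hx : x ∈ cell z) :
    cellMap z (cellCoord x) = x := by
  obtain rfl : (fun l => ⌊x l⌋) = z := hx
  exact funext fun l => Int.floor_add_fract (x l)

lemma measurableSet_cell (z : Fin k → ℤ) : MeasurableSet (cell z) :=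
  measurable_pi_lambda _ (fun l => (measurable_pi_apply l).floor) (measurableSet_singleton z)

lemma isCompact_range_cellMap (z : Fin k → ℤ) : IsCompact (Set.range (cellMap z)) :=
  isCompact_range (continuous_cellMap z)

lemma isBounded_cell (z : Fin k → ℤ) : Bornology.IsBounded (cell z) :=
  (isCompact_range_cellMap z).isBounded.subset fun x hx => ⟨cellCoord x, cellMap_cellCoord hx⟩

lemma finite_setOf_range_cellMap_inter_nonempty {A : Set (Fin k → ℝ)}
    (hA : Bornology.IsBounded A) : {z | (Set.range (cellMap z) ∩ A).Nonempty}.Finite := by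
  obtain ⟨R, hR⟩ := hA.exists_norm_le
  refine (Set.finite_Icc (fun _ => ⌈-R - 1⌉) (fun _ => ⌊R⌋)).subset ?_
  rintro z ⟨-, ⟨u, rfl⟩, hu⟩
  have abs_coord_le (l : Fin k) : |(z l : ℝ) + u l| ≤ R := (norm_le_pi_norm _ l).trans (hR _ hu)
  refine ⟨fun l => Int.ceil_le.2 ?_, fun l => Int.le_floor.2 ?_⟩
  · linarith [neg_le_of_abs_le (abs_coord_le l), (u l).2.2]
  · linarith [le_of_abs_le (abs_coord_le l), (u l).2.1]

lemma continuous_point (z : Fin k → ℤ) (i : ℕ) :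
    Continuous fun x : CellConfig k => point x z i := by
  unfold point
  fun_prop

lemma measurable_count (z : Fin k → ℤ) : Measurable fun x : CellConfig k => count x z :=
  (measurable_of_countable ENat.toNat).comp (measurable_pi_apply z).fst

lemma measurable_toMeasure : Measurable (toMeasure (k := k)) := by
  refine Measure.measurable_of_measurable_coe _ fun A hA => ?_
  simp only [toMeasure, Measure.sum_apply _ hA]
  exact Measurable.tsum fun z => (Measure.measurable_coe hA).comp
    (measurable_sum_range_dirac (measurable_count z) fun i => (continuous_point z i).measurable)

open Classical in
lemma toMeasure_apply_eq_sum_card (x : CellConfig k) {A : Set (Fin k → ℝ)} (hA : MeasurableSet A)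
    {Z : Finset (Fin k → ℤ)} (hZ : ∀ z, (Set.range (cellMap z) ∩ A).Nonempty → z ∈ Z) :
    toMeasure x A =
      (∑ z ∈ Z, ((Finset.range (count x z)).filter fun i => point x z i ∈ A).card : ℕ) := by
  rw [toMeasure, Measure.sum_apply _ hA, Nat.cast_sum, tsum_eq_sum (s := Z) fun z hz => ?_]
  · exact Finset.sum_congr rfl fun z _ => sum_dirac_apply_eq_card hA _ _
  · rw [sum_dirac_apply_eq_card hA, Finset.filter_false_of_mem, Finset.card_empty, Nat.cast_zero]
    exact fun i _ hi => hz (hZ z ⟨point x z i, ⟨_, rfl⟩, hi⟩)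

lemma isPointProcess_toMeasure : IsPointProcess k (toMeasure (k := k)) := by
  refine ⟨fun A hA => (Measure.measurable_coe hA).comp measurable_toMeasure, fun x A hA hAb => ?_⟩
  exact ⟨_, toMeasure_apply_eq_sum_card x hA
    (Z := (finite_setOf_range_cellMap_inter_nonempty hAb).toFinset) fun z hz => by simpa using hz⟩

lemma eventually_count_eq {x : CellConfig k} {z : Fin k → ℤ} (hz : (x z).1 ≠ ⊤) :
    ∀ᶠ y in 𝓝 x, count y z = count x z := by
  have : Tendsto (fun y : CellConfig k => (y z).1) (𝓝 x) (pure (x z).1) := by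
    rw [← ENat.nhds_eq_pure hz]
    exact Continuous.tendsto (by fun_prop) x
  filter_upwards [tendsto_pure.1 this] with y hy
  rw [count, hy, count]

lemma eventually_toMeasure_apply_eq {x : CellConfig k} (hx : ∀ z, (x z).1 ≠ ⊤)
    {A : Set (Fin k → ℝ)} (hA : MeasurableSet A) (hAb : Bornology.IsBounded A)
    (hfr : ∀ z i, point x z i ∉ frontier A) :
    ∀ᶠ y in 𝓝 x, toMeasure y A = toMeasure x A := by
  classical
  set Z := (finite_setOf_range_cellMap_inter_nonempty hAb).toFinset
  have hZ : ∀ z, (Set.range (cellMap z) ∩ A).Nonempty → z ∈ Z := fun z hz => by simpa [Z] using hz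
  have points_stable : ∀ᶠ y in 𝓝 x, ∀ z ∈ Z, ∀ i ∈ Finset.range (count x z),
      (point y z i ∈ A ↔ point x z i ∈ A) :=
    (Finset.eventually_all Z).2 fun z _ => (Finset.eventually_all _).2 fun i _ =>
      (continuous_point z i).continuousAt.eventually
        (eventually_mem_iff_of_notMem_frontier (hfr z i))
  have counts_stable : ∀ᶠ y in 𝓝 x, ∀ z ∈ Z, count y z = count x z :=
    (Finset.eventually_all Z).2 fun z _ => eventually_count_eq (hx z)
  filter_upwards [counts_stable, points_stable] with y hcount hpoint
  rw [toMeasure_apply_eq_sum_card y hA hZ, toMeasure_apply_eq_sum_card x hA hZ]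
  refine congrArg _ (Finset.sum_congr rfl fun z hz => ?_)
  rw [hcount z hz, Finset.filter_congr (hpoint z hz)]

lemma toENNReal_fst_le_toMeasure {x : CellConfig k} {z : Fin k → ℤ} (hz : (x z).1 ≠ ⊤) :
    ((x z).1 : ℝ≥0∞) ≤ toMeasure x (Set.range (cellMap z)) := by
  classical
  have hrange : MeasurableSet (Set.range (cellMap z)) := (isCompact_range_cellMap z).measurableSet
  calc ((x z).1 : ℝ≥0∞) = count x z := by
        rw [← ENat.natCast_toNat hz, ENat.toENNReal_coe, count]
    _ = (∑ i ∈ Finset.range (count x z), Measure.dirac (point x z i)) (Set.range (cellMap z)) := by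
        rw [sum_dirac_apply_eq_card hrange, Finset.filter_true_of_mem fun i _ => ⟨_, rfl⟩,
          Finset.card_range]
    _ ≤ toMeasure x (Set.range (cellMap z)) := Measure.le_sum
        (fun z => ∑ i ∈ Finset.range (count x z), Measure.dirac (point x z i)) z _

lemma measurable_fst_apply (z : Fin k → ℤ) :
    Measurable fun x : CellConfig k => ((x z).1 : ℝ≥0∞) :=
  (measurable_of_countable _).comp (measurable_pi_apply z).fst

lemma sum_restrict_cell (μ : Measure (Fin k → ℝ)) :
    Measure.sum (fun z => μ.restrict (cell z)) = μ := by
  have pairwise_disjoint : Pairwise (Function.onFun Disjoint (cell (k := k))) := fun z w hzw =>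
    Set.disjoint_left.2 fun x (hz : _ = z) (hw : _ = w) => hzw (hz.symm.trans hw)
  have iUnion_eq_univ : ⋃ z, cell (k := k) z = Set.univ :=
    Set.iUnion_eq_univ_iff.2 fun x => ⟨fun l => ⌊x l⌋, rfl⟩
  rw [← Measure.restrict_iUnion pairwise_disjoint measurableSet_cell,
    iUnion_eq_univ, Measure.restrict_univ]

lemma map_cellMap_map_cellCoord (μ : Measure (Fin k → ℝ)) (z : Fin k → ℤ) :
    ((μ.restrict (cell z)).map cellCoord).map (cellMap z) = μ.restrict (cell z) := by
  rw [Measure.map_map (continuous_cellMap z).measurable measurable_cellCoord,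
    Measure.map_congr (g := id), Measure.map_id]
  filter_upwards [ae_restrict_mem (measurableSet_cell z)] with x hx
  exact cellMap_cellCoord hx

lemma exists_measurable_toMeasure_eq {Ω : Type*} [MeasurableSpace Ω]
    {M : Ω → Measure (Fin k → ℝ)} (hM : IsPointProcess k M) :
    ∃ F : Ω → CellConfig k, Measurable F ∧ (∀ ω, toMeasure (F ω) = M ω) ∧
      ∀ ω z, (F ω z).1 ≠ ⊤ := by
  let μ (z : Fin k → ℤ) (ω : Ω) : Measure (Fin k → unitInterval) :=
    ((M ω).restrict (cell z)).map cellCoord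
  have μ_apply (z ω) {s : Set (Fin k → unitInterval)} (hs : MeasurableSet s) :
      μ z ω s = M ω (cellCoord ⁻¹' s ∩ cell z) := by
    rw [Measure.map_apply measurable_cellCoord hs,
      Measure.restrict_apply (measurable_cellCoord hs)]
  have measurable_μ (z) : Measurable (μ z) := Measure.measurable_of_measurable_coe _ fun s hs => by
    simp only [μ_apply z _ hs]
    exact hM.1 _ ((measurable_cellCoord hs).inter (measurableSet_cell z))
  have μ_integer (z ω s) (hs : MeasurableSet s) : ∃ m : ℕ, μ z ω s = m := by
    rw [μ_apply z ω hs]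
    exact hM.2 ω _ ((measurable_cellCoord hs).inter (measurableSet_cell z))
      ((isBounded_cell z).subset Set.inter_subset_right)
  choose n g hn hg hμg using fun z => exists_measurable_enumeration (measurable_μ z) (μ_integer z)
  refine ⟨fun ω z => (n z ω, fun i => g z i ω), ?_, fun ω => ?_, fun ω z => ENat.natCast_ne_top _⟩
  · exact measurable_pi_lambda _ fun z => ((measurable_of_countable Nat.cast).comp (hn z)).prodMk
      (measurable_pi_lambda _ fun i => hg z i)
  · calc toMeasure (fun z => (↑(n z ω), fun i => g z i ω))
        = Measure.sum fun z => (μ z ω).map (cellMap z) := by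
          unfold toMeasure
          congr 1 with z : 1
          rw [hμg, Measure.map_finset_sum (continuous_cellMap z).aemeasurable]
          simp only [Measure.map_dirac' (continuous_cellMap z).measurable, count, point,
            ENat.toNat_natCast]
      _ = Measure.sum fun z => (M ω).restrict (cell z) := by
          simp only [μ, map_cellMap_map_cellCoord]
      _ = M ω := sum_restrict_cell (M ω)

lemma exists_identDistrib_toMeasure {Ω : Type*} [MeasurableSpace Ω] (P : Measure Ω)
    [IsProbabilityMeasure P] {M : Ω → Measure (Fin k → ℝ)} (hM : IsPointProcess k M) :
    ∃ ν : ProbabilityMeasure (CellConfig k),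
      ProbabilityTheory.IdentDistrib toMeasure M (ν : Measure (CellConfig k)) P ∧
        ∀ᵐ x ∂(ν : Measure (CellConfig k)), ∀ z, (x z).1 ≠ ⊤ := by
  obtain ⟨F, hF, hFM, hfin⟩ := exists_measurable_toMeasure_eq hM
  refine ⟨⟨P.map F, Measure.isProbabilityMeasure_map hF.aemeasurable⟩, ?_, ?_⟩
  · refine ⟨measurable_toMeasure.aemeasurable,
      (Measure.measurable_of_measurable_coe M hM.1).aemeasurable, ?_⟩
    change (P.map F).map toMeasure = P.map M
    rw [Measure.map_map measurable_toMeasure hF, ← funext hFM, Function.comp_def]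
  · have : MeasurableSet {x : CellConfig k | ∀ z, (x z).1 ≠ ⊤} := by measurability
    exact (ae_map_iff hF.aemeasurable this).2 (.of_forall hfin)

lemma lintegral_prod_descFactE_toMeasure_eq {Ω : Type*} [MeasurableSpace Ω] {P : Measure Ω}
    {M : Ω → Measure (Fin k → ℝ)} {ν : Measure (CellConfig k)}
    (h : ProbabilityTheory.IdentDistrib toMeasure M ν P) {J : Type*} [Fintype J]
    {A : J → Set (Fin k → ℝ)} (hA : ∀ j, MeasurableSet (A j)) (n : J → ℕ) :
    ∫⁻ x, ∏ j, descFactE (toMeasure x (A j)) (n j) ∂ν =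
      ∫⁻ ω, ∏ j, descFactE (M ω (A j)) (n j) ∂P :=
  ((h.comp (measurable_prod_descFactE hA n)).lintegral_eq :)

section WeakLimit

variable {ι : Type*} {L : Filter ι} {ν : ι → ProbabilityMeasure (CellConfig k)}
  {ν' : ProbabilityMeasure (CellConfig k)}

/-- The numbers of points in every bounded set have moments of all orders that are eventually
bounded along `L`. -/
def HasBoundedMoments (L : Filter ι) (ν : ι → ProbabilityMeasure (CellConfig k)) : Prop :=
  ∀ B, Bornology.IsBounded B → ∀ p : ℕ, ∃ S ≠ ⊤,
    ∀ᶠ i in L, ∫⁻ x, toMeasure x B ^ p ∂(ν i : Measure (CellConfig k)) ≤ S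

lemma HasBoundedMoments.comp (hmom : HasBoundedMoments L ν) {κ : Type*} {L' : Filter κ}
    {φ : κ → ι} (hφ : Tendsto φ L' L) : HasBoundedMoments L' (ν ∘ φ) := fun B hB p =>
  let ⟨S, hS, hbound⟩ := hmom B hB p
  ⟨S, hS, hφ.eventually hbound⟩

lemma HasBoundedMoments.exists_lintegral_fst_pow_le (hmom : HasBoundedMoments L ν)
    (hfin : ∀ i, ∀ᵐ x ∂(ν i : Measure (CellConfig k)), ∀ z, (x z).1 ≠ ⊤) (z : Fin k → ℤ) (p : ℕ) :
    ∃ S ≠ ⊤, ∀ᶠ i in L, ∫⁻ x, ((x z).1 : ℝ≥0∞) ^ p ∂(ν i : Measure (CellConfig k)) ≤ S := by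
  obtain ⟨S, hS, hbound⟩ := hmom _ (isCompact_range_cellMap z).isBounded p
  refine ⟨S, hS, hbound.mono fun i hi => (lintegral_mono_ae ?_).trans hi⟩
  filter_upwards [hfin i] with x hx
  exact pow_le_pow_left' (toENNReal_fst_le_toMeasure (hx z)) p

lemma HasBoundedMoments.ae_fst_ne_top [L.NeBot] [L.IsCountablyGenerated]
    (hmom : HasBoundedMoments L ν)
    (hfin : ∀ i, ∀ᵐ x ∂(ν i : Measure (CellConfig k)), ∀ z, (x z).1 ≠ ⊤)
    (hlim : Tendsto ν L (𝓝 ν')) :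
    ∀ᵐ x ∂(ν' : Measure (CellConfig k)), ∀ z, (x z).1 ≠ ⊤ := by
  refine ae_all_iff.2 fun z => ?_
  obtain ⟨S₁, hS₁, hbound₁⟩ := hmom.exists_lintegral_fst_pow_le hfin z 1
  obtain ⟨S₂, hS₂, hbound₂⟩ := hmom.exists_lintegral_fst_pow_le hfin z 2
  have continuous_fst : Continuous fun x : CellConfig k => ((x z).1 : ℝ≥0∞) :=
    ENat.continuous_toENNReal.comp (by fun_prop)
  have mean_tendsto := tendsto_lintegral_of_lintegral_rpow_le hlim (measurable_fst_apply z)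
    (.of_forall fun _ => continuous_fst.continuousAt) one_lt_two hS₂ (by simpa using hbound₂)
  have mean_ne_top : ∫⁻ x, ((x z).1 : ℝ≥0∞) ∂(ν' : Measure (CellConfig k)) ≠ ⊤ :=
    ne_top_of_le_ne_top hS₁ (le_of_tendsto mean_tendsto (by simpa using hbound₁))
  filter_upwards [ae_lt_top (measurable_fst_apply z) mean_ne_top] with x hx
  simpa using hx.ne

theorem HasBoundedMoments.tendsto_lintegral_prod_descFactE [L.NeBot] [L.IsCountablyGenerated]
    (hmom : HasBoundedMoments L ν)
    (hfin : ∀ i, ∀ᵐ x ∂(ν i : Measure (CellConfig k)), ∀ z, (x z).1 ≠ ⊤)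
    (hlim : Tendsto ν L (𝓝 ν')) {J : Type*} [Fintype J] {A : J → Set (Fin k → ℝ)}
    (hA : ∀ j, MeasurableSet (A j)) (hAb : ∀ j, Bornology.IsBounded (A j))
    (hfr : ∀ᵐ x ∂(ν' : Measure (CellConfig k)), ∀ j z i, point x z i ∉ frontier (A j))
    (n : J → ℕ) :
    Tendsto (fun i => ∫⁻ x, ∏ j, descFactE (toMeasure x (A j)) (n j) ∂(ν i).toMeasure)
      L (𝓝 (∫⁻ x, ∏ j, descFactE (toMeasure x (A j)) (n j) ∂(ν' : Measure (CellConfig k)))) := by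
  obtain ⟨S, hS, hbound⟩ := hmom _ (Bornology.isBounded_iUnion.2 hAb) ((∑ j, n j) * 2)
  refine tendsto_lintegral_of_lintegral_rpow_le hlim
    ((measurable_prod_descFactE hA n).comp measurable_toMeasure) ?_ one_lt_two hS ?_
  · filter_upwards [hmom.ae_fst_ne_top hfin hlim, hfr] with x hx hxfr
    refine (continuousAt_const (y := ∏ j, descFactE (toMeasure x (A j)) (n j))).congr ?_
    filter_upwards [eventually_all.2 fun j =>
      eventually_toMeasure_apply_eq hx (hA j) (hAb j) (hxfr j)] with y hy
    simp only [hy]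
  · filter_upwards [hbound] with i hi
    refine (lintegral_mono fun x => ?_).trans hi
    rw [ENNReal.rpow_two, pow_mul]
    exact pow_le_pow_left' (prod_descFactE_le_pow _ A n) 2

end WeakLimit

/-- The values that are attained with positive probability by a coordinate of one of the points
of a random configuration with law `μ`. -/
def fixedCoords (μ : Measure (CellConfig k)) : Set ℝ :=
  {t | ∃ z i l, 0 < μ {x | point x z i l = t}}

lemma countable_fixedCoords (μ : Measure (CellConfig k)) [SFinite μ] :
    (fixedCoords μ).Countable := by
  simp only [fixedCoords, Set.ofPred_exists]
  exact Set.countable_iUnion fun z => Set.countable_iUnion fun i => Set.countable_iUnion fun l =>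
    Measure.countable_meas_level_set_pos
      ((measurable_pi_apply l).comp (continuous_point z i).measurable)

end CellConfig

lemma exists_eq_of_mem_frontier_pi_Ioc {ι α : Type*} [Finite ι] [LinearOrder α]
    [TopologicalSpace α] [OrderClosedTopology α] {a b x : ι → α}
    (hx : x ∈ frontier {x | ∀ i, x i ∈ Set.Ioc (a i) (b i)}) : ∃ i, x i = a i ∨ x i = b i := by
  by_contra! hne
  have Ioc_subset_Icc : {x | ∀ i, x i ∈ Set.Ioc (a i) (b i)} ⊆
      Set.univ.pi fun i => Set.Icc (a i) (b i) := fun y hy i _ => Set.Ioc_subset_Icc_self (hy i)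
  have Ioo_subset_Ioc : (Set.univ.pi fun i => Set.Ioo (a i) (b i)) ⊆
      {x | ∀ i, x i ∈ Set.Ioc (a i) (b i)} := fun y hy i => Set.Ioo_subset_Ioc_self (hy i trivial)
  have mem_Icc : x ∈ Set.univ.pi fun i => Set.Icc (a i) (b i) :=
    closure_minimal Ioc_subset_Icc (isClosed_set_pi fun _ _ => isClosed_Icc) hx.1
  have mem_Ioo : x ∈ Set.univ.pi fun i => Set.Ioo (a i) (b i) := fun i hi =>
    ⟨(mem_Icc i hi).1.lt_of_ne' (hne i).1, (mem_Icc i hi).2.lt_of_ne (hne i).2⟩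
  exact hx.2 (interior_maximal Ioo_subset_Ioc
    (isOpen_set_pi Set.finite_univ fun _ _ => isOpen_Ioo) mem_Ioo)

namespace IsRectAvoiding

variable {k : ℕ} {T T' : Set ℝ} {A : Set (Fin k → ℝ)}

lemma mono (hTT' : T ⊆ T') (hA : IsRectAvoiding k T' A) : IsRectAvoiding k T A := by
  obtain ⟨a, b, ha, hb, rfl⟩ := hA
  exact ⟨a, b, fun i h => ha i (hTT' h), fun i h => hb i (hTT' h), rfl⟩

lemma measurableSet (hA : IsRectAvoiding k T A) : MeasurableSet A := by
  obtain ⟨a, b, -, -, rfl⟩ := hA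
  simp only [Set.ofPred_forall]
  exact MeasurableSet.iInter fun i => measurable_pi_apply i measurableSet_Ioc

lemma isBounded (hA : IsRectAvoiding k T A) : Bornology.IsBounded A := by
  obtain ⟨a, b, -, -, rfl⟩ := hA
  exact (Metric.isBounded_Icc a b).subset fun x hx => ⟨fun i => (hx i).1.le, fun i => (hx i).2⟩

lemma exists_superset (hT : T.Countable) {B : Set (Fin k → ℝ)} (hB : Bornology.IsBounded B) :
    ∃ D, IsRectAvoiding k T D ∧ B ⊆ D := by
  obtain ⟨R, hR⟩ := hB.exists_norm_le
  obtain ⟨a, ha, haR⟩ := (hT.dense_compl ℝ).exists_lt (-R)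
  obtain ⟨b, hb, hbR⟩ := (hT.dense_compl ℝ).exists_gt R
  refine ⟨_, ⟨fun _ => a, fun _ => b, fun _ => ha, fun _ => hb, rfl⟩, fun x hx i => ?_⟩
  have abs_le : |x i| ≤ R := (norm_le_pi_norm x i).trans (hR x hx)
  exact ⟨haR.trans_le (neg_le_of_abs_le abs_le), (le_of_abs_le abs_le).trans hbR.le⟩

lemma ae_notMem_frontier {X : Type*} [MeasurableSpace X] {μ : Measure X} {Y : X → Fin k → ℝ}
    (hY : ∀ i, ∀ t ∉ T, ∀ᵐ x ∂μ, Y x i ≠ t) (hA : IsRectAvoiding k T A) :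
    ∀ᵐ x ∂μ, Y x ∉ frontier A := by
  obtain ⟨a, b, ha, hb, rfl⟩ := hA
  filter_upwards [ae_all_iff.2 fun i => hY i _ (ha i), ae_all_iff.2 fun i => hY i _ (hb i)]
    with x hxa hxb hx
  obtain ⟨i, hi | hi⟩ := exists_eq_of_mem_frontier_pi_Ioc hx
  exacts [hxa i hi, hxb i hi]

end IsRectAvoiding

namespace CellConfig

variable {k : ℕ} {T : Set ℝ}

lemma ae_point_notMem_frontier {μ : Measure (CellConfig k)} (hT : fixedCoords μ ⊆ T)
    {J : Type*} [Countable J] {A : J → Set (Fin k → ℝ)} (hA : ∀ j, IsRectAvoiding k T (A j)) :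
    ∀ᵐ x ∂μ, ∀ j z i, point x z i ∉ frontier (A j) :=
  ae_all_iff.2 fun j => ae_all_iff.2 fun z => ae_all_iff.2 fun i =>
    (hA j).ae_notMem_frontier fun l t ht => by
      simpa [ae_iff] using fun h => ht (hT ⟨z, i, l, pos_iff_ne_zero.2 h⟩)

lemma hasBoundedMoments_of_tendsto_descFactE {ι : Type*} {L : Filter ι}
    {ν : ι → ProbabilityMeasure (CellConfig k)} (hT : T.Countable)
    (h : ∀ A, IsRectAvoiding k T A → ∀ p : ℕ, 0 < p → ∃ c ≠ ⊤, Tendsto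
      (fun i => ∫⁻ x, descFactE (toMeasure x A) p ∂(ν i : Measure (CellConfig k))) L (𝓝 c)) :
    HasBoundedMoments L ν := by
  intro B hB p
  rcases p.eq_zero_or_pos with rfl | hp
  · exact ⟨1, ENNReal.one_ne_top, by simp⟩
  · obtain ⟨D, hD, hBD⟩ := IsRectAvoiding.exists_superset hT hB
    obtain ⟨c, hc, hlim⟩ := h D hD p hp
    obtain ⟨S, hS, hbound⟩ := exists_eventually_lintegral_pow_le
      (fun i => (ν i : Measure (CellConfig k))) (fun _ x => toMeasure x D) p hc hlim
    refine ⟨S, hS, hbound.mono fun i hi => (lintegral_mono fun x => ?_).trans hi⟩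
    exact pow_le_pow_left' (measure_mono hBD) p

end CellConfig

/-- Proposition 2.4 (`PPConv`), first part: if the joint factorial moments of a
sequence of point processes converge on disjoint rectangles in `𝓘_T`, then there
is a point process realizing the limiting factorial moments on `𝓘_{T^∞}` for some
countable `T^∞ ⊇ T`. -/
theorem stmt4 (k : ℕ) (T : Set ℝ) (hT : T.Countable)
    (Ω : ℕ → Type) [∀ N, MeasurableSpace (Ω N)] (P : ∀ N, Measure (Ω N))
    (hP : ∀ N, IsProbabilityMeasure (P N))
    (M : ∀ N, Ω N → Measure (Fin k → ℝ)) (hM : ∀ N, IsPointProcess k (M N))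
    (C : (m : ℕ) → (Fin m → ℕ) → (Fin m → Set (Fin k → ℝ)) → ℝ≥0∞)
    (hC : ∀ (m : ℕ) (n : Fin m → ℕ) (A : Fin m → Set (Fin k → ℝ)),
      0 < m → (∀ j, 0 < n j) → (∀ j, IsRectAvoiding k T (A j)) →
      (∀ i j, i ≠ j → Disjoint (A i) (A j)) →
      C m n A ≠ ⊤ ∧
      Tendsto (fun N => ∫⁻ ω, ∏ j, descFactE (M N ω (A j)) (n j) ∂(P N))
        atTop (𝓝 (C m n A))) :
    ∃ (Ω' : Type) (_ : MeasurableSpace Ω') (P' : Measure Ω'),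
      IsProbabilityMeasure P' ∧
      ∃ (M' : Ω' → Measure (Fin k → ℝ)) (T' : Set ℝ),
        IsPointProcess k M' ∧ T'.Countable ∧ T ⊆ T' ∧
        ∀ (m : ℕ) (n : Fin m → ℕ) (A : Fin m → Set (Fin k → ℝ)),
          0 < m → (∀ j, 0 < n j) → (∀ j, IsRectAvoiding k T' (A j)) →
          (∀ i j, i ≠ j → Disjoint (A i) (A j)) →
          (∫⁻ ω, ∏ j, descFactE (M' ω (A j)) (n j) ∂P') = C m n A := by
  choose ν hνM hfin using fun N =>
    haveI := hP N; CellConfig.exists_identDistrib_toMeasure (P N) (hM N)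
  have moments_tendsto (m n A) (hm : 0 < m) (hn : ∀ j, 0 < n j)
      (hA : ∀ j, IsRectAvoiding k T (A j)) (hdisj : ∀ i j, i ≠ j → Disjoint (A i) (A j)) :
      Tendsto (fun N => ∫⁻ x, ∏ j, descFactE (CellConfig.toMeasure x (A j)) (n j) ∂(ν N).toMeasure)
        atTop (𝓝 (C m n A)) := by
    simpa only [CellConfig.lintegral_prod_descFactE_toMeasure_eq (hνM _)
      fun j => (hA j).measurableSet] using (hC m n A hm hn hA hdisj).2
  have bounded_moments : CellConfig.HasBoundedMoments atTop ν :=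
    CellConfig.hasBoundedMoments_of_tendsto_descFactE hT fun A hA p hp =>
      ⟨C 1 (fun _ => p) fun _ => A,
        (hC 1 _ _ one_pos (fun _ => hp) (fun _ => hA) (by simp)).1, by
        simpa using moments_tendsto 1 _ _ one_pos (fun _ => hp) (fun _ => hA) (by simp)⟩
  obtain ⟨ν', φ, hφ, hlim⟩ := CompactSpace.tendsto_subseq ν
  refine ⟨CellConfig k, inferInstance, ν', inferInstance, CellConfig.toMeasure,
    T ∪ CellConfig.fixedCoords (ν' : Measure (CellConfig k)), CellConfig.isPointProcess_toMeasure,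
    hT.union (CellConfig.countable_fixedCoords _), Set.subset_union_left, ?_⟩
  intro m n A hm hn hA hdisj
  exact tendsto_nhds_unique
    ((bounded_moments.comp hφ.tendsto_atTop).tendsto_lintegral_prod_descFactE
      (fun i => hfin (φ i)) hlim (fun j => (hA j).measurableSet) (fun j => (hA j).isBounded)
      (CellConfig.ae_point_notMem_frontier Set.subset_union_right hA) n)
    ((moments_tendsto m n A hm hn (fun j => (hA j).mono Set.subset_union_left) hdisj).comp
      hφ.tendsto_atTop)
end
end

section
/- Let T ⊂ ℝ be countable and let 𝓘_T be as in the context. Let M′ and M″ be point processes on ℝ^k such that: (i) for every m ≥ 1, all n₁,…,n_m ∈ ℕ, and all pairwise disjoint A₁,…,A_m ∈ 𝓘_T, E[∏_{i=1}^m M′(A_i)!/(M′(A_i)−n_i)!] = E[∏_{i=1}^m M″(A_i)!/(M″(A_i)−n_i)!]; and (ii) for every B ∈ 𝓘_T there exists ε > 0 such that ∑_{n=1}^∞ (εⁿ/n!)·E[M′(B)!/(M′(B)−n)!] < ∞. Then M′ and M″ have the same distribution. -/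
open MeasureTheory
open scoped ENNReal

noncomputable section

/-
By the binomial theorem, `E ∏ j, (1 + z j) ^ N j = ∑' r, (∏ j, z j ^ r j / (r j)!) * E ∏ j,
(N j)! / (N j - r j)!` in `[0, ∞]` for `z ≥ 0`, so joint factorial moments determine the joint
generating function of the counts on finitely many disjoint rectangles. Choosing weights `t j > 0`
for which `n ↦ ∑ j, t j * n j` is injective on `ℕ`-vectors, one finds that the moment generating
function of the real variable `∑ j, t j * N j` is determined on an interval `(0, δ)`, where the
growth condition makes it finite; by analytic continuation this fixes the characteristic function
of `∑ j, t j * N j`, hence the joint law of the counts.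

A finite family of overlapping rectangles is handled by cutting space along the finite grid spanned
by their corners. Finally, the rectangles form a countably spanning π-system generating the Borel
sets as soon as the admissible corner coordinates are dense, and the law of a random measure which
is finite on such a π-system is determined by its joint laws there.
-/

open Filter Topology ProbabilityTheory

section MomentGeneratingFunction

variable {Ω₁ Ω₂ : Type*} [MeasurableSpace Ω₁] [MeasurableSpace Ω₂]
  {P₁ : Measure Ω₁} {P₂ : Measure Ω₂} {X₁ : Ω₁ → ℝ} {X₂ : Ω₂ → ℝ}

lemma eqOn_complexMGF_of_mgf_eventuallyEq {t : ℝ}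
    (ht₁ : t ∈ interior (integrableExpSet X₁ P₁)) (ht₂ : t ∈ interior (integrableExpSet X₂ P₂))
    (h : mgf X₁ P₁ =ᶠ[𝓝 t] mgf X₂ P₂) :
    Set.EqOn (complexMGF X₁ P₁) (complexMGF X₂ P₂)
      {z | z.re ∈ interior (integrableExpSet X₁ P₁) ∩ interior (integrableExpSet X₂ P₂)} := by
  refine AnalyticOnNhd.eqOn_of_preconnected_of_frequently_eq
    (analyticOnNhd_complexMGF.mono fun _ hz => hz.1)
    (analyticOnNhd_complexMGF.mono fun _ hz => hz.2)
    ((convex_integrableExpSet.interior.inter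
      convex_integrableExpSet.interior).linear_preimage Complex.reLm).isPreconnected
    (z₀ := (t : ℂ)) ⟨ht₁, ht₂⟩ ?_
  have h_ofReal : Tendsto Complex.ofReal (𝓝[≠] t) (𝓝[≠] (t : ℂ)) :=
    tendsto_nhdsWithin_iff.2 ⟨(Complex.continuous_ofReal.tendsto t).mono_left nhdsWithin_le_nhds,
      by filter_upwards [self_mem_nhdsWithin] with x hx; simpa using hx⟩
  refine h_ofReal.frequently (eventually_nhdsWithin_of_eventually_nhds ?_).frequently
  filter_upwards [h] with x hx
  rw [complexMGF_ofReal, complexMGF_ofReal, hx]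

theorem map_eq_of_mgf_eventuallyEq [IsFiniteMeasure P₁] [IsFiniteMeasure P₂]
    (hX₁ : AEMeasurable X₁ P₁) (hX₂ : AEMeasurable X₂ P₂)
    (h₁ : 0 ∈ interior (integrableExpSet X₁ P₁)) (h₂ : 0 ∈ interior (integrableExpSet X₂ P₂))
    {t : ℝ} (ht₁ : t ∈ interior (integrableExpSet X₁ P₁))
    (ht₂ : t ∈ interior (integrableExpSet X₂ P₂)) (h : mgf X₁ P₁ =ᶠ[𝓝 t] mgf X₂ P₂) :
    P₁.map X₁ = P₂.map X₂ := by
  refine Measure.ext_of_charFun (funext fun u => ?_)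
  rw [← complexMGF_mul_I hX₁, ← complexMGF_mul_I hX₂]
  exact eqOn_complexMGF_of_mgf_eventuallyEq ht₁ ht₂ h (by simpa using ⟨h₁, h₂⟩)

lemma Iio_subset_interior_integrableExpSet (hX : AEMeasurable X₁ P₁)
    (hX_nonneg : 0 ≤ᵐ[P₁] X₁) {δ : ℝ} (hδ : δ ∈ integrableExpSet X₁ P₁) :
    Set.Iio δ ⊆ interior (integrableExpSet X₁ P₁) := by
  refine interior_maximal (fun s hs => ?_) isOpen_Iio
  refine Integrable.mono' hδ (by fun_prop) ?_
  filter_upwards [hX_nonneg] with ω hω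
  rw [Real.norm_eq_abs, Real.abs_exp]
  exact Real.exp_le_exp.2 (mul_le_mul_of_nonneg_right (le_of_lt hs) hω)

theorem map_eq_of_lintegral_exp_mul_eq [IsFiniteMeasure P₁] [IsFiniteMeasure P₂]
    (hX₁ : AEMeasurable X₁ P₁) (hX₂ : AEMeasurable X₂ P₂)
    (hX₁_nonneg : 0 ≤ᵐ[P₁] X₁) (hX₂_nonneg : 0 ≤ᵐ[P₂] X₂) {δ : ℝ} (hδ : 0 < δ)
    (hfin : ∫⁻ ω, .ofReal (Real.exp (δ * X₁ ω)) ∂P₁ ≠ ⊤)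
    (h : ∀ s ∈ Set.Ioc 0 δ, ∫⁻ ω, .ofReal (Real.exp (s * X₁ ω)) ∂P₁ =
      ∫⁻ ω, .ofReal (Real.exp (s * X₂ ω)) ∂P₂) :
    P₁.map X₁ = P₂.map X₂ := by
  have hδ₁ : δ ∈ integrableExpSet X₁ P₁ :=
    (lintegral_ofReal_ne_top_iff_integrable (by fun_prop)
      (ae_of_all _ fun _ => (Real.exp_pos _).le)).1 hfin
  have hδ₂ : δ ∈ integrableExpSet X₂ P₂ :=
    (lintegral_ofReal_ne_top_iff_integrable (by fun_prop)
      (ae_of_all _ fun _ => (Real.exp_pos _).le)).1 (h δ ⟨hδ, le_rfl⟩ ▸ hfin)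
  have hint₁ := Iio_subset_interior_integrableExpSet hX₁ hX₁_nonneg hδ₁
  have hint₂ := Iio_subset_interior_integrableExpSet hX₂ hX₂_nonneg hδ₂
  refine map_eq_of_mgf_eventuallyEq hX₁ hX₂ (hint₁ hδ) (hint₂ hδ) (t := δ / 2)
    (hint₁ (half_lt_self hδ)) (hint₂ (half_lt_self hδ)) ?_
  filter_upwards [Ioo_mem_nhds (half_pos hδ) (half_lt_self hδ)] with s hs
  simp only [mgf]
  rw [integral_eq_lintegral_of_nonneg_ae (ae_of_all _ fun _ => (Real.exp_pos _).le) (by fun_prop),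
    integral_eq_lintegral_of_nonneg_ae (ae_of_all _ fun _ => (Real.exp_pos _).le) (by fun_prop),
    h s ⟨hs.1, hs.2.le⟩]

end MomentGeneratingFunction

section InjectiveEncoding

lemma injective_prod_prime_pow {ι : Type*} [Fintype ι] {p : ι → ℕ}
    (hp : ∀ j, (p j).Prime) (hp_inj : p.Injective) :
    Function.Injective fun n : ι → ℕ => ∏ j, p j ^ n j := by
  classical
  have h_fact (n : ι → ℕ) (i : ι) : (∏ j, p j ^ n j).factorization (p i) = n i := by
    rw [Nat.factorization_prod fun j _ => pow_ne_zero _ (hp j).ne_zero]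
    simp [Finsupp.finsetSum_apply, (hp _).factorization, Finsupp.single_apply, hp_inj.eq_iff]
  intro n n' h
  funext i
  rw [← h_fact n i, ← h_fact n' i]
  exact congrArg (fun m => m.factorization (p i)) h

lemma exists_pos_injective_sum_mul_natCast (ι : Type*) [Fintype ι] :
    ∃ t : ι → ℝ, (∀ j, 0 < t j) ∧ Function.Injective fun n : ι → ℕ => ∑ j, t j * (n j : ℝ) := by
  -- The logarithms of distinct primes are linearly independent over `ℚ`.
  let p : ι → ℕ := fun j => Nat.nth Nat.Prime (Fintype.equivFin ι j)
  have hp (j : ι) : (p j).Prime := Nat.prime_nth_prime _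
  have hp_inj : p.Injective := (Nat.nth_injective Nat.infinite_setOfPred_prime).comp
    (Fin.val_injective.comp (Fintype.equivFin ι).injective)
  have h_pos (n : ι → ℕ) : 0 < ∏ j, p j ^ n j := Finset.prod_pos fun j _ => pow_pos (hp j).pos _
  have h_log (n : ι → ℕ) :
      ∑ j, Real.log (p j) * (n j : ℝ) = Real.log ((∏ j, p j ^ n j : ℕ) : ℝ) := by
    push_cast
    rw [Real.log_prod fun j _ => pow_ne_zero _ (by exact_mod_cast (hp j).ne_zero)]
    simp [mul_comm]
  refine ⟨fun j => Real.log (p j), fun j => Real.log_pos (by exact_mod_cast (hp j).one_lt),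
    fun n n' h => injective_prod_prime_pow hp hp_inj ?_⟩
  simp only [h_log] at h
  exact_mod_cast Real.log_injOn_pos (Set.mem_Ioi.2 (by exact_mod_cast h_pos n))
    (Set.mem_Ioi.2 (by exact_mod_cast h_pos n')) h

end InjectiveEncoding

section FactorialMoments

lemma one_add_pow_eq_sum_descFactorial (z : ℝ≥0∞) (N : ℕ) :
    (1 + z) ^ N =
      ∑ r ∈ Finset.range (N + 1), z ^ r / (r.factorial : ℝ≥0∞) * (N.descFactorial r : ℝ≥0∞) := by
  rw [add_comm, add_pow]
  refine Finset.sum_congr rfl fun r _ => ?_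
  have hr : (r.factorial : ℝ≥0∞) ≠ 0 := by exact_mod_cast r.factorial_ne_zero
  rw [Nat.descFactorial_eq_factorial_mul_choose, one_pow, mul_one, Nat.cast_mul, ← mul_assoc,
    ENNReal.div_mul_cancel hr (ENNReal.natCast_ne_top _)]

lemma one_add_pow_eq_tsum_descFactorial (z : ℝ≥0∞) (N : ℕ) :
    (1 + z) ^ N = ∑' r : ℕ, z ^ r / (r.factorial : ℝ≥0∞) * (N.descFactorial r : ℝ≥0∞) := by
  rw [one_add_pow_eq_sum_descFactorial, tsum_eq_sum fun r hr => ?_]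
  simp [Nat.descFactorial_of_lt (by simpa using hr : N < r)]

lemma prod_one_add_pow_eq_tsum_descFactorial {ι : Type*} [Fintype ι] (z : ι → ℝ≥0∞) (N : ι → ℕ) :
    ∏ j, (1 + z j) ^ N j = ∑' r : ι → ℕ, (∏ j, z j ^ r j / ((r j).factorial : ℝ≥0∞)) *
      ∏ j, ((N j).descFactorial (r j) : ℝ≥0∞) := by
  classical
  simp only [one_add_pow_eq_sum_descFactorial, Finset.prod_univ_sum, ← Finset.prod_mul_distrib]
  refine (tsum_eq_sum fun r hr => ?_).symm
  obtain ⟨j, hj⟩ : ∃ j, N j < r j := by simpa [Fintype.mem_piFinset] using hr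
  exact Finset.prod_eq_zero (Finset.mem_univ j) (by simp [Nat.descFactorial_of_lt hj])

variable {ι : Type*} [Fintype ι] {Ω Ω₁ Ω₂ : Type*}
  [MeasurableSpace Ω] [MeasurableSpace Ω₁] [MeasurableSpace Ω₂]
  {P : Measure Ω} {P₁ : Measure Ω₁} {P₂ : Measure Ω₂}
  {N₁ : Ω₁ → ι → ℕ} {N₂ : Ω₂ → ι → ℕ}

lemma lintegral_prod_one_add_pow {N : Ω → ι → ℕ} (hN : Measurable N) (z : ι → ℝ≥0∞) :
    ∫⁻ ω, ∏ j, (1 + z j) ^ N ω j ∂P =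
      ∑' r : ι → ℕ, (∏ j, z j ^ r j / ((r j).factorial : ℝ≥0∞)) *
        ∫⁻ ω, ∏ j, ((N ω j).descFactorial (r j) : ℝ≥0∞) ∂P := by
  have h_meas (r : ι → ℕ) : Measurable fun ω => ∏ j, ((N ω j).descFactorial (r j) : ℝ≥0∞) :=
    (measurable_of_countable fun n : ι → ℕ => ∏ j, ((n j).descFactorial (r j) : ℝ≥0∞)).comp hN
  simp only [prod_one_add_pow_eq_tsum_descFactorial]
  rw [lintegral_tsum fun r => ((h_meas r).const_mul _).aemeasurable]
  simp only [lintegral_const_mul _ (h_meas _)]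

lemma lintegral_one_add_pow_ne_top [IsFiniteMeasure P] {N : Ω → ℕ} (hN : Measurable N) {ε : ℝ}
    (hε : 0 ≤ ε)
    (hsum : ∑' n : ℕ, ENNReal.ofReal (ε ^ (n + 1) / ((n + 1).factorial : ℝ)) *
      ∫⁻ ω, ((N ω).descFactorial (n + 1) : ℝ≥0∞) ∂P ≠ ⊤) :
    ∫⁻ ω, (1 + ENNReal.ofReal ε) ^ N ω ∂P ≠ ⊤ := by
  have h_meas (r : ℕ) : Measurable fun ω => ((N ω).descFactorial r : ℝ≥0∞) :=
    (measurable_of_countable fun n : ℕ => (n.descFactorial r : ℝ≥0∞)).comp hN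
  simp only [one_add_pow_eq_tsum_descFactorial]
  rw [lintegral_tsum fun r => ((h_meas r).const_mul _).aemeasurable,
    tsum_eq_zero_add' ENNReal.summable]
  refine ENNReal.add_ne_top.2 ⟨by simp, ?_⟩
  convert hsum using 3 with r
  rw [lintegral_const_mul _ (h_meas (r + 1)), ENNReal.ofReal_div_of_pos (by positivity),
    ENNReal.ofReal_pow hε, ENNReal.ofReal_natCast]

lemma prod_le_one_add_sum_pow_card (x : ι → ℝ≥0∞) :
    ∏ j, x j ≤ 1 + ∑ j, x j ^ Fintype.card ι := by
  cases isEmpty_or_nonempty ι with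
  | inl _ => simp
  | inr _ =>
    obtain ⟨i, -, hi⟩ := Finset.exists_max_image Finset.univ x Finset.univ_nonempty
    calc ∏ j, x j ≤ x i ^ Fintype.card ι := Finset.prod_le_pow_card _ _ _ hi
      _ ≤ ∑ j, x j ^ Fintype.card ι :=
        Finset.single_le_sum (f := fun j => x j ^ Fintype.card ι) (fun _ _ => zero_le)
          (Finset.mem_univ i)
      _ ≤ 1 + ∑ j, x j ^ Fintype.card ι := le_add_self

lemma ofReal_exp_mul_sum (s : ℝ) (t : ι → ℝ) (n : ι → ℕ) :
    ENNReal.ofReal (Real.exp (s * ∑ j, t j * (n j : ℝ))) =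
      ∏ j, ENNReal.ofReal (Real.exp (s * t j)) ^ n j := by
  rw [Finset.mul_sum, Real.exp_sum,
    ENNReal.ofReal_prod_of_nonneg fun _ _ => (Real.exp_pos _).le]
  refine Finset.prod_congr rfl fun j _ => ?_
  rw [← ENNReal.ofReal_pow (Real.exp_pos _).le, ← Real.exp_nat_mul]
  ring_nf

lemma exists_lintegral_exp_mul_sum_ne_top [IsFiniteMeasure P] {N : Ω → ι → ℕ} (hN : Measurable N)
    (hfin : ∀ j, ∃ z : ℝ≥0∞, 1 < z ∧ ∫⁻ ω, z ^ N ω j ∂P ≠ ⊤) (t : ι → ℝ) :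
    ∃ δ : ℝ, 0 < δ ∧ ∫⁻ ω, .ofReal (Real.exp (δ * ∑ j, t j * (N ω j : ℝ))) ∂P ≠ ⊤ := by
  choose z hz hz_fin using hfin
  have h_small : ∀ᶠ δ in 𝓝[>] (0 : ℝ), ∀ j,
      ENNReal.ofReal (Real.exp (δ * t j)) ^ Fintype.card ι ≤ z j := by
    refine eventually_nhdsWithin_of_eventually_nhds (eventually_all.2 fun j => ?_)
    have h_cont : Continuous fun δ : ℝ =>
        ENNReal.ofReal (Real.exp (δ * t j)) ^ Fintype.card ι :=
      (ENNReal.continuous_pow _).comp (ENNReal.continuous_ofReal.comp (by fun_prop))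
    exact (h_cont.tendsto' 0 1 (by simp)).eventually_le_const (hz j)
  obtain ⟨δ, hδ_small, hδ⟩ := (h_small.and self_mem_nhdsWithin).exists
  refine ⟨δ, hδ, ?_⟩
  have h_bound (n : ι → ℕ) : ENNReal.ofReal (Real.exp (δ * ∑ j, t j * (n j : ℝ))) ≤
      1 + ∑ j, z j ^ n j := by
    rw [ofReal_exp_mul_sum]
    refine (prod_le_one_add_sum_pow_card _).trans ?_
    refine add_le_add le_rfl (Finset.sum_le_sum fun j _ => ?_)
    rw [pow_right_comm]
    exact pow_le_pow_left' (hδ_small j) _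
  have h_meas (j : ι) : Measurable fun ω => z j ^ N ω j :=
    (measurable_of_countable fun n : ι → ℕ => z j ^ n j).comp hN
  refine ne_top_of_le_ne_top ?_ (lintegral_mono fun ω => h_bound (N ω))
  rw [lintegral_add_left measurable_const, lintegral_finsetSum _ fun j _ => h_meas j]
  exact ENNReal.add_ne_top.2 ⟨by simp, ENNReal.sum_ne_top.2 fun j _ => hz_fin j⟩

lemma lintegral_prod_pow_eq_of_one_le (hN₁ : Measurable N₁) (hN₂ : Measurable N₂)
    (hmom : ∀ n : ι → ℕ, ∫⁻ ω, ∏ j, ((N₁ ω j).descFactorial (n j) : ℝ≥0∞) ∂P₁ =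
      ∫⁻ ω, ∏ j, ((N₂ ω j).descFactorial (n j) : ℝ≥0∞) ∂P₂)
    {b : ι → ℝ≥0∞} (hb : ∀ j, 1 ≤ b j) :
    ∫⁻ ω, ∏ j, b j ^ N₁ ω j ∂P₁ = ∫⁻ ω, ∏ j, b j ^ N₂ ω j ∂P₂ := by
  obtain ⟨z, rfl⟩ : ∃ z : ι → ℝ≥0∞, b = fun j => 1 + z j :=
    ⟨fun j => b j - 1, funext fun j => (add_tsub_cancel_of_le (hb j)).symm⟩
  simp only [lintegral_prod_one_add_pow hN₁, lintegral_prod_one_add_pow hN₂, hmom]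

theorem map_eq_of_lintegral_prod_descFactorial_eq [IsFiniteMeasure P₁] [IsFiniteMeasure P₂]
    (hN₁ : Measurable N₁) (hN₂ : Measurable N₂)
    (hmom : ∀ n : ι → ℕ, ∫⁻ ω, ∏ j, ((N₁ ω j).descFactorial (n j) : ℝ≥0∞) ∂P₁ =
      ∫⁻ ω, ∏ j, ((N₂ ω j).descFactorial (n j) : ℝ≥0∞) ∂P₂)
    (hfin : ∀ j, ∃ z : ℝ≥0∞, 1 < z ∧ ∫⁻ ω, z ^ N₁ ω j ∂P₁ ≠ ⊤) :
    P₁.map N₁ = P₂.map N₂ := by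
  obtain ⟨t, ht, ht_inj⟩ := exists_pos_injective_sum_mul_natCast ι
  set Y : (ι → ℕ) → ℝ := fun n => ∑ j, t j * (n j : ℝ)
  have hY : MeasurableEmbedding Y :=
    ⟨ht_inj, measurable_of_countable Y, fun s _ => (s.to_countable.image Y).measurableSet⟩
  have hY_nonneg (n : ι → ℕ) : 0 ≤ Y n :=
    Finset.sum_nonneg fun j _ => mul_nonneg (ht j).le (Nat.cast_nonneg _)
  have h_exp (s : ℝ) (hs : 0 ≤ s) : ∫⁻ ω, .ofReal (Real.exp (s * Y (N₁ ω))) ∂P₁ =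
      ∫⁻ ω, .ofReal (Real.exp (s * Y (N₂ ω))) ∂P₂ := by
    simp only [Y, ofReal_exp_mul_sum]
    exact lintegral_prod_pow_eq_of_one_le hN₁ hN₂ hmom fun j =>
      ENNReal.one_le_ofReal.2 (Real.one_le_exp (mul_nonneg hs (ht j).le))
  obtain ⟨δ, hδ, hδ_fin⟩ := exists_lintegral_exp_mul_sum_ne_top hN₁ hfin t
  have h_map : P₁.map (Y ∘ N₁) = P₂.map (Y ∘ N₂) :=
    map_eq_of_lintegral_exp_mul_eq (hY.measurable.comp hN₁).aemeasurable
      (hY.measurable.comp hN₂).aemeasurable (ae_of_all _ fun _ => hY_nonneg _)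
      (ae_of_all _ fun _ => hY_nonneg _) hδ hδ_fin fun s hs => h_exp s hs.1.le
  rw [← hY.comap_map (P₁.map N₁), ← hY.comap_map (P₂.map N₂), Measure.map_map hY.measurable hN₁,
    Measure.map_map hY.measurable hN₂, h_map]

end FactorialMoments

section LawOfRandomMeasure

variable {X : Type*} [MeasurableSpace X] {C : Set (Set X)}

theorem measurable_of_isPiSystem_of_isCountablySpanning {α : Type*} [MeasurableSpace α]
    {N : α → Measure X} (hgen : ‹MeasurableSpace X› = MeasurableSpace.generateFrom C)
    (hpi : IsPiSystem C) (hspan : IsCountablySpanning C) (hfin : ∀ a, ∀ s ∈ C, N a s ≠ ⊤)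
    (hN : ∀ s ∈ C, Measurable fun a => N a s) : Measurable N := by
  obtain ⟨E, hE, hE_univ⟩ := hspan
  have hC_meas (s : Set X) (hs : s ∈ C) : MeasurableSet s :=
    hgen ▸ MeasurableSpace.measurableSet_generateFrom hs
  have h_restrict (n : ℕ) : Measurable fun a => (N a).restrict (E n) := by
    have (a : α) : IsFiniteMeasure ((N a).restrict (E n)) :=
      isFiniteMeasure_restrict.2 (hfin a _ (hE n))
    refine Measurable.measure_of_isPiSystem hgen hpi (fun s hs => ?_) ?_
    · simp only [Measure.restrict_apply (hC_meas s hs)]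
      rcases (s ∩ E n).eq_empty_or_nonempty with h_empty | h_nonempty
      · simp [h_empty]
      · exact hN _ (hpi s hs _ (hE n) h_nonempty)
    · simpa only [Measure.restrict_apply_univ] using hN _ (hE n)
  refine Measure.measurable_of_measurable_coe _ fun s hs => ?_
  have hE_disj_meas (n : ℕ) : MeasurableSet (disjointed E n) :=
    .disjointed (fun i => hC_meas _ (hE i)) n
  have h_tsum (a : α) : N a s = ∑' n, (N a).restrict (E n) (s ∩ disjointed E n) := by
    conv_lhs => rw [← Set.inter_univ s, ← hE_univ, ← iUnion_disjointed, Set.inter_iUnion]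
    rw [measure_iUnion (fun i j hij => ((disjoint_disjointed E hij).mono
      Set.inter_subset_right Set.inter_subset_right)) fun n => hs.inter (hE_disj_meas n)]
    refine tsum_congr fun n => (Measure.restrict_eq_self _ ?_).symm
    exact Set.inter_subset_right.trans (disjointed_subset E n)
  simp only [h_tsum]
  exact .tsum fun n => (Measure.measurable_coe (hs.inter (hE_disj_meas n))).comp (h_restrict n)

lemma exists_measurableSet_forall_mem_iff_of_isPiSystem
    (hgen : ‹MeasurableSpace X› = MeasurableSpace.generateFrom C)
    (hpi : IsPiSystem C) (hspan : IsCountablySpanning C)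
    {S : Set (Measure X)} (hS : MeasurableSet S) :
    ∃ D : Set (C → ℝ≥0∞), MeasurableSet D ∧
      ∀ μ : Measure X, (∀ A ∈ C, μ A ≠ ⊤) → (μ ∈ S ↔ (fun A : C => μ A) ∈ D) := by
  let F := {μ : Measure X // ∀ A ∈ C, μ A ≠ ⊤}
  let ev : F → C → ℝ≥0∞ := fun μ A => μ.1 A
  let _ : MeasurableSpace F := .comap ev inferInstance
  have h_val : Measurable (Subtype.val : F → Measure X) :=
    measurable_of_isPiSystem_of_isCountablySpanning hgen hpi hspan (fun μ => μ.2) fun A hA =>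
      (measurable_pi_apply (⟨A, hA⟩ : C)).comp (comap_measurable ev)
  obtain ⟨D, hD, hD_eq⟩ := h_val hS
  exact ⟨D, hD, fun μ hμ => (Set.ext_iff.1 hD_eq ⟨μ, hμ⟩).symm⟩

variable {Ω₁ Ω₂ : Type*} [MeasurableSpace Ω₁] [MeasurableSpace Ω₂]
  {P₁ : Measure Ω₁} {P₂ : Measure Ω₂} {M₁ : Ω₁ → Measure X} {M₂ : Ω₂ → Measure X}

lemma map_pi_eq_of_forall_finset {ι : Type*} {E : ι → Type*} [∀ i, MeasurableSpace (E i)]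
    [IsFiniteMeasure P₂] {Y₁ : Ω₁ → ∀ i, E i} {Y₂ : Ω₂ → ∀ i, E i}
    (hY₁ : Measurable Y₁) (hY₂ : Measurable Y₂)
    (h : ∀ I : Finset ι, P₁.map (fun ω (i : I) => Y₁ ω i) = P₂.map fun ω (i : I) => Y₂ ω i) :
    P₁.map Y₁ = P₂.map Y₂ := by
  refine IsProjectiveLimit.unique (P := fun I => (P₂.map Y₂).map I.restrict)
    (fun I => ?_) fun I => rfl
  beta_reduce
  rw [Measure.map_map (Finset.measurable_restrict I) hY₁,
    Measure.map_map (Finset.measurable_restrict I) hY₂]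
  exact h I

theorem map_eq_of_isPiSystem_of_isCountablySpanning [IsFiniteMeasure P₂]
    (hgen : ‹MeasurableSpace X› = MeasurableSpace.generateFrom C)
    (hpi : IsPiSystem C) (hspan : IsCountablySpanning C)
    (hM₁ : Measurable M₁) (hM₂ : Measurable M₂)
    (hfin₁ : ∀ ω, ∀ A ∈ C, M₁ ω A ≠ ⊤) (hfin₂ : ∀ ω, ∀ A ∈ C, M₂ ω A ≠ ⊤)
    (h : ∀ I : Finset C, P₁.map (fun ω (A : I) => M₁ ω A) = P₂.map fun ω (A : I) => M₂ ω A) :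
    P₁.map M₁ = P₂.map M₂ := by
  have h_eval : Measurable fun (μ : Measure X) (A : C) => μ A := measurable_pi_lambda _ fun A =>
    Measure.measurable_coe (hgen ▸ MeasurableSpace.measurableSet_generateFrom A.2)
  have h_eval₁ : Measurable fun ω (A : C) => M₁ ω A := h_eval.comp hM₁
  have h_eval₂ : Measurable fun ω (A : C) => M₂ ω A := h_eval.comp hM₂
  have h_pi : P₁.map (fun ω (A : C) => M₁ ω A) = P₂.map fun ω (A : C) => M₂ ω A :=
    map_pi_eq_of_forall_finset h_eval₁ h_eval₂ h
  ext S hS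
  obtain ⟨D, hD, hD_iff⟩ := exists_measurableSet_forall_mem_iff_of_isPiSystem hgen hpi hspan hS
  calc P₁.map M₁ S = P₁.map (fun ω (A : C) => M₁ ω A) D := by
        rw [Measure.map_apply hM₁ hS, Measure.map_apply h_eval₁ hD]
        exact congrArg P₁ (Set.ext fun ω => hD_iff _ (hfin₁ ω))
    _ = P₂.map (fun ω (A : C) => M₂ ω A) D := by rw [h_pi]
    _ = P₂.map M₂ S := by
        rw [Measure.map_apply hM₂ hS, Measure.map_apply h_eval₂ hD]
        exact congrArg P₂ (Set.ext fun ω => (hD_iff _ (hfin₂ ω)).symm)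

lemma map_eval_eq_of_map_eq (hM₁ : Measurable M₁) (hM₂ : Measurable M₂)
    (h : P₁.map M₁ = P₂.map M₂) {ι : Type*} {B : ι → Set X} (hB : ∀ i, MeasurableSet (B i)) :
    P₁.map (fun ω i => M₁ ω (B i)) = P₂.map fun ω i => M₂ ω (B i) := by
  have h_eval : Measurable fun (μ : Measure X) (i : ι) => μ (B i) :=
    measurable_pi_lambda _ fun i => Measure.measurable_coe (hB i)
  exact ((IdentDistrib.mk hM₁.aemeasurable hM₂.aemeasurable h).comp h_eval).map_eq

lemma map_eval_eq_of_eq_biUnion {ι κ : Type*} [Countable κ]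
    (hM₁ : Measurable M₁) (hM₂ : Measurable M₂)
    {D : κ → Set X} (hD : ∀ c, MeasurableSet (D c)) (hD_disj : Pairwise (Function.onFun Disjoint D))
    {A : ι → Set X} (hA : ∀ j, ∃ L : Set κ, A j = ⋃ c ∈ L, D c)
    (h : P₁.map (fun ω c => M₁ ω (D c)) = P₂.map fun ω c => M₂ ω (D c)) :
    P₁.map (fun ω j => M₁ ω (A j)) = P₂.map fun ω j => M₂ ω (A j) := by
  choose L hL using hA
  have h_sum (μ : Measure X) (j : ι) : μ (A j) = ∑' c : L j, μ (D c) := by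
    rw [hL j, measure_biUnion (L j).to_countable (hD_disj.set_pairwise _) fun c _ => hD c]
  have h_eval : Measurable fun (μ : Measure X) (c : κ) => μ (D c) :=
    measurable_pi_lambda _ fun c => Measure.measurable_coe (hD c)
  have h_add : Measurable fun (x : κ → ℝ≥0∞) (j : ι) => ∑' c : L j, x c :=
    measurable_pi_lambda _ fun j => .tsum fun c => measurable_pi_apply _
  simp only [h_sum]
  exact ((IdentDistrib.mk (h_eval.comp hM₁).aemeasurable (h_eval.comp hM₂).aemeasurable h).comp
    h_add).map_eq

end LawOfRandomMeasure

section HalfOpenRectangles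

variable {k : ℕ} {T : Set ℝ} {A : Set (Fin k → ℝ)}

lemma setOf_forall_mem_Ioc_eq_pi (a b : Fin k → ℝ) :
    {x : Fin k → ℝ | ∀ i, x i ∈ Set.Ioc (a i) (b i)} =
      Set.univ.pi fun i => Set.Ioc (a i) (b i) := by
  simp [Set.pi]

lemma IsRectAvoiding.measurableSet_s5 (hA : IsRectAvoiding k T A) : MeasurableSet A := by
  obtain ⟨a, b, -, -, rfl⟩ := hA
  rw [setOf_forall_mem_Ioc_eq_pi]
  exact .univ_pi fun i => measurableSet_Ioc

lemma IsRectAvoiding.isBounded_s5 (hA : IsRectAvoiding k T A) : Bornology.IsBounded A := by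
  obtain ⟨a, b, -, -, rfl⟩ := hA
  rw [setOf_forall_mem_Ioc_eq_pi]
  exact .pi fun i => Metric.isBounded_Ioc (a i) (b i)

lemma isPiSystem_isRectAvoiding (k : ℕ) (T : Set ℝ) : IsPiSystem {A | IsRectAvoiding k T A} := by
  rintro _ ⟨a, b, ha, hb, rfl⟩ _ ⟨a', b', ha', hb', rfl⟩ -
  refine ⟨a ⊔ a', b ⊓ b', fun i => ?_, fun i => ?_, ?_⟩
  · exact sup_ind (p := (· ∉ T)) (a i) (a' i) (ha i) (ha' i)
  · exact inf_ind (p := (· ∉ T)) (b i) (b' i) (hb i) (hb' i)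
  · simp only [setOf_forall_mem_Ioc_eq_pi, ← Set.pi_inter_distrib, Set.Ioc_inter_Ioc, Pi.sup_apply,
      Pi.inf_apply]

lemma pi_image_subset_isRectAvoiding (k : ℕ) (T : Set ℝ) :
    Set.univ.pi '' (Set.univ.pi fun _ : Fin k =>
      {S | ∃ l ∈ Tᶜ, ∃ u ∈ Tᶜ, l < u ∧ Set.Ioc l u = S}) ⊆ {A | IsRectAvoiding k T A} := by
  rintro _ ⟨S, hS, rfl⟩
  choose a ha b hb _ hS_eq using fun i => hS i (Set.mem_univ i)
  exact ⟨a, b, ha, hb, by rw [setOf_forall_mem_Ioc_eq_pi, funext hS_eq]⟩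

lemma isCountablySpanning_Ioc_mem {D : Set ℝ} (hD : Dense D) :
    IsCountablySpanning {S : Set ℝ | ∃ l ∈ D, ∃ u ∈ D, l < u ∧ Set.Ioc l u = S} := by
  choose l hlD hl using fun n : ℕ => hD.exists_between (sub_one_lt (-(n : ℝ)))
  choose u huD hu using fun n : ℕ => hD.exists_between (lt_add_one (n : ℝ))
  refine ⟨fun n => Set.Ioc (l n) (u n), fun n => ⟨l n, hlD n, u n, huD n, ?_, rfl⟩, ?_⟩
  · linarith [(hl n).2, (hu n).1, n.cast_nonneg (α := ℝ)]
  · refine Set.eq_univ_of_forall fun x => Set.mem_iUnion.2 ?_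
    obtain ⟨n, hn⟩ := exists_nat_ge |x|
    exact ⟨n, by linarith [(hl n).2, neg_abs_le x], by linarith [(hu n).1, le_abs_self x]⟩

lemma isCountablySpanning_isRectAvoiding (k : ℕ) (hT : Dense Tᶜ) :
    IsCountablySpanning {A | IsRectAvoiding k T A} := by
  obtain ⟨s, hs, hs_univ⟩ :=
    IsCountablySpanning.pi fun _ : Fin k => isCountablySpanning_Ioc_mem hT
  exact ⟨s, fun n => pi_image_subset_isRectAvoiding k T (hs n), hs_univ⟩

lemma generateFrom_isRectAvoiding (k : ℕ) (hT : Dense Tᶜ) :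
    MeasurableSpace.pi = MeasurableSpace.generateFrom {A | IsRectAvoiding k T A} := by
  refine le_antisymm ?_ (MeasurableSpace.generateFrom_le fun A hA => hA.measurableSet_s5)
  rw [← generateFrom_eq_pi (fun _ : Fin k => ?_) fun _ => isCountablySpanning_Ioc_mem hT]
  · exact MeasurableSpace.generateFrom_mono (pi_image_subset_isRectAvoiding k T)
  · rw [BorelSpace.measurable_eq (α := ℝ), hT.borel_eq_generateFrom_Ioc_mem]

lemma setOf_filter_lt_eq_eq_Ioc {α : Type*} [LinearOrder α] {S U : Finset α} (hUS : U ⊆ S)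
    (hU : U.Nonempty) (hSU : (S \ U).Nonempty) :
    {x | {s ∈ S | s < x} = U} = Set.Ioc (U.max' hU) ((S \ U).min' hSU) := by
  ext x
  simp only [Set.mem_ofPred_eq, Set.mem_Ioc, Finset.max'_lt_iff, Finset.le_min'_iff,
    Finset.mem_sdiff, Finset.ext_iff, Finset.mem_filter]
  grind

/-- The position of a point with respect to the grid of hyperplanes `{x | x i = s}`, `s ∈ S`: in
each coordinate, the set of grid values to its left. The cells of the grid are the fibres of this
map. -/
def gridIndex (S : Finset ℝ) (x : Fin k → ℝ) : Fin k → Finset ℝ := fun i => {s ∈ S | s < x i}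

/-- The indices of the bounded cells of the grid of `S`: in each coordinate there are grid values
on both sides. Indices with an empty cell are allowed. -/
abbrev BoundedCell (k : ℕ) (S : Finset ℝ) : Type :=
  {U : Fin k → Finset ℝ // ∀ i, U i ⊆ S ∧ (U i).Nonempty ∧ (S \ U i).Nonempty}

variable {S : Finset ℝ}

lemma finite_boundedCell (k : ℕ) (S : Finset ℝ) : Finite (BoundedCell k S) :=
  ((Set.Finite.pi' fun _ => S.powerset.finite_toSet).subset fun _ hU i =>
    Finset.mem_coe.2 (Finset.mem_powerset.2 (hU i).1)).to_subtype

lemma isRectAvoiding_preimage_gridIndex (hS : ∀ s ∈ S, s ∉ T) (U : BoundedCell k S) :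
    IsRectAvoiding k T (gridIndex S ⁻¹' {U.1}) := by
  choose hUS hU hSU using U.2
  refine ⟨fun i => (U.1 i).max' (hU i), fun i => (S \ U.1 i).min' (hSU i),
    fun i => hS _ (hUS i (Finset.max'_mem _ _)),
    fun i => hS _ (Finset.sdiff_subset (Finset.min'_mem _ _)), ?_⟩
  simp only [← setOf_filter_lt_eq_eq_Ioc (hUS _) (hU _) (hSU _)]
  ext x
  exact funext_iff

lemma setOf_forall_mem_Ioc_eq_biUnion_gridIndex {a b : Fin k → ℝ} (ha : ∀ i, a i ∈ S)
    (hb : ∀ i, b i ∈ S) :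
    {x : Fin k → ℝ | ∀ i, x i ∈ Set.Ioc (a i) (b i)} =
      ⋃ U ∈ {U : BoundedCell k S | ∀ i, a i ∈ U.1 i ∧ b i ∉ U.1 i}, gridIndex S ⁻¹' {U.1} := by
  ext x
  have h_iff : (∀ i, x i ∈ Set.Ioc (a i) (b i)) ↔
      ∀ i, a i ∈ gridIndex S x i ∧ b i ∉ gridIndex S x i := by
    simp [gridIndex, ha, hb]
  simp only [Set.mem_ofPred_eq, h_iff, Set.mem_iUnion, Set.mem_preimage, Set.mem_singleton_iff,
    exists_prop]
  constructor
  · intro hx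
    exact ⟨⟨gridIndex S x, fun i => ⟨Finset.filter_subset _ _, ⟨_, (hx i).1⟩,
      ⟨_, Finset.mem_sdiff.2 ⟨hb i, (hx i).2⟩⟩⟩⟩, hx, rfl⟩
  · rintro ⟨U, hU, h_index⟩
    rwa [h_index]

theorem exists_finite_isRectAvoiding_refinement {ι : Type*} [Finite ι] {A : ι → Set (Fin k → ℝ)}
    (hA : ∀ j, IsRectAvoiding k T (A j)) :
    ∃ (κ : Type) (_ : Finite κ) (D : κ → Set (Fin k → ℝ)), (∀ c, IsRectAvoiding k T (D c)) ∧
      Pairwise (Function.onFun Disjoint D) ∧ ∀ j, ∃ L : Set κ, A j = ⋃ c ∈ L, D c := by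
  choose a b ha hb hA_eq using hA
  obtain ⟨S, hS⟩ := ((Set.finite_range fun q : ι × Fin k => a q.1 q.2).union
    (Set.finite_range fun q : ι × Fin k => b q.1 q.2)).exists_finset
  have ha_mem (j : ι) (i : Fin k) : a j i ∈ S := (hS _).2 (.inl ⟨(j, i), rfl⟩)
  have hb_mem (j : ι) (i : Fin k) : b j i ∈ S := (hS _).2 (.inr ⟨(j, i), rfl⟩)
  have hS_avoid (s : ℝ) (hs : s ∈ S) : s ∉ T := by
    rcases (hS s).1 hs with ⟨q, rfl⟩ | ⟨q, rfl⟩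
    exacts [ha _ _, hb _ _]
  refine ⟨BoundedCell k S, finite_boundedCell k S, fun U => gridIndex S ⁻¹' {U.1},
    isRectAvoiding_preimage_gridIndex hS_avoid, fun U V hUV => ?_, fun j => ?_⟩
  · exact Disjoint.preimage _ (Set.disjoint_singleton.2 fun h => hUV (Subtype.ext h))
  · exact ⟨_, (hA_eq j).trans
      (setOf_forall_mem_Ioc_eq_biUnion_gridIndex (ha_mem j) (hb_mem j))⟩

end HalfOpenRectangles

section PointProcesses

lemma descFactE_natCast (N n : ℕ) : descFactE N n = N.descFactorial n := by
  rw [descFactE, Nat.descFactorial_eq_prod_range, Nat.cast_prod]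
  exact Finset.prod_congr rfl fun i _ => (ENNReal.natCast_sub N i).symm

lemma prod_descFactE_eq_prod_ne_zero {ι : Type*} [Fintype ι] (x : ι → ℝ≥0∞) (n : ι → ℕ) :
    ∏ j, descFactE (x j) (n j) = ∏ j : {j // n j ≠ 0}, descFactE (x j) (n j) := by
  have h_one (j : {j // ¬n j ≠ 0}) : descFactE (x j) (n j) = 1 := by
    simp [not_not.1 j.2, descFactE]
  rw [← Fintype.prod_subtype_mul_prod_subtype (fun j => n j ≠ 0),
    Finset.prod_eq_one fun j _ => h_one j, mul_one]

variable {k : ℕ} {Ω : Type*} [MeasurableSpace Ω] {M : Ω → Measure (Fin k → ℝ)}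

lemma IsPointProcess.measurable (hM : IsPointProcess k M) : Measurable M :=
  Measure.measurable_of_measurable_coe _ hM.1

lemma IsPointProcess.apply_ne_top (hM : IsPointProcess k M) (ω : Ω) {A : Set (Fin k → ℝ)}
    (hA : MeasurableSet A) (hA_bdd : Bornology.IsBounded A) : M ω A ≠ ⊤ := by
  obtain ⟨n, hn⟩ := hM.2 ω A hA hA_bdd
  exact hn ▸ ENNReal.natCast_ne_top n

lemma IsPointProcess.exists_measurable_count (hM : IsPointProcess k M) {ι : Type*}
    {A : ι → Set (Fin k → ℝ)} (hA : ∀ j, MeasurableSet (A j))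
    (hA_bdd : ∀ j, Bornology.IsBounded (A j)) :
    ∃ N : Ω → ι → ℕ, Measurable N ∧ ∀ ω j, M ω (A j) = N ω j := by
  choose N hN using fun ω j => hM.2 ω (A j) (hA j) (hA_bdd j)
  refine ⟨N, measurable_pi_lambda _ fun j => ?_, hN⟩
  have h_floor (ω : Ω) : N ω j = ⌊(M ω (A j)).toReal⌋₊ := by simp [hN]
  simp only [h_floor]
  exact (hM.1 (A j) (hA j)).ennreal_toReal.nat_floor

variable {ι : Type*} [Fintype ι] {Ω₁ Ω₂ : Type*} [MeasurableSpace Ω₁] [MeasurableSpace Ω₂]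
  {P₁ : Measure Ω₁} {P₂ : Measure Ω₂}

lemma lintegral_prod_descFactE_eq_of_forall_fin [IsProbabilityMeasure P₁]
    [IsProbabilityMeasure P₂] {X₁ : Ω₁ → ι → ℝ≥0∞} {X₂ : Ω₂ → ι → ℝ≥0∞}
    (h : ∀ (m : ℕ) (n : Fin m → ℕ) (e : Fin m ↪ ι), 0 < m → (∀ j, 0 < n j) →
      ∫⁻ ω, ∏ j, descFactE (X₁ ω (e j)) (n j) ∂P₁ = ∫⁻ ω, ∏ j, descFactE (X₂ ω (e j)) (n j) ∂P₂)
    (n : ι → ℕ) :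
    ∫⁻ ω, ∏ j, descFactE (X₁ ω j) (n j) ∂P₁ = ∫⁻ ω, ∏ j, descFactE (X₂ ω j) (n j) ∂P₂ := by
  let σ := Fintype.equivFin {j // n j ≠ 0}
  have h_reindex (x : ι → ℝ≥0∞) : ∏ j, descFactE (x j) (n j) =
      ∏ j, descFactE (x (σ.symm j)) (n (σ.symm j)) := by
    rw [prod_descFactE_eq_prod_ne_zero, ← Equiv.prod_comp σ.symm]
  simp only [h_reindex]
  rcases Nat.eq_zero_or_pos (Fintype.card {j // n j ≠ 0}) with h_card | h_card
  · have : IsEmpty (Fin (Fintype.card {j // n j ≠ 0})) := by rw [h_card]; infer_instance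
    simp
  · exact h _ _ (σ.symm.toEmbedding.trans (Function.Embedding.subtype _)) h_card
      fun j => Nat.pos_of_ne_zero (σ.symm j).2

variable {M₁ : Ω₁ → Measure (Fin k → ℝ)} {M₂ : Ω₂ → Measure (Fin k → ℝ)}

theorem IsPointProcess.map_eval_eq_of_lintegral_prod_descFactE_eq [IsFiniteMeasure P₁]
    [IsFiniteMeasure P₂] (hM₁ : IsPointProcess k M₁) (hM₂ : IsPointProcess k M₂)
    {A : ι → Set (Fin k → ℝ)} (hA : ∀ j, MeasurableSet (A j))
    (hA_bdd : ∀ j, Bornology.IsBounded (A j))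
    (hmom : ∀ n : ι → ℕ, ∫⁻ ω, ∏ j, descFactE (M₁ ω (A j)) (n j) ∂P₁ =
      ∫⁻ ω, ∏ j, descFactE (M₂ ω (A j)) (n j) ∂P₂)
    (hsum : ∀ j, ∃ ε : ℝ, 0 < ε ∧
      ∑' n : ℕ, ENNReal.ofReal (ε ^ (n + 1) / ((n + 1).factorial : ℝ)) *
        ∫⁻ ω, descFactE (M₁ ω (A j)) (n + 1) ∂P₁ ≠ ⊤) :
    P₁.map (fun ω j => M₁ ω (A j)) = P₂.map fun ω j => M₂ ω (A j) := by
  obtain ⟨N₁, hN₁, hN₁_eq⟩ := hM₁.exists_measurable_count hA hA_bdd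
  obtain ⟨N₂, hN₂, hN₂_eq⟩ := hM₂.exists_measurable_count hA hA_bdd
  simp only [hN₁_eq, hN₂_eq, descFactE_natCast] at hmom hsum ⊢
  have h_law : P₁.map N₁ = P₂.map N₂ := by
    refine map_eq_of_lintegral_prod_descFactorial_eq hN₁ hN₂ hmom fun j => ?_
    obtain ⟨ε, hε, hε_sum⟩ := hsum j
    exact ⟨1 + ENNReal.ofReal ε, ENNReal.lt_add_right ENNReal.one_ne_top (by simpa using hε),
      lintegral_one_add_pow_ne_top ((measurable_pi_apply j).comp hN₁) hε.le hε_sum⟩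
  exact ((IdentDistrib.mk hN₁.aemeasurable hN₂.aemeasurable h_law).comp
    (measurable_of_countable fun (n : ι → ℕ) (j : ι) => (n j : ℝ≥0∞))).map_eq

end PointProcesses

theorem stmt5_general (k : ℕ) (T : Set ℝ) (hT : Dense Tᶜ)
    {Ω₁ Ω₂ : Type*} [MeasurableSpace Ω₁] [MeasurableSpace Ω₂]
    (P₁ : Measure Ω₁) (P₂ : Measure Ω₂)
    [IsProbabilityMeasure P₁] [IsProbabilityMeasure P₂]
    (M₁ : Ω₁ → Measure (Fin k → ℝ)) (M₂ : Ω₂ → Measure (Fin k → ℝ))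
    (hM₁ : IsPointProcess k M₁) (hM₂ : IsPointProcess k M₂)
    (heq : ∀ (m : ℕ) (n : Fin m → ℕ) (A : Fin m → Set (Fin k → ℝ)),
      0 < m → (∀ j, 0 < n j) → (∀ j, IsRectAvoiding k T (A j)) →
      (∀ i j, i ≠ j → Disjoint (A i) (A j)) →
      (∫⁻ ω, ∏ j, descFactE (M₁ ω (A j)) (n j) ∂P₁) =
        ∫⁻ ω, ∏ j, descFactE (M₂ ω (A j)) (n j) ∂P₂)
    (hsum : ∀ B : Set (Fin k → ℝ), IsRectAvoiding k T B → ∃ ε : ℝ, 0 < ε ∧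
      (∑' n : ℕ, ENNReal.ofReal (ε ^ (n + 1) / ((n + 1).factorial : ℝ)) *
        ∫⁻ ω, descFactE (M₁ ω B) (n + 1) ∂P₁) ≠ ⊤) :
    P₁.map M₁ = P₂.map M₂ := by
  refine map_eq_of_isPiSystem_of_isCountablySpanning (generateFrom_isRectAvoiding k hT)
    (isPiSystem_isRectAvoiding k T) (isCountablySpanning_isRectAvoiding k hT)
    hM₁.measurable hM₂.measurable
    (fun ω A hA => hM₁.apply_ne_top ω hA.measurableSet_s5 hA.isBounded_s5)
    (fun ω A hA => hM₂.apply_ne_top ω hA.measurableSet_s5 hA.isBounded_s5) fun I => ?_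
  obtain ⟨κ, _, D, hD, hD_disj, hI⟩ := exists_finite_isRectAvoiding_refinement
    (A := fun A : I => A.1.1) fun A => A.1.2
  have := Fintype.ofFinite κ
  have hmom := lintegral_prod_descFactE_eq_of_forall_fin (P₁ := P₁) (P₂ := P₂)
    (X₁ := fun ω c => M₁ ω (D c)) (X₂ := fun ω c => M₂ ω (D c)) fun m n e hm hn =>
      heq m n (fun j => D (e j)) hm hn (fun j => hD _) fun i j hij => hD_disj (e.injective.ne hij)
  exact map_eval_eq_of_eq_biUnion hM₁.measurable hM₂.measurable (fun c => (hD c).measurableSet_s5)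
    hD_disj hI (hM₁.map_eval_eq_of_lintegral_prod_descFactE_eq hM₂
      (fun c => (hD c).measurableSet_s5) (fun c => (hD c).isBounded_s5) hmom fun c => hsum _ (hD c))

/-- Corollary 2.5 (`CorUnique`): two point processes with equal joint factorial
moments on disjoint rectangles in `𝓘_T`, the moments not growing too fast, have
the same distribution. -/
theorem stmt5 (k : ℕ) (T : Set ℝ) (hT : T.Countable)
    {Ω₁ Ω₂ : Type*} [MeasurableSpace Ω₁] [MeasurableSpace Ω₂]
    (P₁ : Measure Ω₁) (P₂ : Measure Ω₂)
    [IsProbabilityMeasure P₁] [IsProbabilityMeasure P₂]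
    (M₁ : Ω₁ → Measure (Fin k → ℝ)) (M₂ : Ω₂ → Measure (Fin k → ℝ))
    (hM₁ : IsPointProcess k M₁) (hM₂ : IsPointProcess k M₂)
    (heq : ∀ (m : ℕ) (n : Fin m → ℕ) (A : Fin m → Set (Fin k → ℝ)),
      0 < m → (∀ j, 0 < n j) → (∀ j, IsRectAvoiding k T (A j)) →
      (∀ i j, i ≠ j → Disjoint (A i) (A j)) →
      (∫⁻ ω, ∏ j, descFactE (M₁ ω (A j)) (n j) ∂P₁) =
        ∫⁻ ω, ∏ j, descFactE (M₂ ω (A j)) (n j) ∂P₂)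
    (hsum : ∀ B : Set (Fin k → ℝ), IsRectAvoiding k T B → ∃ ε : ℝ, 0 < ε ∧
      (∑' n : ℕ, ENNReal.ofReal (ε ^ (n + 1) / ((n + 1).factorial : ℝ)) *
        ∫⁻ ω, descFactE (M₁ ω B) (n + 1) ∂P₁) ≠ ⊤) :
    ∀ (p : ℕ) (B : Fin p → Set (Fin k → ℝ)),
      (∀ i, MeasurableSet (B i)) → (∀ i, Bornology.IsBounded (B i)) →
      Measure.map (fun ω i => M₁ ω (B i)) P₁ =
        Measure.map (fun ω i => M₂ ω (B i)) P₂ := by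
  intro p B hB _
  exact map_eval_eq_of_map_eq hM₁.measurable hM₂.measurable
    (stmt5_general k T (hT.dense_compl ℝ) P₁ P₂ M₁ M₂ hM₁ hM₂ heq hsum) hB
end
end
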